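/- (Continuity of the time derivative of the solution.) Let the collision kernel b : (0, π/2] → [0,∞) be measurable and satisfy, for some α₀ ∈ (0,2], ∫₀^{π/2} sin^{α₀}(θ/2) · b(cos θ) · sin θ dθ < ∞, let α ∈ [α₀, 2], ψ₀ ∈ 𝒦^α, and let ψ be a solution of the Fourier-transformed (Bobylev) homogeneous Boltzmann Cauchy problem with initial datum ψ₀, with ψ(t,·) ∈ 𝒦^α for each t and t ↦ ψ(t,·) continuous into 𝒦^α. Then the map (t, ξ) ↦ ∂_t ψ(t, ξ) is continuous on [0,∞) × ℝ³. -/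

import Mathlib

noncomputable section

open MeasureTheory Real Filter Metric Set
open scoped RealInnerProductSpace Topology

/-- ℝ³ as a Euclidean space. -/
abbrev E3 : Type := EuclideanSpace ℝ (Fin 3)

/-- The surface measure on the unit sphere S² ⊂ ℝ³. -/
def sphμ : Measure (sphere (0 : E3) 1) := (volume : Measure E3).toSphere

/-- The characteristic function (Fourier transform) of a Borel measure on ℝ³,
`ψ(ξ) = ∫ e^{-i v·ξ} dΨ(v)`. -/
def charFn (Ψ : Measure E3) (ξ : E3) : ℂ :=
  ∫ v, Complex.exp (-(Complex.I * (⟪v, ξ⟫ : ℂ))) ∂Ψ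

/-- `ψ` is a characteristic function of some Borel probability measure on ℝ³. -/
def IsCharFn (ψ : E3 → ℂ) : Prop :=
  ∃ Ψ : Measure E3, IsProbabilityMeasure Ψ ∧ ψ = charFn Ψ

/-- Finiteness of `‖φ - 1‖_α`, i.e. the quantitative part of membership in `𝒦^α`. -/
def KBdd (α : ℝ) (φ : E3 → ℂ) : Prop :=
  ∃ C : ℝ, ∀ ξ : E3, ξ ≠ 0 → ‖φ ξ - 1‖ ≤ C * ‖ξ‖ ^ α

/-- Membership in the space `𝒦^α`. -/
def memK (α : ℝ) (φ : E3 → ℂ) : Prop := IsCharFn φ ∧ KBdd α φ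

/-- The distance `‖φ - φ'‖_α = sup_{ξ ≠ 0} |φ(ξ) - φ'(ξ)|/|ξ|^α` on `𝒦^α`. -/
def Kdist (α : ℝ) (φ φ' : E3 → ℂ) : ℝ :=
  ⨆ ξ : {ξ : E3 // ξ ≠ 0}, ‖φ ξ.1 - φ' ξ.1‖ / ‖(ξ.1 : E3)‖ ^ α

/-- `ξ⁺ = ξ/2 + (|ξ|/2)σ`. -/
def xiPlus (ξ : E3) (σ : sphere (0 : E3) 1) : E3 := (1/2 : ℝ) • ξ + (‖ξ‖ / 2) • (σ : E3)

/-- `ξ⁻ = ξ/2 - (|ξ|/2)σ`. -/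
def xiMinus (ξ : E3) (σ : sphere (0 : E3) 1) : E3 := (1/2 : ℝ) • ξ - (‖ξ‖ / 2) • (σ : E3)

/-- The Bobylev collision integrand at time `t`, frequency `ξ`, direction `σ`. -/
def bobylevIntegrand (b : ℝ → ℝ) (ψ : ℝ → E3 → ℂ) (t : ℝ) (ξ : E3)
    (σ : sphere (0 : E3) 1) : ℂ :=
  (b (⟪ξ, (σ : E3)⟫ / ‖ξ‖) : ℂ) *
    (ψ t (xiPlus ξ σ) * ψ t (xiMinus ξ σ) - ψ t ξ)

/-- `ψ : [0,∞) × ℝ³ → ℂ` is a solution of the Fourier-transformed (Bobylev)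
homogeneous Boltzmann Cauchy problem with collision kernel `b` and initial datum `ψ₀`. -/
structure IsBobylevSolution (b : ℝ → ℝ) (ψ : ℝ → E3 → ℂ) (ψ₀ : E3 → ℂ) : Prop where
  cont : ContinuousOn (fun p : ℝ × E3 => ψ p.1 p.2) (Set.Ici 0 ×ˢ Set.univ)
  init : ψ 0 = ψ₀
  isCharFn : ∀ t ≥ 0, IsCharFn (ψ t)
  integrable : ∀ t ≥ 0, ∀ ξ : E3, Integrable (bobylevIntegrand b ψ t ξ) sphμ
  eq : ∀ t ≥ 0, ∀ ξ : E3, HasDerivWithinAt (fun τ => ψ τ ξ)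
      (∫ σ, bobylevIntegrand b ψ t ξ σ ∂sphμ) (Set.Ici 0) t

/-- Continuity of `t ↦ ψ(t,·)` from `[0,∞)` into the metric space `(𝒦^α, ‖·‖_α)`. -/
def KContinuous (α : ℝ) (ψ : ℝ → E3 → ℂ) : Prop :=
  ∀ t₀ ∈ Set.Ici (0:ℝ), Tendsto (fun t => Kdist α (ψ t) (ψ t₀)) (𝓝[Set.Ici (0:ℝ)] t₀) (𝓝 0)

/-- The angular singularity assumption `b(cos θ) θ^{2+2s} → K` as `θ → 0+`. -/
def KernelSingular (b : ℝ → ℝ) (s K : ℝ) : Prop :=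
  Tendsto (fun θ : ℝ => b (Real.cos θ) * θ ^ (2 + 2*s)) (𝓝[>] 0) (𝓝 K)

/-! ## Part A: sphere measure, folding -/

/-- sphere measure pushed to the ambient space -/
def nu : Measure E3 := sphμ.map Subtype.val

instance : IsFiniteMeasure sphμ := by unfold sphμ; infer_instance

instance : IsFiniteMeasure nu := by unfold nu; infer_instance

open scoped Pointwise in
lemma nu_apply {s : Set E3} (hs : MeasurableSet s) :
    nu s = 3 * volume (Ioo (0:ℝ) 1 • (s ∩ sphere (0:E3) 1)) := by
  rw [nu, Measure.map_apply measurable_subtype_coe hs, sphμ,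
    Measure.toSphere_apply' _ (measurable_subtype_coe hs)]
  simp [Subtype.image_preimage_coe, Set.inter_comm]

open scoped Pointwise in
lemma nu_iso (L : E3 ≃ₗᵢ[ℝ] E3) : MeasurePreserving L nu nu := by
  refine ⟨L.continuous.measurable, ?_⟩
  ext s hs
  rw [Measure.map_apply L.continuous.measurable hs, nu_apply (L.continuous.measurable hs),
    nu_apply hs]
  congr 1
  have h1 := (L.measurePreserving).measure_preimage_equiv (f := L.toHomeomorph.toMeasurableEquiv)
    (Ioo (0:ℝ) 1 • (s ∩ sphere (0:E3) 1))
  rw [← h1]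
  congr 1
  ext x
  simp only [Set.mem_smul, Set.mem_preimage, Set.mem_inter_iff, mem_sphere_zero_iff_norm]
  constructor
  · rintro ⟨a, ha, y, ⟨hy, hy'⟩, rfl⟩
    exact ⟨a, ha, L y, ⟨hy, by simpa using hy'⟩, by simp⟩
  · rintro ⟨a, ha, y, ⟨hy, hy'⟩, h⟩
    refine ⟨a, ha, L.symm y, ⟨by simpa using hy, by simpa using hy'⟩, ?_⟩
    apply L.injective
    simpa using h

lemma nu_norm : ∀ᵐ ω ∂nu, ‖ω‖ = 1 := by
  rw [nu, ae_map_iff measurable_subtype_coe.aemeasurable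
    (measurableSet_eq_fun continuous_norm.measurable measurable_const)]
  filter_upwards with x
  simp

/-- first basis vector -/
def e0 : E3 := EuclideanSpace.single 0 1

lemma norm_e0 : ‖e0‖ = 1 := by simp [e0]

lemma e0_zero : e0 0 = 1 := by simp [e0]
lemma e0_one : e0 1 = 0 := by simp [e0]
lemma e0_two : e0 2 = 0 := by simp [e0]

lemma inner_e0 (ω : E3) : ⟪e0, ω⟫ = ω 0 := by
  simp [e0, EuclideanSpace.inner_single_left]

lemma inner_e0' (ω : E3) : ⟪ω, e0⟫ = ω 0 := by
  rw [real_inner_comm, inner_e0]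

/-- fold onto the half sphere -/
def foldv (ω : E3) : E3 := if ω 0 < 0 then -ω else ω

lemma meas_coord (i : Fin 3) : Measurable (fun ω : E3 => ω i) := by fun_prop

lemma meas_foldv : Measurable foldv := by
  unfold foldv
  exact Measurable.ite (measurableSet_lt (meas_coord 0) measurable_const) measurable_neg measurable_id

/-- the folded kernel measure -/
def mker (b : ℝ → ℝ) : Measure E3 :=
  (nu.withDensity (fun ω => ENNReal.ofReal (b (ω 0)))).map foldv

instance (b : ℝ → ℝ) : SFinite (mker b) := by unfold mker; infer_instance

lemma iso_zero (L : E3 ≃ₗᵢ[ℝ] E3) (hL : L e0 = e0) (ω : E3) : (L ω) 0 = ω 0 := by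
  rw [← inner_e0, ← inner_e0]
  nth_rewrite 1 [← hL]
  exact L.inner_map_map _ _

lemma mk_iso {b : ℝ → ℝ} (hb : Measurable b) (L : E3 ≃ₗᵢ[ℝ] E3) (hL : L e0 = e0) :
    MeasurePreserving L (mker b) (mker b) := by
  have hLm : Measurable L := L.continuous.measurable
  refine ⟨hLm, ?_⟩
  have h0 : (nu.withDensity (fun ω => ENNReal.ofReal (b (ω 0)))).map L
      = nu.withDensity (fun ω => ENNReal.ofReal (b (ω 0))) := by
    ext s hs
    rw [Measure.map_apply hLm hs, withDensity_apply _ (hLm hs), withDensity_apply _ hs]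
    rw [← (nu_iso L).setLIntegral_comp_preimage hs (by
      exact ENNReal.measurable_ofReal.comp (hb.comp (meas_coord 0)))]
    simp [iso_zero L hL]
  have h1 : L ∘ foldv = foldv ∘ L := by
    funext ω
    simp only [Function.comp, foldv, iso_zero L hL]
    split_ifs <;> simp
  unfold mker
  rw [Measure.map_map hLm meas_foldv, h1, ← Measure.map_map meas_foldv hLm, h0]

lemma mk_ae (b : ℝ → ℝ) : ∀ᵐ ω ∂(mker b), ‖ω‖ = 1 ∧ 0 ≤ ω 0 := by
  rw [mker, ae_map_iff meas_foldv.aemeasurable]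
  · have := (withDensity_absolutelyContinuous nu (fun ω => ENNReal.ofReal (b (ω 0)))).ae_le nu_norm
    filter_upwards [this] with ω hω
    unfold foldv
    split_ifs with h
    · exact ⟨by simpa using hω, by simpa using h.le⟩
    · exact ⟨hω, by linarith⟩
  · exact (measurableSet_eq_fun continuous_norm.measurable measurable_const).inter
      (measurableSet_le measurable_const (meas_coord 0))

/-- collision difference -/
def Gf (φ : E3 → ℂ) (ξ σ : E3) : ℂ :=
  φ ((1/2:ℝ) • ξ + (‖ξ‖/2) • σ) * φ ((1/2:ℝ) • ξ - (‖ξ‖/2) • σ) - φ ξ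

lemma Gf_neg (φ : E3 → ℂ) (ξ σ : E3) : Gf φ ξ (-σ) = Gf φ ξ σ := by
  unfold Gf
  rw [smul_neg, ← sub_eq_add_neg, sub_neg_eq_add, mul_comm]

lemma Gf_cont {φ : E3 → ℂ} (hφ : Continuous φ) (ξ : E3) : Continuous (Gf φ ξ) := by
  unfold Gf; fun_prop

lemma Gf_foldv (φ : E3 → ℂ) (ξ : E3) (L : E3 ≃ₗᵢ[ℝ] E3) (ω : E3) :
    Gf φ ξ (L (foldv ω)) = Gf φ ξ (L ω) := by
  unfold foldv; split_ifs <;> simp [Gf_neg]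

section

lemma bob_inner {ξ : E3} (hξ : ξ ≠ 0) (L : E3 ≃ₗᵢ[ℝ] E3) (hL : ‖ξ‖ • L e0 = ξ) (ω : E3) :
    ⟪ξ, L ω⟫ / ‖ξ‖ = ω 0 := by
  have h : ‖ξ‖ ≠ 0 := by simpa using hξ
  rw [← inner_e0, ← L.inner_map_map e0 ω]
  nth_rewrite 1 [← hL]
  rw [real_inner_smul_left]
  field_simp

lemma bob_sm {b : ℝ → ℝ} (hb : Measurable b) {φ : E3 → ℂ} (hφ : Continuous φ) {ξ : E3} : StronglyMeasurable (fun σ : E3 => ((b (⟪ξ, σ⟫ / ‖ξ‖) : ℝ) : ℂ) * Gf φ ξ σ) := by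
  apply StronglyMeasurable.mul
  · apply Measurable.stronglyMeasurable
    have : Measurable (fun σ : E3 => ⟪ξ, σ⟫ / ‖ξ‖) := by fun_prop
    exact Complex.measurable_ofReal.comp (hb.comp this)
  · exact (Gf_cont hφ ξ).stronglyMeasurable

lemma bob_integral {b : ℝ → ℝ} (hb : Measurable b) (hb0 : ∀ x, 0 ≤ b x) {φ : E3 → ℂ} (hφ : Continuous φ)
  {ξ : E3} (hξ : ξ ≠ 0) (L : E3 ≃ₗᵢ[ℝ] E3) (hL : ‖ξ‖ • L e0 = ξ)
    : ∫ σ : sphere (0:E3) 1, ((b (⟪ξ, (σ:E3)⟫ / ‖ξ‖) : ℝ) : ℂ) * Gf φ ξ σ ∂sphμ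
    = ∫ ω, Gf φ ξ (L ω) ∂(mker b) := by
  have h1 : ∫ σ : sphere (0:E3) 1, ((b (⟪ξ, (σ:E3)⟫ / ‖ξ‖) : ℝ) : ℂ) * Gf φ ξ σ ∂sphμ
      = ∫ σ, ((b (⟪ξ, σ⟫ / ‖ξ‖) : ℝ) : ℂ) * Gf φ ξ σ ∂nu := by
    rw [nu, integral_map measurable_subtype_coe.aemeasurable
      (bob_sm hb hφ).aestronglyMeasurable]
  rw [h1, ← (nu_iso L).integral_comp' (f := L.toHomeomorph.toMeasurableEquiv)]
  have hc : Continuous (fun ω => Gf φ ξ (L ω)) := (Gf_cont hφ ξ).comp L.continuous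
  rw [mker, integral_map meas_foldv.aemeasurable hc.stronglyMeasurable.aestronglyMeasurable]
  simp only [Gf_foldv]
  rw [integral_withDensity_eq_integral_toReal_smul]
  · congr 1
    funext ω
    change ((b (⟪ξ, L ω⟫ / ‖ξ‖) : ℝ) : ℂ) * Gf φ ξ (L ω) = _
    rw [bob_inner hξ L hL, ENNReal.toReal_ofReal (hb0 _)]
    simp
  · exact ENNReal.measurable_ofReal.comp (hb.comp (meas_coord 0))
  · filter_upwards with x using ENNReal.ofReal_lt_top

lemma bob_integrable {b : ℝ → ℝ} (hb : Measurable b) (hb0 : ∀ x, 0 ≤ b x) {φ : E3 → ℂ} (hφ : Continuous φ)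
  {ξ : E3} (hξ : ξ ≠ 0) (L : E3 ≃ₗᵢ[ℝ] E3) (hL : ‖ξ‖ • L e0 = ξ)
    (h : Integrable (fun σ : sphere (0:E3) 1 =>
    ((b (⟪ξ, (σ:E3)⟫ / ‖ξ‖) : ℝ) : ℂ) * Gf φ ξ σ) sphμ) :
    Integrable (fun ω => Gf φ ξ (L ω)) (mker b) := by
  have h1 : Integrable (fun σ => ((b (⟪ξ, σ⟫ / ‖ξ‖) : ℝ) : ℂ) * Gf φ ξ σ) nu := by
    rw [nu, integrable_map_measure (bob_sm hb hφ).aestronglyMeasurable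
      measurable_subtype_coe.aemeasurable]
    exact h
  have h2 := (nu_iso L).integrable_comp_of_integrable h1
  have hc : Continuous (fun ω => Gf φ ξ (L ω)) := (Gf_cont hφ ξ).comp L.continuous
  rw [mker, integrable_map_measure hc.stronglyMeasurable.aestronglyMeasurable
    meas_foldv.aemeasurable]
  have h3 : ((fun ω => Gf φ ξ (L ω)) ∘ foldv) = (fun ω => Gf φ ξ (L ω)) := by
    funext ω; simp [Gf_foldv]
  rw [h3, integrable_withDensity_iff_integrable_smul']
  · refine h2.congr ?_
    filter_upwards with ω
    change ((b (⟪ξ, L ω⟫ / ‖ξ‖) : ℝ) : ℂ) * Gf φ ξ (L ω) = _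
    rw [bob_inner hξ L hL, ENNReal.toReal_ofReal (hb0 _)]
    simp
  · exact ENNReal.measurable_ofReal.comp (hb.comp (meas_coord 0))
  · filter_upwards with x using ENNReal.ofReal_lt_top
end

/-- The map taking `e0` to a unit vector `e`. -/
def Rot (e σ : E3) : E3 := (2 * ⟪e0 + e, σ⟫ / ‖e0 + e‖^2) • (e0 + e) - σ

lemma Rot_norm (e σ : E3) : ‖Rot e σ‖ = ‖σ‖ := by
  unfold Rot
  by_cases h : e0 + e = 0
  · simp [h]
  have h' : ‖e0 + e‖ ≠ 0 := by simpa using h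
  have : ‖(2 * ⟪e0 + e, σ⟫ / ‖e0 + e‖^2) • (e0 + e) - σ‖^2 = ‖σ‖^2 := by
    rw [@norm_sub_sq_real, norm_smul, mul_pow, real_inner_smul_left, Real.norm_eq_abs, sq_abs]
    field_simp
    ring
  exact (pow_left_inj₀ (norm_nonneg _) (norm_nonneg _) two_ne_zero).1 this

/-- as a linear isometry equivalence -/
def RotL (e : E3) : E3 ≃ₗᵢ[ℝ] E3 :=
  LinearIsometry.toLinearIsometryEquiv
    { toFun := Rot e
      map_add' := by
        intro x y; unfold Rot; rw [inner_add_right]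
        rw [mul_add, add_div, add_smul]; abel
      map_smul' := by
        intro a x; unfold Rot; rw [inner_smul_right, smul_sub, smul_smul]
        simp only [RingHom.id_apply]
        congr 2
        ring
      norm_map' := Rot_norm e } rfl

lemma RotL_apply (e σ : E3) : RotL e σ = Rot e σ := rfl

lemma RotL_e0 {e : E3} (he : ‖e‖ = 1) : RotL e e0 = e := by
  rw [RotL_apply, Rot]
  by_cases h : e0 + e = 0
  · simp [h]; exact neg_eq_of_add_eq_zero_right h
  have h' : ‖e0 + e‖ ≠ 0 := by simpa using h
  have h2 : ‖e0 + e‖^2 = 2 * ⟪e0 + e, e0⟫ := by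
    rw [@norm_add_sq_real, he, norm_e0, inner_add_left, real_inner_self_eq_norm_sq, norm_e0,
      real_inner_comm]; ring
  rw [← h2, div_self (by positivity)]
  simp

lemma exists_iso (ξ : E3) : ∃ L : E3 ≃ₗᵢ[ℝ] E3, ‖ξ‖ • L e0 = ξ := by
  by_cases h : ξ = 0
  · exact ⟨LinearIsometryEquiv.refl ℝ E3, by simp [h]⟩
  have h' : ‖ξ‖ ≠ 0 := by simpa using h
  refine ⟨RotL (‖ξ‖⁻¹ • ξ), ?_⟩
  rw [RotL_e0 (by rw [norm_smul]; simp [h']), smul_smul, mul_inv_cancel₀ h', one_smul]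

/-- rotation about `e0` with cosine `a`, sine `d` -/
def rotMap (a d : ℝ) (x : E3) : E3 := !₂[x 0, a * x 1 - d * x 2, d * x 1 + a * x 2]

lemma rotMap_norm {a d : ℝ} (h : a^2 + d^2 = 1) (x : E3) : ‖rotMap a d x‖ = ‖x‖ := by
  rw [EuclideanSpace.norm_eq, EuclideanSpace.norm_eq]
  congr 1
  simp only [rotMap, Fin.sum_univ_three, Real.norm_eq_abs, sq_abs]
  simp
  have : a^2 = 1 - d^2 := by linarith
  ring_nf
  rw [this]; ring

/-- as isometry -/
def rotL (φ : ℝ) : E3 ≃ₗᵢ[ℝ] E3 :=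
  LinearIsometry.toLinearIsometryEquiv
    { toFun := rotMap (cos φ) (sin φ)
      map_add' := by
        intro x y; ext i; fin_cases i <;> simp [rotMap] <;> ring
      map_smul' := by
        intro a x; ext i; fin_cases i <;> simp [rotMap] <;> ring
      norm_map' := rotMap_norm (by rw [add_comm]; exact Real.sin_sq_add_cos_sq φ) } rfl

lemma rotL_zero (φ : ℝ) (x : E3) : rotL φ x 0 = x 0 := by
  change rotMap _ _ x 0 = _; simp [rotMap]
lemma rotL_one (φ : ℝ) (x : E3) : rotL φ x 1 = cos φ * x 1 - sin φ * x 2 := by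
  change rotMap _ _ x 1 = _; simp [rotMap]
lemma rotL_two (φ : ℝ) (x : E3) : rotL φ x 2 = sin φ * x 1 + cos φ * x 2 := by
  change rotMap _ _ x 2 = _; simp [rotMap]
lemma rotL_e0 (φ : ℝ) : rotL φ e0 = e0 := by
  ext i; fin_cases i
  · exact rotL_zero φ e0
  · change rotL φ e0 1 = e0 1; rw [rotL_one]; simp [e0_one, e0_two]
  · change rotL φ e0 2 = e0 2; rw [rotL_two]; simp [e0_one, e0_two]

/-! ## Part B: characteristic function estimates -/

/-- unimodular exponential -/
def ex (z : ℝ) : ℂ := Complex.exp (-(Complex.I * (z : ℂ)))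

lemma ex_eq (z : ℝ) : ex z = (cos z : ℂ) - (sin z : ℂ) * Complex.I := by
  unfold ex
  rw [show -(Complex.I * (z:ℂ)) = ((-z : ℝ) : ℂ) * Complex.I by push_cast; ring,
    Complex.exp_mul_I]
  push_cast
  rw [Complex.cos_neg, Complex.sin_neg]; ring

lemma ex_re (z : ℝ) : (ex z).re = cos z := by
  rw [ex_eq]; simp [-Complex.ofReal_cos, -Complex.ofReal_sin]
lemma ex_im (z : ℝ) : (ex z).im = -sin z := by
  rw [ex_eq]; simp [-Complex.ofReal_cos, -Complex.ofReal_sin]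
lemma ex_add (x y : ℝ) : ex (x + y) = ex x * ex y := by
  unfold ex; rw [← Complex.exp_add]; congr 1; push_cast; ring
lemma norm_ex (z : ℝ) : ‖ex z‖ = 1 := by
  unfold ex
  rw [show -(Complex.I * (z:ℂ)) = ((-z : ℝ) : ℂ) * Complex.I by push_cast; ring,
    Complex.norm_exp_ofReal_mul_I]
lemma ex_zero : ex 0 = 1 := by simp [ex]
lemma ex_cont : Continuous ex := by unfold ex; fun_prop
lemma ex_conj (z : ℝ) : (starRingEnd ℂ) (ex z) = ex (-z) := by
  apply Complex.ext <;> simp [ex_re, ex_im]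
lemma ex_add_neg (z : ℝ) : ex z + ex (-z) = 2 * ((cos z : ℝ) : ℂ) := by
  apply Complex.ext <;> simp [ex_re, ex_im, -Complex.ofReal_cos]; ring

lemma norm_ex_sub_one_le (z : ℝ) : ‖1 - ex z‖ ≤ |z| := by
  have h := Real.norm_exp_I_mul_ofReal_sub_one_le (x := -z)
  rw [norm_sub_rev, ex]
  rw [show -(Complex.I * (z:ℂ)) = Complex.I * ((-z : ℝ) : ℂ) by push_cast; ring]
  simpa using h

lemma norm_ex_sub_one_le_two (z : ℝ) : ‖1 - ex z‖ ≤ 2 := by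
  calc ‖1 - ex z‖ ≤ ‖(1:ℂ)‖ + ‖ex z‖ := norm_sub_le _ _
    _ = 2 := by rw [norm_ex]; norm_num

lemma charFn_eq (Ψ : Measure E3) (ξ : E3) : charFn Ψ ξ = ∫ v, ex ⟪v, ξ⟫ ∂Ψ := rfl

lemma integral_add_sub {X F : Type*} [MeasurableSpace X] [NormedAddCommGroup F] [NormedSpace ℝ F]
    {μ : Measure X} {f g h : X → F}
    (hf : Integrable f μ) (hg : Integrable g μ) (hh : Integrable h μ) :
    ∫ x, f x ∂μ + ∫ x, g x ∂μ - ∫ x, h x ∂μ = ∫ x, (f x + g x - h x) ∂μ := by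
  rw [integral_sub (f := fun x => f x + g x) (hf.add hg) hh, integral_add hf hg]

lemma ex_inner_integrable {X : Type*} [MeasurableSpace X] (μ : Measure X) [IsFiniteMeasure μ]
    {f : X → ℝ} (hf : Measurable f) : Integrable (fun x => ex (f x)) μ := by
  refine Integrable.mono' (integrable_const (1:ℝ))
    (ex_cont.measurable.comp hf).aestronglyMeasurable ?_
  filter_upwards with x
  rw [norm_ex]

lemma charFn_norm_le (Ψ : Measure E3) [IsProbabilityMeasure Ψ] (ξ : E3) : ‖charFn Ψ ξ‖ ≤ 1 := by
  rw [charFn_eq]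
  refine (norm_integral_le_integral_norm _).trans ?_
  simp [norm_ex]

lemma charFn_zero (Ψ : Measure E3) [IsProbabilityMeasure Ψ] : charFn Ψ 0 = 1 := by
  rw [charFn_eq]; simp [ex_zero]

lemma charFn_cont (Ψ : Measure E3) [IsProbabilityMeasure Ψ] : Continuous (charFn Ψ) := by
  refine continuous_of_dominated (F := fun ξ v => ex ⟪v, ξ⟫) (bound := fun _ => 1) ?_ ?_ ?_ ?_
  · intro ξ
    exact (ex_cont.comp (by fun_prop : Continuous fun v : E3 => ⟪v, ξ⟫)).aestronglyMeasurable
  · intro ξ; filter_upwards with v; rw [norm_ex]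
  · exact integrable_const _
  · filter_upwards with v
    exact ex_cont.comp (by fun_prop)

/-- law of the difference of two independent copies -/
def Th (Ψ : Measure E3) : Measure E3 := (Ψ.prod Ψ).map (fun p => p.1 - p.2)

instance (Ψ : Measure E3) [IsProbabilityMeasure Ψ] : IsProbabilityMeasure (Th Ψ) :=
  Measure.isProbabilityMeasure_map (by fun_prop)

/-- one minus squared modulus -/
def qf (Θ : Measure E3) (ξ : E3) : ℝ := ∫ V, (1 - cos ⟪V, ξ⟫) ∂Θ

/-- Gaussian-averaged tail functional -/
def PP (Θ : Measure E3) (S : ℝ) : ℝ := ∫ V, (1 - exp (-(S * ‖V‖^2))) ∂Θ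

lemma charFn_mul (Ψ : Measure E3) [IsProbabilityMeasure Ψ] (u w : E3) :
    charFn Ψ u * charFn Ψ w = ∫ p, ex ⟪p.1, u⟫ * ex ⟪p.2, w⟫ ∂(Ψ.prod Ψ) := by
  rw [charFn_eq, charFn_eq, integral_prod_mul (fun v => ex ⟪v, u⟫) (fun v => ex ⟪v, w⟫)]

lemma charFn_conj (Ψ : Measure E3) (u : E3) : (starRingEnd ℂ) (charFn Ψ u) = charFn Ψ (-u) := by
  rw [charFn_eq, charFn_eq, ← integral_conj]
  simp [ex_conj, inner_neg_right]

lemma cos_integrable {X : Type*} [MeasurableSpace X] (μ : Measure X) [IsFiniteMeasure μ]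
    {f : X → ℝ} (hf : Measurable f) : Integrable (fun x => cos (f x)) μ := by
  refine Integrable.mono' (integrable_const (1:ℝ)) (by fun_prop) ?_
  filter_upwards with x
  exact abs_cos_le_one _

lemma qf_integrable (Θ : Measure E3) [IsFiniteMeasure Θ] (ξ : E3) :
    Integrable (fun V => 1 - cos ⟪V, ξ⟫) Θ :=
  (integrable_const 1).sub (cos_integrable Θ (by fun_prop))

lemma normSq_charFn (Ψ : Measure E3) [IsProbabilityMeasure Ψ] (ξ : E3) :
    ‖charFn Ψ ξ‖^2 = 1 - qf (Th Ψ) ξ := by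
  have h1 : ((‖charFn Ψ ξ‖^2 : ℝ) : ℂ) = ∫ p, ex ⟪p.1 - p.2, ξ⟫ ∂(Ψ.prod Ψ) := by
    have := Complex.mul_conj (charFn Ψ ξ)
    rw [Complex.normSq_eq_norm_sq] at this
    rw [← this, charFn_conj, charFn_mul]
    congr 1; funext p
    rw [← ex_add]; congr 1
    rw [inner_sub_left, inner_neg_right]; ring
  have h2 : ‖charFn Ψ ξ‖^2 = ∫ p, cos ⟪p.1 - p.2, ξ⟫ ∂(Ψ.prod Ψ) := by
    have := congrArg Complex.re h1
    rw [Complex.ofReal_re] at this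
    rw [this, ← RCLike.re_eq_complex_re, ← integral_re]
    · simp [ex_re]
    · exact ex_inner_integrable _ (by fun_prop)
  rw [h2, qf, integral_sub (integrable_const _) (cos_integrable _ (by fun_prop)), Th,
    integral_map (by fun_prop) (by fun_prop), integral_map (by fun_prop) (by fun_prop)]
  simp

lemma qf_nonneg (Θ : Measure E3) (ξ : E3) : 0 ≤ qf Θ ξ :=
  integral_nonneg fun V => by simp [cos_le_one]

lemma one_sub_cos_sub_le (a b : ℝ) : 1 - cos (a - b) ≤ 2 * (1 - cos a) + 2 * (1 - cos b) := by
  have h1 := Real.cos_sq_add_sin_sq a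
  have h2 := Real.cos_sq_add_sin_sq b
  rw [cos_sub]
  nlinarith [sq_nonneg (sin a + sin b), sq_nonneg (cos a + cos b - 2)]

lemma qf_sub_le (Θ : Measure E3) [IsFiniteMeasure Θ] (u w : E3) :
    qf Θ (u - w) ≤ 2 * qf Θ u + 2 * qf Θ w := by
  unfold qf
  rw [← integral_const_mul, ← integral_const_mul,
    ← integral_add ((qf_integrable Θ u).const_mul 2) ((qf_integrable Θ w).const_mul 2)]
  refine integral_mono (qf_integrable Θ _)
    (((qf_integrable Θ u).const_mul 2).add ((qf_integrable Θ w).const_mul 2)) ?_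
  intro V
  simp only [inner_sub_right]
  exact one_sub_cos_sub_le _ _

lemma PP_integrable (Θ : Measure E3) [IsFiniteMeasure Θ] {S : ℝ} (hS : 0 ≤ S) :
    Integrable (fun V => 1 - exp (-(S * ‖V‖^2))) Θ := by
  refine Integrable.mono' (integrable_const (1:ℝ)) (by fun_prop) ?_
  filter_upwards with V
  rw [Real.norm_eq_abs, abs_le]
  have : exp (-(S * ‖V‖^2)) ≤ 1 := exp_le_one_iff.2 (by have := sq_nonneg ‖V‖; nlinarith)
  constructor <;> linarith [exp_pos (-(S * ‖V‖^2))]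

lemma PP_nonneg (Θ : Measure E3) {S : ℝ} (hS : 0 ≤ S) : 0 ≤ PP Θ S :=
  integral_nonneg fun V => by
    have : exp (-(S * ‖V‖^2)) ≤ 1 := exp_le_one_iff.2 (by have := sq_nonneg ‖V‖; nlinarith)
    simpa using this

lemma PP_le_one (Θ : Measure E3) [IsProbabilityMeasure Θ] {S : ℝ} (hS : 0 ≤ S) : PP Θ S ≤ 1 := by
  have := integral_mono (PP_integrable Θ hS) (integrable_const (1:ℝ))
    (fun V => by linarith [exp_pos (-(S * ‖V‖^2))])
  simpa [PP] using this

lemma min_le_p {y : ℝ} (hy : 0 ≤ y) : min 1 y ≤ 2 * (1 - exp (-y)) := by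
  have h1 : exp (-y) ≤ 1 / (1 + y) := by
    rw [exp_neg, one_div]
    exact inv_anti₀ (by linarith) (by linarith [add_one_le_exp y])
  have h2 : min 1 y ≤ 2 * (1 - 1/(1+y)) := by
    have : 1 - 1/(1+y) = y/(1+y) := by field_simp; ring
    rw [this, ← mul_div_assoc, le_div_iff₀ (by linarith)]
    rcases le_total 1 y with h | h
    · rw [min_eq_left h]; linarith
    · rw [min_eq_right h]; nlinarith
  linarith

/-- pointwise bounds -/
lemma ptw_cos {n r s2 Y : ℝ} (hs : 0 ≤ s2) (hY : Y^2 ≤ s2 * r^2 * n^2) :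
    1 - cos Y ≤ (4 + r^2) * (1 - exp (-(s2 * n^2))) := by
  have hy : 0 ≤ s2 * n^2 := by positivity
  have hp := min_le_p hy
  have h1 := Real.one_sub_sq_div_two_le_cos (x := Y)
  have h2 := Real.neg_one_le_cos Y
  rcases le_total 1 (s2 * n^2) with h | h
  · rw [min_eq_left h] at hp; nlinarith [sq_nonneg r]
  · rw [min_eq_right h] at hp; nlinarith [sq_nonneg r]

lemma ptw_lin {n r s2 x z : ℝ} (hs : 0 ≤ s2) (hx : |x| ≤ s2 * r * n)
    (hz : z ≤ |x|) (hz2 : z ≤ 2) : z ≤ s2 * r^2 + 4 * (1 - exp (-(s2 * n^2))) := by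
  have hy : 0 ≤ s2 * n^2 := by positivity
  have hp := min_le_p hy
  rcases le_total 1 (s2 * n^2) with h | h
  · rw [min_eq_left h] at hp; nlinarith [sq_nonneg r]
  · rw [min_eq_right h] at hp; nlinarith [mul_nonneg hs (sq_nonneg (r - n)), mul_nonneg hs (sq_nonneg r)]

lemma ptw_final {r s2 p A B : ℝ} (hs : 0 ≤ s2) (hp : 0 ≤ p) (hA : A ≤ (4 + r^2) * p)
    (hB : B ≤ s2 * r^2 + 4 * p) : 2 * A + 2 * B ≤ 16 * (1 + r^2) * (s2 + p) := by
  nlinarith [mul_nonneg hs (sq_nonneg r), mul_nonneg hp (sq_nonneg r)]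

lemma p_nonneg {s2 n : ℝ} (hs : 0 ≤ s2) : 0 ≤ 1 - exp (-(s2 * n^2)) := by
  have : exp (-(s2 * n^2)) ≤ 1 := exp_le_one_iff.2 (by have := sq_nonneg n; nlinarith)
  linarith

lemma sq_inner_le {V ξ η : E3} {s2 : ℝ} (hη : ‖η‖^2 ≤ s2 * ‖ξ‖^2) :
    ⟪V, η⟫^2 ≤ s2 * ‖ξ‖^2 * ‖V‖^2 := by
  have := real_inner_mul_inner_self_le V η
  rw [real_inner_self_eq_norm_sq, real_inner_self_eq_norm_sq] at this
  nlinarith [sq_nonneg ‖V‖]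

lemma abs_smul_inner_le {V ξ : E3} {s2 : ℝ} (hs : 0 ≤ s2) :
    |s2 * ⟪V, ξ⟫| ≤ s2 * ‖ξ‖ * ‖V‖ := by
  rw [abs_mul, abs_of_nonneg hs, mul_assoc, mul_comm ‖ξ‖]
  exact mul_le_mul_of_nonneg_left (abs_real_inner_le_norm _ _) hs

lemma brace_eq (X x Y : ℝ) : (ex (X + Y) + ex (x - Y) + ex (X - Y) + ex (x + Y)) / 2
    - ex (X + x) - 1 = (ex X + ex x) * (((cos Y : ℝ) : ℂ) - 1) - (1 - ex X) * (1 - ex x) := by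
  have h := ex_add_neg Y
  simp only [sub_eq_add_neg, ex_add] at *
  linear_combination (ex X + ex x) / 2 * h

lemma brace_bound {n r s2 X x Y : ℝ} (hs : 0 ≤ s2) (hY : Y^2 ≤ s2 * r^2 * n^2)
    (hx : |x| ≤ s2 * r * n) :
    ‖(ex (X + Y) + ex (x - Y) + ex (X - Y) + ex (x + Y)) / 2 - ex (X + x) - 1‖
      ≤ 16 * (1 + r^2) * (s2 + (1 - exp (-(s2 * n^2)))) := by
  rw [brace_eq]
  have h1 : ‖(ex X + ex x) * (((cos Y : ℝ) : ℂ) - 1)‖ ≤ 2 * (1 - cos Y) := by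
    rw [norm_mul]
    have : ‖((cos Y : ℝ) : ℂ) - 1‖ = 1 - cos Y := by
      rw [norm_sub_rev, ← Complex.ofReal_one, ← Complex.ofReal_sub, Complex.norm_real,
        Real.norm_of_nonneg (by linarith [cos_le_one Y])]
    rw [this]
    refine mul_le_mul_of_nonneg_right ?_ (by linarith [cos_le_one Y])
    refine (norm_add_le _ _).trans ?_
    rw [norm_ex, norm_ex]; norm_num
  have h2 : ‖(1 - ex X) * (1 - ex x)‖ ≤ 2 * ‖1 - ex x‖ := by
    rw [norm_mul]
    exact mul_le_mul_of_nonneg_right (norm_ex_sub_one_le_two X) (norm_nonneg _)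
  have h3 := ptw_final (r := r) hs (p_nonneg (n := n) hs) (ptw_cos hs hY)
    (ptw_lin hs hx (norm_ex_sub_one_le x) (norm_ex_sub_one_le_two x))
  refine (norm_sub_le _ _).trans ?_
  linarith

lemma sym_bound (Ψ : Measure E3) [IsProbabilityMeasure Ψ] (ξ η : E3) {s2 : ℝ} (hs : 0 ≤ s2)
    (hη : ‖η‖^2 ≤ s2 * ‖ξ‖^2) :
    ‖charFn Ψ ((1-s2) • ξ + η) * charFn Ψ (s2 • ξ - η)
      + charFn Ψ ((1-s2) • ξ - η) * charFn Ψ (s2 • ξ + η) - 2 * charFn Ψ ξ‖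
      ≤ 16 * (1 + ‖ξ‖^2) * (s2 + PP (Th Ψ) s2) := by
  have hI : ∀ u w : E3, Integrable (fun p : E3 × E3 => ex ⟪p.1, u⟫ * ex ⟪p.2, w⟫) (Ψ.prod Ψ) := by
    intro u w
    simp only [← ex_add]
    exact ex_inner_integrable _ (by fun_prop)
  have hx2 : ∀ u w : E3, charFn Ψ u * charFn Ψ w = ∫ p, (ex ⟪p.1, u⟫ * ex ⟪p.2, w⟫
      + ex ⟪p.1, w⟫ * ex ⟪p.2, u⟫) / 2 ∂(Ψ.prod Ψ) := by
    intro u w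
    rw [integral_div, integral_add (hI u w) (hI w u), ← charFn_mul, ← charFn_mul]; ring
  have hI2 : ∀ u w : E3, Integrable (fun p : E3 × E3 => (ex ⟪p.1, u⟫ * ex ⟪p.2, w⟫
      + ex ⟪p.1, w⟫ * ex ⟪p.2, u⟫) / 2) (Ψ.prod Ψ) := fun u w => ((hI u w).add (hI w u)).div_const 2
  have h3 : 2 * charFn Ψ ξ = 2 * (charFn Ψ ξ * charFn Ψ 0) := by rw [charFn_zero]; ring
  rw [h3, hx2 _ (s2 • ξ - η), hx2 _ (s2 • ξ + η), hx2 ξ 0, ← integral_const_mul,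
    integral_add_sub (hI2 _ _) (hI2 _ _) ((hI2 _ _).const_mul _)]
  have hP : 16 * (1 + ‖ξ‖^2) * (s2 + PP (Th Ψ) s2) = ∫ p, 16 * (1 + ‖ξ‖^2) *
      (s2 + (1 - exp (-(s2 * ‖p.1 - p.2‖^2)))) ∂(Ψ.prod Ψ) := by
    have hm : AEMeasurable (fun p : E3 × E3 => p.1 - p.2) (Ψ.prod Ψ) := by fun_prop
    rw [integral_const_mul, PP, Th, integral_map hm (by fun_prop),
      integral_add (integrable_const _)]
    · simp
    · exact (PP_integrable (Th Ψ) hs).comp_aemeasurable hm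
  rw [hP]
  refine norm_integral_le_of_norm_le ?_ ?_
  · refine (Integrable.const_mul ?_ _)
    refine (integrable_const _).add ?_
    have hm : AEMeasurable (fun p : E3 × E3 => p.1 - p.2) (Ψ.prod Ψ) := by fun_prop
    exact (PP_integrable (Th Ψ) hs).comp_aemeasurable hm
  · filter_upwards with p
    obtain ⟨v, v'⟩ := p
    obtain ⟨V, rfl⟩ : ∃ V, v = V + v' := ⟨v - v', by simp⟩
    have hb := brace_bound (X := (1-s2) * ⟪V, ξ⟫) hs (sq_inner_le (V := V) hη)
      (abs_smul_inner_le (V := V) (ξ := ξ) hs)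
    simp only [add_sub_cancel_right]
    refine le_trans (le_of_eq ?_) hb
    have hmul : ∀ z : ℂ, ‖z‖ = ‖ex ⟪v', ξ⟫ * z‖ := fun z => by rw [norm_mul, norm_ex, one_mul]
    refine Eq.trans ?_ (hmul _).symm
    congr 1
    simp only [inner_add_left, inner_add_right, inner_sub_right, inner_smul_right, inner_zero_right,
      ← ex_add, mul_sub, mul_div_assoc', mul_add, mul_one]
    ring_nf

lemma sym_bound_q (Θ : Measure E3) [IsProbabilityMeasure Θ] (ξ η : E3) {s2 : ℝ} (hs : 0 ≤ s2)
    (hη : ‖η‖^2 ≤ s2 * ‖ξ‖^2) :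
    |qf Θ ((1-s2) • ξ + η) + qf Θ ((1-s2) • ξ - η) - 2 * qf Θ ξ|
      ≤ 16 * (1 + ‖ξ‖^2) * (s2 + PP Θ s2) := by
  have hP : 16 * (1 + ‖ξ‖^2) * (s2 + PP Θ s2) = ∫ V, 16 * (1 + ‖ξ‖^2) *
      (s2 + (1 - exp (-(s2 * ‖V‖^2)))) ∂Θ := by
    rw [integral_const_mul, PP, integral_add (integrable_const _) (PP_integrable Θ hs)]
    simp
  have hI := qf_integrable Θ
  unfold qf
  rw [hP, ← integral_const_mul, integral_add_sub (hI _) (hI _) ((hI _).const_mul _), ← Real.norm_eq_abs]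
  refine norm_integral_le_of_norm_le (((integrable_const _).add (PP_integrable Θ hs)).const_mul _) ?_
  filter_upwards with V
  have hb := brace_bound (X := (1-s2) * ⟪V, ξ⟫) hs (sq_inner_le (V := V) hη)
      (abs_smul_inner_le (V := V) (ξ := ξ) hs)
  have h1 := ptw_cos hs (sq_inner_le (V := V) hη)
  set x := s2 * ⟪V, ξ⟫ with hx
  set X := (1-s2) * ⟪V, ξ⟫ with hX
  set Y := ⟪V, η⟫
  have h2 : |cos X - cos (X + x)| ≤ s2 * ‖ξ‖^2 + 4 * (1 - exp (-(s2 * ‖V‖^2))) := by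
    refine ptw_lin hs (abs_smul_inner_le (V := V) (ξ := ξ) hs) ?_ ?_
    · have := norm_ex_sub_one_le x
      have h3 : ‖ex X * (1 - ex x)‖ ≤ |x| := by rw [norm_mul, norm_ex, one_mul]; exact this
      refine le_trans ?_ h3
      have := Complex.abs_re_le_norm (ex X * (1 - ex x))
      rw [mul_sub, ← ex_add, mul_one] at this ⊢
      rwa [Complex.sub_re, ex_re, ex_re] at this
    · rw [abs_le]; constructor <;> linarith [cos_le_one X, neg_one_le_cos X, cos_le_one (X+x), neg_one_le_cos (X+x)]
  have h3 := ptw_final (r := ‖ξ‖) hs (p_nonneg (n := ‖V‖) hs) h1 h2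
  refine le_trans ?_ h3
  have e1 : ⟪V, ξ⟫ = X + x := by rw [hx, hX]; ring
  simp only [inner_add_right, inner_sub_right, inner_smul_right, ← hX]
  rw [e1, Real.norm_eq_abs]
  rw [show 1 - cos (X + Y) + (1 - cos (X - Y)) - 2 * (1 - cos (X + x))
    = 2 * (cos X * (1 - cos Y)) - 2 * (cos X - cos (X + x)) by rw [cos_add X Y, cos_sub X Y]; ring]
  refine (abs_sub _ _).trans ?_
  rw [abs_mul, abs_mul 2, abs_mul (cos X), abs_of_nonneg (by linarith [cos_le_one Y] : 0 ≤ 1 - cos Y)]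
  have := abs_cos_le_one X
  have h4 := cos_le_one Y
  norm_num
  nlinarith

/-! ## Geometry of the collision -/

/-- squared sine of the half angle -/
def Sf (ω : E3) : ℝ := (1 - ω 0) / 2

lemma Sf_cont : Continuous Sf := by unfold Sf; fun_prop

lemma norm_sq_coord (ω : E3) : ‖ω‖^2 = ω 0 ^2 + ω 1 ^2 + ω 2 ^2 := by
  rw [EuclideanSpace.norm_eq, Real.sq_sqrt (by positivity)]
  simp [Fin.sum_univ_three]

lemma Sf_bounds {ω : E3} (h1 : ‖ω‖ = 1) (h0 : 0 ≤ ω 0) : 0 ≤ Sf ω ∧ Sf ω ≤ 1/2 := by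
  have := norm_sq_coord ω
  rw [h1] at this
  unfold Sf
  constructor
  · nlinarith [sq_nonneg (ω 1), sq_nonneg (ω 2)]
  · linarith

/-- transversal part -/
def etaf (ξ : E3) (L : E3 ≃ₗᵢ[ℝ] E3) (ω : E3) : E3 := (‖ξ‖/2) • L (ω - ω 0 • e0)

section
variable {ξ : E3} {L : E3 ≃ₗᵢ[ℝ] E3} (ω : E3)

lemma plus_eq (hL : ‖ξ‖ • L e0 = ξ) (ω : E3) : (1/2:ℝ) • ξ + (‖ξ‖/2) • L ω = (1 - Sf ω) • ξ + etaf ξ L ω := by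
  unfold etaf Sf
  rw [map_sub, map_smul, smul_sub, smul_smul,
    show (‖ξ‖/2 * ω 0) • L e0 = (ω 0 / 2) • ξ by
      nth_rewrite 2 [← hL]; rw [smul_smul]; congr 1; ring]
  rw [show (1 - (1 - ω 0)/2) = 1/2 + ω 0 / 2 by ring, add_smul]
  abel

lemma minus_eq (hL : ‖ξ‖ • L e0 = ξ) (ω : E3) : (1/2:ℝ) • ξ - (‖ξ‖/2) • L ω = Sf ω • ξ - etaf ξ L ω := by
  have h := plus_eq hL ω
  have : (1/2:ℝ) • ξ - (‖ξ‖/2) • L ω = ξ - ((1/2:ℝ) • ξ + (‖ξ‖/2) • L ω) := by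
    module
  rw [this, h]; module

lemma rot_pi (ω : E3) : rotL π ω = (2 * ω 0) • e0 - ω := by
  ext i; fin_cases i
  · change rotL π ω 0 = _; rw [rotL_zero]; simp [e0_zero]; ring
  · change rotL π ω 1 = _; rw [rotL_one]; simp [e0_one]
  · change rotL π ω 2 = _; rw [rotL_two]; simp [e0_two]

lemma eta_rot : etaf ξ L (rotL π ω) = - etaf ξ L ω := by
  unfold etaf
  rw [rotL_zero, rot_pi, ← smul_neg, ← map_neg]
  congr 2; module

lemma Sf_rot (φ : ℝ) : Sf (rotL φ ω) = Sf ω := by unfold Sf; rw [rotL_zero]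

lemma eta_norm {ω : E3} (h1 : ‖ω‖ = 1) : ‖etaf ξ L ω‖^2 = Sf ω * (1 - Sf ω) * ‖ξ‖^2 := by
  unfold etaf Sf
  rw [norm_smul, mul_pow, L.norm_map, @norm_sub_sq_real, norm_smul, norm_e0, h1, inner_smul_right,
    inner_e0', Real.norm_eq_abs, Real.norm_eq_abs, sq_abs, mul_pow, sq_abs]
  ring

lemma eta_norm_le {ω : E3} (h1 : ‖ω‖ = 1) (h0 : 0 ≤ ω 0) :
    ‖etaf ξ L ω‖^2 ≤ Sf ω * ‖ξ‖^2 := by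
  rw [eta_norm h1]
  obtain ⟨h2, h3⟩ := Sf_bounds h1 h0
  nlinarith [mul_nonneg h2 (sq_nonneg ‖ξ‖), mul_nonneg (mul_nonneg h2 h2) (sq_nonneg ‖ξ‖)]

lemma eta_inner (hL : ‖ξ‖ • L e0 = ξ) {ω : E3} : ⟪ξ, etaf ξ L ω⟫ = 0 := by
  unfold etaf
  nth_rewrite 1 [← hL]
  rw [inner_smul_right, real_inner_smul_left, L.inner_map_map, inner_sub_right, inner_e0,
    inner_smul_right, inner_e0, e0_zero]
  ring

lemma plus_norm (hL : ‖ξ‖ • L e0 = ξ) {ω : E3} (h1 : ‖ω‖ = 1) :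
    ‖(1/2:ℝ) • ξ + (‖ξ‖/2) • L ω‖^2 = (1 - Sf ω) * ‖ξ‖^2 := by
  rw [plus_eq hL, @norm_add_sq_real, real_inner_smul_left, eta_inner hL, norm_smul, mul_pow,
    eta_norm h1, Real.norm_eq_abs, sq_abs]
  ring

lemma minus_norm (hL : ‖ξ‖ • L e0 = ξ) {ω : E3} (h1 : ‖ω‖ = 1) :
    ‖(1/2:ℝ) • ξ - (‖ξ‖/2) • L ω‖^2 = Sf ω * ‖ξ‖^2 := by
  rw [minus_eq hL, @norm_sub_sq_real, real_inner_smul_left, eta_inner hL, norm_smul, mul_pow,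
    eta_norm h1, Real.norm_eq_abs, sq_abs]
  ring

lemma plus_le (hL : ‖ξ‖ • L e0 = ξ) {ω : E3} (h1 : ‖ω‖ = 1) (h0 : 0 ≤ ω 0) :
    ‖(1/2:ℝ) • ξ + (‖ξ‖/2) • L ω‖ ≤ ‖ξ‖ := by
  apply le_of_sq_le_sq _ (norm_nonneg _)
  rw [plus_norm hL h1]
  nlinarith [(Sf_bounds h1 h0).1, sq_nonneg ‖ξ‖]

lemma minus_le (hL : ‖ξ‖ • L e0 = ξ) {ω : E3} (h1 : ‖ω‖ = 1) (h0 : 0 ≤ ω 0) :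
    ‖(1/2:ℝ) • ξ - (‖ξ‖/2) • L ω‖ ≤ ‖ξ‖ := by
  apply le_of_sq_le_sq _ (norm_nonneg _)
  rw [minus_norm hL h1]
  nlinarith [(Sf_bounds h1 h0).2, sq_nonneg ‖ξ‖]

lemma Gsym_bound (hL : ‖ξ‖ • L e0 = ξ) (Ψ : Measure E3) [IsProbabilityMeasure Ψ] {ω : E3} (h1 : ‖ω‖ = 1) (h0 : 0 ≤ ω 0) :
    ‖Gf (charFn Ψ) ξ (L ω) + Gf (charFn Ψ) ξ (L (rotL π ω))‖
      ≤ 16 * (1 + ‖ξ‖^2) * (Sf ω + PP (Th Ψ) (Sf ω)) := by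
  have h := sym_bound Ψ ξ (etaf ξ L ω) (Sf_bounds h1 h0).1 (eta_norm_le h1 h0)
  refine le_trans (le_of_eq ?_) h
  unfold Gf
  rw [plus_eq hL, minus_eq hL, plus_eq hL, minus_eq hL, eta_rot, Sf_rot]
  rw [sub_neg_eq_add, ← sub_eq_add_neg]
  congr 1
  ring
end

lemma R_diff_le {z p q : ℂ} (hz : ‖z‖ ≤ 1) (hp : ‖p‖ ≤ 1) (hq : ‖q‖ ≤ 1) :
    |‖z‖^2 - ‖p‖^2 * ‖q‖^2| ≤ 2 * ‖p * q - z‖ := by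
  have h1 : ‖z‖^2 - ‖p‖^2 * ‖q‖^2 = (‖z‖ - ‖p * q‖) * (‖z‖ + ‖p * q‖) := by
    rw [norm_mul]; ring
  have h2 : ‖p * q‖ ≤ 1 := by rw [norm_mul]; exact mul_le_one₀ hp (norm_nonneg _) hq
  rw [h1, abs_mul, norm_sub_rev]
  have h3 := abs_norm_sub_norm_le z (p * q)
  rw [abs_of_nonneg (by positivity : 0 ≤ ‖z‖ + ‖p * q‖)]
  nlinarith [norm_nonneg (z - p * q), norm_nonneg z, norm_nonneg (p * q), abs_nonneg (‖z‖ - ‖p * q‖)]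

/-! ## Case I: the angular function is not integrable -/

/-- a pointwise smallness property of the collision integrand -/
def CPh (φ : E3 → ℂ) : Prop := ∀ ξ : E3, ξ ≠ 0 → ∀ L : E3 ≃ₗᵢ[ℝ] E3, ‖ξ‖ • L e0 = ξ → ∀ δ : ℝ,
  0 < δ → ∃ ω : E3, ‖ω‖ = 1 ∧ 0 ≤ ω 0 ∧ ∀ j : Fin 4,
    ‖Gf φ ξ (L (rotL ((j:ℕ) * (π/2)) ω))‖ < δ * Sf ω

lemma CP_of (φ : E3 → ℂ) {m : Measure E3} (hm : ∀ᵐ ω ∂m, ‖ω‖ = 1 ∧ 0 ≤ ω 0)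
    (hS : ¬ Integrable Sf m)
    (hG : ∀ ξ : E3, ξ ≠ 0 → ∀ L : E3 ≃ₗᵢ[ℝ] E3, ‖ξ‖ • L e0 = ξ →
      Integrable (fun ω => Gf φ ξ (L ω)) m) : CPh φ := by
  intro ξ hξ L hL δ hδ
  by_contra hcon
  push Not at hcon
  apply hS
  have hint : Integrable (fun ω => δ⁻¹ * ∑ j : Fin 4,
      ‖Gf φ ξ (L (rotL ((j:ℕ) * (π/2)) ω))‖) m := by
    apply Integrable.const_mul
    apply integrable_finsetSum
    intro j _
    have h := hG ξ hξ ((rotL ((j:ℕ) * (π/2))).trans L) (by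
      rw [LinearIsometryEquiv.trans_apply, rotL_e0, hL])
    exact h.norm
  refine hint.mono' Sf_cont.aestronglyMeasurable ?_
  filter_upwards [hm] with ω hω
  obtain ⟨j, hj⟩ := hcon ω hω.1 hω.2
  rw [Real.norm_eq_abs, abs_of_nonneg (Sf_bounds hω.1 hω.2).1]
  rw [inv_mul_eq_div, le_div_iff₀ hδ, mul_comm]
  refine hj.trans ?_
  exact Finset.single_le_sum (f := fun j : Fin 4 => ‖Gf φ ξ (L (rotL ((j:ℕ) * (π/2)) ω))‖)
    (fun _ _ => norm_nonneg _) (Finset.mem_univ j)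

lemma rotL_zero_angle (ω : E3) : rotL 0 ω = ω := by
  ext i; fin_cases i
  · change rotL 0 ω 0 = ω 0; rw [rotL_zero]
  · change rotL 0 ω 1 = ω 1; rw [rotL_one]; simp
  · change rotL 0 ω 2 = ω 2; rw [rotL_two]; simp

/-- superadditivity defect controlled by the collision integrand on a ball -/
def Defect (φ : E3 → ℂ) (f : E3 → ℝ) (C r0 : ℝ) : Prop :=
  ∀ ξ : E3, ‖ξ‖ ≤ r0 → ∀ L : E3 ≃ₗᵢ[ℝ] E3, ‖ξ‖ • L e0 = ξ → ∀ ω : E3, ‖ω‖ = 1 → 0 ≤ ω 0 →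
    f ((1/2:ℝ) • ξ + (‖ξ‖/2) • L ω) + f ((1/2:ℝ) • ξ - (‖ξ‖/2) • L ω) - f ξ
      ≤ C * ‖Gf φ ξ (L ω)‖

lemma MP {φ : E3 → ℂ} (hCP : CPh φ) {f : E3 → ℝ} {C r0 : ℝ} (hf : Defect φ f C r0)
    {ξ : E3} (hξ : ξ ≠ 0) (hξr : ‖ξ‖ ≤ r0) {τ F : ℝ} (hτ : 0 < τ)
    (h1 : f ξ ≤ ‖ξ‖^2 * (F - τ * ‖ξ‖^2))
    (h2 : ∀ η : E3, ‖η‖ ≤ ‖ξ‖ → ‖η‖^2 * (F - τ * ‖η‖^2) ≤ f η) : False := by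
  obtain ⟨L, hL⟩ := exists_iso ξ
  have hr : 0 < ‖ξ‖ := norm_pos_iff.2 hξ
  obtain ⟨ω, hω1, hω0, hj⟩ := hCP ξ hξ L hL (τ * ‖ξ‖^4 / (|C|+1)) (by positivity)
  have hj0 := hj 0
  simp only [Fin.val_zero, Nat.cast_zero, zero_mul, rotL_zero_angle] at hj0
  have hd := hf ξ hξr L hL ω hω1 hω0
  have hp := h2 _ (plus_le hL hω1 hω0)
  have hm := h2 _ (minus_le hL hω1 hω0)
  rw [plus_norm hL hω1] at hp
  rw [minus_norm hL hω1] at hm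
  obtain ⟨hS0, hS1⟩ := Sf_bounds hω1 hω0
  set S := Sf ω
  set g := ‖Gf φ ξ (L ω)‖
  have hg : 0 ≤ g := norm_nonneg _
  have h3 : C * g ≤ (|C|+1) * g := by nlinarith [le_abs_self C]
  have h4 : (|C|+1) * g < τ * ‖ξ‖^4 * S := by
    have : 0 < |C|+1 := by positivity
    calc (|C|+1) * g < (|C|+1) * (τ * ‖ξ‖^4 / (|C|+1) * S) := by gcongr
      _ = _ := by field_simp
  have h5 : τ * ‖ξ‖^4 * S ≤ 2 * τ * ‖ξ‖^4 * S * (1 - S) := by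
    have : 0 ≤ τ * ‖ξ‖^4 * S := by positivity
    nlinarith
  nlinarith

lemma exists_min_annulus {g : E3 → ℝ} {s r : ℝ} (hg : ContinuousOn g {ξ | s ≤ ‖ξ‖ ∧ ‖ξ‖ ≤ r})
    {η : E3} (h1 : s ≤ ‖η‖) (h2 : ‖η‖ ≤ r) :
    ∃ ξ : E3, (s ≤ ‖ξ‖ ∧ ‖ξ‖ ≤ r) ∧ ∀ ζ : E3, s ≤ ‖ζ‖ → ‖ζ‖ ≤ r → g ξ ≤ g ζ := by
  have hc : IsCompact {ξ : E3 | s ≤ ‖ξ‖ ∧ ‖ξ‖ ≤ r} := by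
    apply (isCompact_closedBall (0:E3) r).of_isClosed_subset
    · exact (isClosed_le continuous_const continuous_norm).inter
        (isClosed_le continuous_norm continuous_const)
    · intro x hx; simpa using hx.2
  obtain ⟨ξ, hξ, hmin⟩ := hc.exists_isMinOn ⟨η, h1, h2⟩ hg
  exact ⟨ξ, hξ, fun ζ a b => hmin ⟨a, b⟩⟩

lemma MP2 {φ : E3 → ℂ} (hCP : CPh φ) {f : E3 → ℝ} {C r0 : ℝ} (hf : Defect φ f C r0)
    (hfc : ContinuousOn f (closedBall 0 r0)) {K s : ℝ} (hs : 0 < s)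
    (hK : ∀ η : E3, ‖η‖ ≤ s → K * ‖η‖^2 ≤ f η) (η : E3) (hη : ‖η‖ ≤ r0) :
    K * ‖η‖^2 ≤ f η := by
  by_contra hcon
  push Not at hcon
  have hsη : s < ‖η‖ := by
    by_contra h; push Not at h
    exact absurd (hK η h) (not_le.2 hcon)
  have hηp : 0 < ‖η‖ := hs.trans hsη
  obtain ⟨τ, hτ, hτ'⟩ : ∃ τ : ℝ, 0 < τ ∧ f η / ‖η‖^2 + τ * ‖η‖^2 < K := by
    have h1 : f η / ‖η‖^2 < K := by rw [div_lt_iff₀ (by positivity)]; exact hcon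
    refine ⟨(K - f η / ‖η‖^2) / 2 / ‖η‖^2, by have := sub_pos.2 h1; positivity, ?_⟩
    field_simp
    field_simp at h1
    linarith
  have hgc : ContinuousOn (fun ξ : E3 => f ξ / ‖ξ‖^2 + τ * ‖ξ‖^2) {ξ | s ≤ ‖ξ‖ ∧ ‖ξ‖ ≤ r0} := by
    apply ContinuousOn.add
    · apply ContinuousOn.div
      · exact hfc.mono (fun x hx => by simpa using hx.2)
      · fun_prop
      · intro x hx; have := hs.trans_le hx.1; positivity
    · fun_prop
  obtain ⟨ξ, ⟨h1, h2⟩, hmin⟩ := exists_min_annulus hgc hsη.le hη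
  have hξp := hs.trans_le h1
  set F := f ξ / ‖ξ‖^2 + τ * ‖ξ‖^2 with hF
  have hFK : F < K := (hmin η hsη.le hη).trans_lt hτ'
  refine MP hCP hf (norm_pos_iff.1 hξp) h2 hτ (F := F) ?_ ?_
  · rw [hF]; field_simp; linarith
  · intro ζ hζ
    by_cases hζs : ‖ζ‖ ≤ s
    · refine le_trans ?_ (hK ζ hζs)
      nlinarith [sq_nonneg ‖ζ‖, mul_nonneg (sq_nonneg ‖ζ‖) (mul_nonneg hτ.le (sq_nonneg ‖ζ‖))]
    · push Not at hζs
      have hz := hs.trans hζs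
      have := hmin ζ hζs.le (hζ.trans h2)
      have h3 : F - τ * ‖ζ‖^2 ≤ f ζ / ‖ζ‖^2 := by linarith
      rw [le_div_iff₀ (by positivity)] at h3
      linarith

lemma log_defect (Ψ : Measure E3) [IsProbabilityMeasure Ψ] {m0 r0 : ℝ} (hm0 : 0 < m0)
    (hR : ∀ ξ : E3, ‖ξ‖ ≤ r0 → m0 ≤ ‖charFn Ψ ξ‖^2) :
    Defect (charFn Ψ) (fun ξ => - Real.log (‖charFn Ψ ξ‖^2)) (2 / m0^2) r0 := by
  intro ξ hξ L hL ω h1 h0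
  have hp := hR _ ((plus_le hL h1 h0).trans hξ)
  have hm := hR _ ((minus_le hL h1 h0).trans hξ)
  have hz := hR ξ hξ
  have hd := R_diff_le (charFn_norm_le Ψ ξ) (charFn_norm_le Ψ ((1/2:ℝ) • ξ + (‖ξ‖/2) • L ω))
    (charFn_norm_le Ψ ((1/2:ℝ) • ξ - (‖ξ‖/2) • L ω))
  unfold Gf
  set p := charFn Ψ ((1/2:ℝ) • ξ + (‖ξ‖/2) • L ω)
  set q := charFn Ψ ((1/2:ℝ) • ξ - (‖ξ‖/2) • L ω)
  set z := charFn Ψ ξ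
  have hpp : 0 < ‖p‖^2 := hm0.trans_le hp
  have hqp : 0 < ‖q‖^2 := hm0.trans_le hm
  have hzp : 0 < ‖z‖^2 := hm0.trans_le hz
  have hpq : 0 < ‖p‖^2 * ‖q‖^2 := mul_pos hpp hqp
  have e : -Real.log (‖p‖^2) + -Real.log (‖q‖^2) - -Real.log (‖z‖^2)
      = Real.log (‖z‖^2 / (‖p‖^2 * ‖q‖^2)) := by
    rw [Real.log_div hzp.ne' hpq.ne', Real.log_mul hpp.ne' hqp.ne']; ring
  beta_reduce
  rw [e]
  refine (Real.log_le_sub_one_of_pos (by positivity)).trans ?_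
  have h5 : m0^2 ≤ ‖p‖^2 * ‖q‖^2 := by
    rw [sq]; exact mul_le_mul hp hm hm0.le hpp.le
  have h6 : ‖z‖^2 - ‖p‖^2 * ‖q‖^2 ≤ 2 * ‖p * q - z‖ := (le_abs_self _).trans hd
  rw [div_sub_one hpq.ne']
  calc (‖z‖^2 - ‖p‖^2 * ‖q‖^2) / (‖p‖^2 * ‖q‖^2) ≤ (2 * ‖p * q - z‖) / (‖p‖^2 * ‖q‖^2) := by
        gcongr
    _ ≤ (2 * ‖p * q - z‖) / m0^2 := by gcongr
    _ = _ := by ring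

lemma log_cont (Ψ : Measure E3) [IsProbabilityMeasure Ψ] {m0 r0 : ℝ} (hm0 : 0 < m0)
    (hR : ∀ ξ : E3, ‖ξ‖ ≤ r0 → m0 ≤ ‖charFn Ψ ξ‖^2) :
    ContinuousOn (fun ξ => - Real.log (‖charFn Ψ ξ‖^2)) (closedBall 0 r0) := by
  have := charFn_cont Ψ
  apply ContinuousOn.neg
  apply ContinuousOn.log (by fun_prop)
  intro x hx
  exact (hm0.trans_le (hR x (by simpa using hx))).ne'

/-- existence of nearly extremal points -/
lemma near_ext {φ : E3 → ℂ} (hCP : CPh φ) {f : E3 → ℝ} {C r0 : ℝ} (hf : Defect φ f C r0)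
    (hfc : ContinuousOn f (closedBall 0 r0)) (hr0 : 0 < r0) (hfn : ∀ ξ, ‖ξ‖ ≤ r0 → 0 ≤ f ξ)
    (hC : 0 ≤ C) :
    ∃ κ : ℝ, 0 ≤ κ ∧ (∀ ξ, ‖ξ‖ ≤ r0 → κ * ‖ξ‖^2 ≤ f ξ) ∧
      ∀ ε > 0, ∀ ρ > 0, ∃ ξ : E3, ξ ≠ 0 ∧ ‖ξ‖ ≤ ρ ∧ f ξ ≤ (κ + 3*ε) * ‖ξ‖^2 ∧
        ∃ L : E3 ≃ₗᵢ[ℝ] E3, ‖ξ‖ • L e0 = ξ ∧ ∃ ω : E3, ‖ω‖ = 1 ∧ 0 ≤ ω 0 ∧ 0 < Sf ω ∧ ∀ j : Fin 4,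
          f ((1/2:ℝ) • ξ - (‖ξ‖/2) • L (rotL ((j:ℕ) * (π/2)) ω)) ≤ (κ + 3*ε) * (Sf ω * ‖ξ‖^2) := by
  set A : Set ℝ := Set.image (fun ξ : E3 => f ξ / ‖ξ‖^2) {ξ | 0 < ‖ξ‖ ∧ ‖ξ‖ ≤ r0} with hA
  have hbdd : BddBelow A := by
    refine ⟨0, ?_⟩
    rintro _ ⟨ξ, hξ, rfl⟩
    have := hfn ξ hξ.2
    positivity
  have hne : A.Nonempty := ⟨_, r0 • e0, by
    rw [mem_ofPred_eq, norm_smul, norm_e0, mul_one, Real.norm_of_nonneg hr0.le]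
    exact ⟨hr0, le_rfl⟩, rfl⟩
  set κ := sInf A with hκ
  have hκ0 : 0 ≤ κ := by
    apply le_csInf hne
    rintro _ ⟨ξ, hξ, rfl⟩
    have := hfn ξ hξ.2
    positivity
  have hlow : ∀ ξ, ‖ξ‖ ≤ r0 → κ * ‖ξ‖^2 ≤ f ξ := by
    intro ξ hξ
    rcases (norm_nonneg ξ).eq_or_lt with h | h
    · rw [← h]; simpa using hfn ξ hξ
    · have : κ ≤ f ξ / ‖ξ‖^2 := csInf_le hbdd ⟨ξ, ⟨h, hξ⟩, rfl⟩
      rwa [le_div_iff₀ (by positivity)] at this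
  have C1 : ∀ ε > 0, ∀ ρ > 0, ∃ η : E3, 0 < ‖η‖ ∧ ‖η‖ ≤ ρ ∧ ‖η‖ ≤ r0 ∧
      f η < (κ + ε) * ‖η‖^2 := by
    intro ε hε ρ hρ
    by_contra hcon
    push Not at hcon
    have hK := MP2 hCP hf hfc (K := κ + ε) (s := min ρ r0) (by positivity) (fun η hη => by
      rcases (norm_nonneg η).eq_or_lt with h | h
      · rw [← h]; simpa using hfn η (hη.trans (min_le_right _ _))
      · exact hcon η h (hη.trans (min_le_left _ _)) (hη.trans (min_le_right _ _)))
    have : κ + ε ≤ κ := by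
      apply le_csInf hne
      rintro _ ⟨ξ, hξ, rfl⟩
      have h1 := hξ.1
      have := hK ξ hξ.2
      beta_reduce
      rw [le_div_iff₀ (by positivity)]; exact this
    linarith
  refine ⟨κ, hκ0, hlow, ?_⟩
  intro ε hε ρ hρ
  obtain ⟨η, hη0, hηρ, hηr, hη⟩ := C1 ε hε ρ hρ
  set a := ε * ‖η‖^2 with ha
  have hap : 0 < a := by positivity
  obtain ⟨s, hs0, hsη, hs⟩ : ∃ s : ℝ, 0 < s ∧ s ≤ ‖η‖ ∧ (κ + 2*ε) * s^2 ≤ a := by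
    have hk : 0 < κ + 2*ε := by positivity
    refine ⟨min ‖η‖ (√(a / (κ + 2*ε))), by positivity, min_le_left _ _, ?_⟩
    have : (min ‖η‖ (√(a / (κ + 2*ε))))^2 ≤ a / (κ + 2*ε) := by
      calc _ ≤ (√(a / (κ + 2*ε)))^2 := by gcongr; exact min_le_right _ _
        _ = _ := Real.sq_sqrt (by positivity)
    rw [le_div_iff₀ hk] at this
    linarith
  have hgc : ContinuousOn (fun ξ : E3 => (f ξ + a) / ‖ξ‖^2) {ξ | s ≤ ‖ξ‖ ∧ ‖ξ‖ ≤ ‖η‖} := by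
    apply ContinuousOn.div
    · apply ContinuousOn.add _ continuousOn_const
      exact hfc.mono (fun x hx => by simpa using hx.2.trans hηr)
    · fun_prop
    · intro x hx; have := hs0.trans_le hx.1; positivity
  obtain ⟨ξ, ⟨h1, h2⟩, hmin⟩ := exists_min_annulus hgc hsη le_rfl
  have hξp := hs0.trans_le h1
  set F := (f ξ + a) / ‖ξ‖^2 with hF
  have hFK : F < κ + 2*ε := by
    refine (hmin η hsη le_rfl).trans_lt ?_
    rw [div_lt_iff₀ (by positivity)]
    nlinarith
  have hF0 : F * ‖ξ‖^2 = f ξ + a := by rw [hF]; field_simp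
  have hall : ∀ ζ : E3, ‖ζ‖ ≤ ‖ξ‖ → F * ‖ζ‖^2 ≤ f ζ + a := by
    intro ζ hζ
    by_cases hζs : ‖ζ‖ ≤ s
    · have h3 := hfn ζ (hζ.trans (h2.trans hηr))
      have : F * ‖ζ‖^2 ≤ (κ + 2*ε) * s^2 := by gcongr
      linarith
    · push Not at hζs
      have hz := hs0.trans hζs
      have := hmin ζ hζs.le (hζ.trans h2)
      rwa [le_div_iff₀ (by positivity)] at this
  obtain ⟨L, hL⟩ := exists_iso ξ
  have hξ0 := norm_pos_iff.1 hξp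
  obtain ⟨ω, hω1, hω0, hj⟩ := hCP ξ hξ0 L hL (ε * ‖ξ‖^2 / (C+1)) (by positivity)
  obtain ⟨hS0, hS1⟩ := Sf_bounds hω1 hω0
  have hSp : 0 < Sf ω := by
    have h3 := (norm_nonneg _).trans_lt (hj 0)
    rcases hS0.eq_or_lt with h | h
    · rw [← h, mul_zero] at h3; exact absurd h3 (lt_irrefl _)
    · exact h
  refine ⟨ξ, hξ0, h2.trans hηρ, by nlinarith, L, hL, ω, hω1, hω0, hSp, ?_⟩
  intro j
  set ω' := rotL ((j:ℕ) * (π/2)) ω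
  have hω1' : ‖ω'‖ = 1 := by rw [LinearIsometryEquiv.norm_map]; exact hω1
  have hω0' : 0 ≤ ω' 0 := by rw [rotL_zero]; exact hω0
  have hS' : Sf ω' = Sf ω := Sf_rot _ _
  have hd := hf ξ (h2.trans hηr) L hL ω' hω1' hω0'
  have hp := hall _ (plus_le hL hω1' hω0')
  rw [plus_norm hL hω1', hS'] at hp
  have hg : C * ‖Gf φ ξ (L ω')‖ ≤ ε * ‖ξ‖^2 * Sf ω := by
    calc C * ‖Gf φ ξ (L ω')‖ ≤ (C+1) * ‖Gf φ ξ (L ω')‖ := by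
          nlinarith [norm_nonneg (Gf φ ξ (L ω'))]
      _ ≤ (C+1) * (ε * ‖ξ‖^2 / (C+1) * Sf ω) := by gcongr; exact (hj j).le
      _ = _ := by field_simp
  have : F * (Sf ω * ‖ξ‖^2) ≤ (κ + 2*ε) * (Sf ω * ‖ξ‖^2) := by gcongr
  nlinarith

/-! ### Second moments -/

lemma cos_lower {z ε : ℝ} (hε : ε ≤ 1) (hz : z^2 ≤ ε) : (1 - ε) * (z^2/2) ≤ 1 - cos z := by
  have hz1 : |z| ≤ 1 := by
    rw [← sq_le_one_iff_abs_le_one]; linarith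
  have h := (abs_le.1 (Real.cos_bound hz1)).2
  have : |z|^4 = z^2 * z^2 := by
    rw [show |z|^4 = (|z|^2)^2 by ring, sq_abs]; ring
  rw [this] at h
  nlinarith [sq_nonneg z, mul_le_mul_of_nonneg_left hz (sq_nonneg z)]

lemma one_sub_cos_le (z : ℝ) : 1 - cos z ≤ z^2/2 := by
  have := Real.one_sub_sq_div_two_le_cos (x := z); linarith

/-- truncated second moment in a direction -/
def M2 (Θ : Measure E3) (a : E3) : ℝ := ∫ V, (1/2) * ⟪V, a⟫^2 ∂Θ

/-- total second moment -/
def T2 (Θ : Measure E3) : ℝ := ∫ V, (1/2) * ‖V‖^2 ∂Θ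

lemma trunc_int (Θ : Measure E3) [IsFiniteMeasure Θ] (M : ℝ) :
    Integrable (fun V => (1/2) * ‖V‖^2) (Θ.restrict (closedBall 0 M)) := by
  refine Integrable.mono' (integrable_const ((1/2) * M^2)) (by fun_prop) ?_
  filter_upwards [ae_restrict_mem measurableSet_closedBall] with V hV
  rw [mem_closedBall_zero_iff] at hV
  rw [Real.norm_of_nonneg (by positivity)]
  gcongr

lemma inner_int {Θ : Measure E3} (h : Integrable (fun V : E3 => (1/2) * ‖V‖^2) Θ) (a : E3) :
    Integrable (fun V => (1/2) * ⟪V, a⟫^2) Θ := by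
  refine Integrable.mono' (h.mul_const (‖a‖^2)) (by fun_prop) ?_
  filter_upwards with V
  rw [Real.norm_of_nonneg (by positivity), mul_assoc, ← mul_pow]
  gcongr (1/2) * ?_
  rw [← sq_abs]
  gcongr
  exact abs_real_inner_le_norm _ _

lemma trunc_q (Θ : Measure E3) [IsFiniteMeasure Θ] {M ε : ℝ} (hε : ε ≤ 1) {u : E3}
    (hu : (M * ‖u‖)^2 ≤ ε) : (1 - ε) * M2 (Θ.restrict (closedBall 0 M)) u ≤ qf Θ u := by
  unfold qf M2
  rw [← integral_const_mul]
  refine le_trans ?_ (setIntegral_le_integral (s := closedBall 0 M) (qf_integrable Θ u)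
    (ae_of_all _ fun V => by simp [cos_le_one]))
  apply integral_mono_ae ((inner_int (trunc_int Θ M) u).const_mul _) (qf_integrable Θ u).integrableOn
  filter_upwards [ae_restrict_mem measurableSet_closedBall] with V hV
  rw [mem_closedBall_zero_iff] at hV
  have h : ⟪V, u⟫^2 ≤ ε := by
    refine le_trans ?_ hu
    rw [← sq_abs]
    gcongr
    exact (abs_real_inner_le_norm _ _).trans (by gcongr)
  have := cos_lower hε h
  linarith

lemma sum_rot {ξ : E3} {L : E3 ≃ₗᵢ[ℝ] E3} (hL : ‖ξ‖ • L e0 = ξ) {ω : E3} (h1 : ‖ω‖ = 1) (V : E3) :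
    ∑ j : Fin 4, ⟪V, (1/2:ℝ) • ξ - (‖ξ‖/2) • L (rotL ((j:ℕ) * (π/2)) ω)⟫^2
      = ‖ξ‖^2 * (4 * Sf ω^2 * ⟪V, L e0⟫^2 + 2 * (Sf ω * (1 - Sf ω)) * (‖V‖^2 - ⟪V, L e0⟫^2)) := by
  have hV : ∀ x : E3, ⟪V, L x⟫ = (L.symm V) 0 * x 0 + (L.symm V) 1 * x 1 + (L.symm V) 2 * x 2 := by
    intro x
    have : ⟪V, L x⟫ = ⟪L.symm V, x⟫ := by
      rw [← L.inner_map_map (L.symm V) x, LinearIsometryEquiv.apply_symm_apply]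
    rw [this, PiLp.inner_apply, Fin.sum_univ_three]
    simp only [RCLike.inner_apply, conj_trivial]
    ring
  have hn : ‖V‖^2 = (L.symm V) 0^2 + (L.symm V) 1 ^2 + (L.symm V) 2 ^2 := by
    rw [← norm_sq_coord, LinearIsometryEquiv.norm_map]
  have hξ : ⟪V, ξ⟫ = ‖ξ‖ * (L.symm V) 0 := by
    nth_rewrite 1 [← hL]
    rw [inner_smul_right, hV, e0_zero, e0_one, e0_two]; ring
  have ho := norm_sq_coord ω
  rw [h1] at ho
  have c3 : cos (3 * (π/2)) = 0 := by
    rw [show 3 * (π/2) = π/2 + π by ring, cos_add_pi, cos_pi_div_two, neg_zero]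
  have s3 : sin (3 * (π/2)) = -1 := by
    rw [show 3 * (π/2) = π/2 + π by ring, sin_add_pi, sin_pi_div_two]
  have c2 : cos (2 * (π/2)) = -1 := by
    rw [show 2 * (π/2) = π by ring, cos_pi]
  have s2 : sin (2 * (π/2)) = 0 := by
    rw [show 2 * (π/2) = π by ring, sin_pi]
  rw [Fin.sum_univ_four, hn]
  simp only [inner_sub_right, inner_smul_right, hξ, hV, rotL_zero, rotL_one, rotL_two, e0_zero,
    e0_one, e0_two, Fin.val_zero, Fin.val_one, Fin.val_two, Nat.cast_zero, Nat.cast_one,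
    show ((3:Fin 4):ℕ) = 3 from rfl, Nat.cast_ofNat, zero_mul, one_mul, c3, s3, c2, s2,
    cos_zero, sin_zero, cos_pi_div_two, sin_pi_div_two]
  unfold Sf
  have : ω 2 ^2 = 1 - ω 0^2 - ω 1^2 := by linarith
  ring_nf
  simp only [this]
  ring

/-- the extremal property in terms of the symmetrised law -/
def ExtP (Θ : Measure E3) (κ : ℝ) : Prop :=
  ∀ ε > 0, ∀ ρ > 0, ∃ ξ : E3, ξ ≠ 0 ∧ ‖ξ‖ ≤ ρ ∧ qf Θ ξ ≤ (κ + 3*ε) * ‖ξ‖^2 ∧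
    ∃ L : E3 ≃ₗᵢ[ℝ] E3, ‖ξ‖ • L e0 = ξ ∧ ∃ ω : E3, ‖ω‖ = 1 ∧ 0 ≤ ω 0 ∧ 0 < Sf ω ∧ ∀ j : Fin 4,
      qf Θ ((1/2:ℝ) • ξ - (‖ξ‖/2) • L (rotL ((j:ℕ) * (π/2)) ω)) ≤ (κ + 3*ε) * (Sf ω * ‖ξ‖^2)

lemma ext_trunc (Θ : Measure E3) [IsFiniteMeasure Θ] {κ : ℝ} (hE : ExtP Θ κ) {M ε : ℝ} (hM : 0 < M)
    (hε : 0 < ε) (hε1 : ε ≤ 1) : ∃ a : E3, ‖a‖ = 1 ∧ ∃ S : ℝ, 0 < S ∧ S ≤ 1/2 ∧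
      (1 - ε) * M2 (Θ.restrict (closedBall 0 M)) a ≤ κ + 3*ε ∧
      (1 - ε) * (4 * S * M2 (Θ.restrict (closedBall 0 M)) a + 2 * (1 - S) *
        (T2 (Θ.restrict (closedBall 0 M)) - M2 (Θ.restrict (closedBall 0 M)) a)) ≤ 4 * (κ + 3*ε) := by
  obtain ⟨ξ, hξ, hξρ, hq, L, hL, ω, h1, h0, hS, hj⟩ := hE ε hε (√ε / M) (by positivity)
  have hr : 0 < ‖ξ‖ := norm_pos_iff.2 hξ
  have hr2 : 0 < ‖ξ‖^2 := by positivity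
  have hu : ∀ u : E3, ‖u‖ ≤ ‖ξ‖ → (M * ‖u‖)^2 ≤ ε := by
    intro u hu
    have : M * ‖u‖ ≤ √ε := by
      have := hu.trans hξρ
      rw [le_div_iff₀ hM] at this; linarith
    calc (M * ‖u‖)^2 ≤ (√ε)^2 := by gcongr
      _ = ε := Real.sq_sqrt hε.le
  have hi := trunc_int Θ M
  set Θ' := Θ.restrict (closedBall 0 M) with hΘ'
  refine ⟨L e0, by rw [L.norm_map, norm_e0], Sf ω, hS, (Sf_bounds h1 h0).2, ?_, ?_⟩
  · have h := (trunc_q Θ hε1 (hu ξ le_rfl)).trans hq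
    have e : M2 Θ' ξ = ‖ξ‖^2 * M2 Θ' (L e0) := by
      unfold M2
      rw [← integral_const_mul]
      congr 1; ext V
      nth_rewrite 1 [← hL]
      rw [inner_smul_right]; ring
    rw [← hΘ', e] at h
    nlinarith
  · have hs : ∑ j : Fin 4, (1 - ε) * M2 Θ' ((1/2:ℝ) • ξ - (‖ξ‖/2) • L (rotL ((j:ℕ) * (π/2)) ω))
        ≤ ∑ j : Fin 4, (κ + 3*ε) * (Sf ω * ‖ξ‖^2) := by
      apply Finset.sum_le_sum
      intro j _
      refine (trunc_q Θ hε1 (hu _ ?_)).trans (hj j)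
      apply minus_le hL
      · rw [LinearIsometryEquiv.norm_map]; exact h1
      · rw [rotL_zero]; exact h0
    have e : ∑ j : Fin 4, M2 Θ' ((1/2:ℝ) • ξ - (‖ξ‖/2) • L (rotL ((j:ℕ) * (π/2)) ω))
        = Sf ω * ‖ξ‖^2 * (4 * Sf ω * M2 Θ' (L e0) + 2 * (1 - Sf ω) * (T2 Θ' - M2 Θ' (L e0))) := by
      unfold M2 T2
      have hi2 : Integrable (fun V => (1/2) * ‖V‖^2 - (1/2) * ⟪V, L e0⟫^2) Θ' :=
        hi.sub (inner_int hi _)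
      rw [← integral_finsetSum _ (fun j _ => inner_int hi _),
        ← integral_sub hi (inner_int hi _), ← integral_const_mul, ← integral_const_mul,
        ← integral_add ((inner_int hi _).const_mul _) (hi2.const_mul _),
        ← integral_const_mul]
      congr 1; ext V
      rw [← Finset.mul_sum, sum_rot hL h1]
      ring
    rw [← Finset.mul_sum, e] at hs
    simp only [Finset.sum_const, Finset.card_univ, Fintype.card_fin] at hs
    have hp : 0 < Sf ω * ‖ξ‖^2 := by positivity
    refine le_of_mul_le_mul_left ?_ hp
    simp only [nsmul_eq_mul, Nat.cast_ofNat] at hs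
    linarith

lemma M2_nonneg (Θ : Measure E3) (a : E3) : 0 ≤ M2 Θ a := integral_nonneg fun V => by positivity

lemma second_int (Θ : Measure E3) [IsFiniteMeasure Θ] {κ : ℝ} (hE : ExtP Θ κ) :
    Integrable (fun V : E3 => (1/2) * ‖V‖^2) Θ := by
  have hcov : AECover Θ atTop (fun n : ℕ => closedBall (0:E3) ((n:ℝ)+1)) :=
    aecover_closedBall (tendsto_atTop_add_const_right _ _ tendsto_natCast_atTop_atTop)
  refine hcov.integrable_of_integral_norm_bounded (10*κ+15) (fun n => trunc_int Θ _) ?_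
  filter_upwards with n
  obtain ⟨a, ha, S, hS, hS1, h1, h2⟩ := ext_trunc Θ hE (M := (n:ℝ)+1) (ε := 1/2)
    (by positivity) (by norm_num) (by norm_num)
  have h3 := M2_nonneg (Θ.restrict (closedBall 0 ((n:ℝ)+1))) a
  have : ∫ V in closedBall (0:E3) ((n:ℝ)+1), ‖(1/2) * ‖V‖^2‖ ∂Θ
      = T2 (Θ.restrict (closedBall 0 ((n:ℝ)+1))) := by
    unfold T2; congr 1; ext V; rw [Real.norm_of_nonneg (by positivity)]
  rw [this]
  have hAT : M2 (Θ.restrict (closedBall 0 ((n:ℝ)+1))) a ≤ T2 (Θ.restrict (closedBall 0 ((n:ℝ)+1))) := by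
    have hi := trunc_int Θ ((n:ℝ)+1)
    apply integral_mono (inner_int hi a) hi
    intro V
    have : |⟪V, a⟫| ≤ ‖V‖ := by simpa [ha] using abs_real_inner_le_norm V a
    beta_reduce
    rw [← sq_abs]
    gcongr
  nlinarith

lemma M2_lower (Θ : Measure E3) [IsFiniteMeasure Θ] {κ r0 : ℝ} (hr0 : 0 < r0)
    (hlow : ∀ ξ : E3, ‖ξ‖ ≤ r0 → 1 - exp (-(κ * ‖ξ‖^2)) ≤ qf Θ ξ)
    (hi : Integrable (fun V : E3 => (1/2) * ‖V‖^2) Θ) {a : E3} (ha : ‖a‖ = 1) : κ ≤ M2 Θ a := by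
  have key : ∀ t : ℝ, 0 < t → t ≤ r0 → (1 - exp (-(κ * t^2))) / t^2 ≤ M2 Θ a := by
    intro t ht htr
    have h1 := hlow (t • a) (by rw [norm_smul, ha, Real.norm_of_nonneg ht.le]; linarith)
    rw [norm_smul, ha, Real.norm_of_nonneg ht.le, mul_one] at h1
    rw [div_le_iff₀ (by positivity)]
    refine h1.trans ?_
    unfold qf M2
    rw [mul_comm, ← integral_const_mul]
    apply integral_mono (qf_integrable _ _) ((inner_int hi a).const_mul _)
    intro V
    beta_reduce
    refine (one_sub_cos_le _).trans (le_of_eq ?_)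
    rw [inner_smul_right]; ring
  have hder : HasDerivAt (fun y : ℝ => 1 - exp (-(κ * y))) κ 0 := by
    have h2 : HasDerivAt (fun y : ℝ => -(κ * y)) (-κ) 0 := by
      have := ((hasDerivAt_id (0:ℝ)).const_mul κ).fun_neg
      simpa using this
    simpa using (h2.exp).const_sub 1
  have hs := hder.tendsto_slope_zero_right
  have ht : Tendsto (fun t : ℝ => t^2) (𝓝[>] 0) (𝓝[>] 0) := by
    apply tendsto_nhdsWithin_of_tendsto_nhds_of_eventually_within
    · have : Tendsto (fun t : ℝ => t^2) (𝓝 0) (𝓝 (0^2)) := (continuous_pow 2).tendsto 0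
      rw [zero_pow two_ne_zero] at this
      exact this.mono_left nhdsWithin_le_nhds
    · filter_upwards [self_mem_nhdsWithin] with t ht
      exact pow_pos (mem_Ioi.1 ht) 2
  have hs2 := hs.comp ht
  refine le_of_tendsto hs2 ?_
  filter_upwards [Ioc_mem_nhdsGT hr0] with t ht
  have := key t ht.1 ht.2
  simp only [Function.comp_apply, zero_add, mul_zero, neg_zero, exp_zero, sub_self, sub_zero,
    smul_eq_mul]
  rw [inv_mul_eq_div]; exact this

lemma T2_split {Θ : Measure E3} (hi : Integrable (fun V : E3 => (1/2) * ‖V‖^2) Θ)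
    (L : E3 ≃ₗᵢ[ℝ] E3) : T2 Θ = M2 Θ (L (EuclideanSpace.single 0 1)) +
      M2 Θ (L (EuclideanSpace.single 1 1)) + M2 Θ (L (EuclideanSpace.single 2 1)) := by
  unfold T2 M2
  have h12 := (inner_int hi (L (EuclideanSpace.single 0 1))).fun_add
    (inner_int hi (L (EuclideanSpace.single 1 1)))
  rw [← integral_add (inner_int hi _) (inner_int hi _), ← integral_add h12 (inner_int hi _)]
  congr 1; ext V
  have hV : ∀ x : E3, ⟪V, L x⟫ = ⟪L.symm V, x⟫ := by
    intro x
    rw [← L.inner_map_map (L.symm V) x, LinearIsometryEquiv.apply_symm_apply]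
  have hn : ‖V‖^2 = (L.symm V) 0^2 + (L.symm V) 1 ^2 + (L.symm V) 2 ^2 := by
    rw [← norm_sq_coord, LinearIsometryEquiv.norm_map]
  rw [hn, hV, hV, hV]
  simp [EuclideanSpace.inner_single_right]
  ring

lemma second_moment (Θ : Measure E3) [IsFiniteMeasure Θ] {κ r0 : ℝ} (hr0 : 0 < r0)
    (hlow : ∀ ξ : E3, ‖ξ‖ ≤ r0 → 1 - exp (-(κ * ‖ξ‖^2)) ≤ qf Θ ξ) (hE : ExtP Θ κ)
    {a : E3} (ha : ‖a‖ = 1) : M2 Θ a = κ := by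
  have hi := second_int Θ hE
  have hM2 := fun a (ha : ‖a‖ = 1) => M2_lower Θ hr0 hlow hi ha
  have hT : T2 Θ ≤ 3 * κ := by
    have hcov : AECover Θ atTop (fun n : ℕ => closedBall (0:E3) ((n:ℝ)+1)) :=
      aecover_closedBall (tendsto_atTop_add_const_right _ _ tendsto_natCast_atTop_atTop)
    have hlim := hcov.integral_tendsto_of_countably_generated hi
    have hn : ∀ n : ℕ, T2 Θ ≤ 3*κ + 3 * (T2 Θ - ∫ V in closedBall (0:E3) ((n:ℝ)+1), (1/2) * ‖V‖^2 ∂Θ) := by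
      intro n
      set B := closedBall (0:E3) ((n:ℝ)+1) with hB
      change T2 Θ ≤ 3*κ + 3 * (T2 Θ - T2 (Θ.restrict B))
      have hcomp : ∀ a : E3, ‖a‖ = 1 → κ - (T2 Θ - T2 (Θ.restrict B)) ≤ M2 (Θ.restrict B) a := by
        intro a ha
        have h1 : T2 Θ = T2 (Θ.restrict B) + T2 (Θ.restrict Bᶜ) :=
          (integral_add_compl measurableSet_closedBall hi).symm
        have h2 : M2 Θ a = M2 (Θ.restrict B) a + M2 (Θ.restrict Bᶜ) a :=
          (integral_add_compl measurableSet_closedBall (inner_int hi a)).symm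
        have h3 : M2 (Θ.restrict Bᶜ) a ≤ T2 (Θ.restrict Bᶜ) := by
          apply integral_mono (inner_int hi.restrict a) hi.restrict
          intro V
          have : |⟪V, a⟫| ≤ ‖V‖ := by simpa [ha] using abs_real_inner_le_norm V a
          beta_reduce
          rw [← sq_abs]
          gcongr
        have := hM2 a ha
        linarith
      set δ := T2 Θ - T2 (Θ.restrict B) with hδ
      have hεb : ∀ ε : ℝ, 0 < ε → ε ≤ 1/2 →
          T2 (Θ.restrict B) ≤ 3 * ((κ + 3*ε)/(1-ε)) + 2 * ((κ + 3*ε)/(1-ε) - κ + δ) := by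
        intro ε hε hε1
        obtain ⟨a, ha, S, hS, hS1, h1, h2⟩ := ext_trunc Θ hE (M := (n:ℝ)+1) (ε := ε)
          (by positivity) hε (by linarith)
        rw [← hB] at h1 h2
        have hc := hcomp a ha
        set A := M2 (Θ.restrict B) a
        set T := T2 (Θ.restrict B)
        have hp : 0 < 1 - ε := by linarith
        have h1' : A ≤ (κ + 3*ε)/(1-ε) := by rw [le_div_iff₀ hp]; linarith
        have h2' : 4*S*A + 2*(1-S)*(T-A) ≤ 4 * ((κ + 3*ε)/(1-ε)) := by
          rw [← mul_div_assoc, le_div_iff₀ hp]; linarith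
        set k := (κ + 3*ε)/(1-ε)
        have hx : 0 ≤ k - κ + δ := by linarith
        have h4 : (1-S) * (T - A) ≤ (1-S) * (2*k + 2*(k-κ+δ)) := by nlinarith
        have h5 := le_of_mul_le_mul_left h4 (by linarith)
        linarith
      have hlim2 : Tendsto (fun ε : ℝ => 3 * ((κ + 3*ε)/(1-ε)) + 2 * ((κ + 3*ε)/(1-ε) - κ + δ))
          (𝓝[>] 0) (𝓝 (3 * ((κ + 3*0)/(1-0)) + 2 * ((κ + 3*0)/(1-0) - κ + δ))) := by
        apply Tendsto.mono_left _ nhdsWithin_le_nhds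
        have : ContinuousAt (fun ε : ℝ => (κ + 3*ε)/(1-ε)) 0 :=
          ContinuousAt.div (by fun_prop) (by fun_prop) (by norm_num)
        have h6 : ContinuousAt (fun ε : ℝ => 3 * ((κ + 3*ε)/(1-ε)) + 2 * ((κ + 3*ε)/(1-ε) - κ + δ)) 0 := by
          fun_prop
        exact h6
      have := ge_of_tendsto hlim2 (by
        filter_upwards [Ioc_mem_nhdsGT (show (0:ℝ) < 1/2 by norm_num)] with ε hε
        exact hεb ε hε.1 hε.2)
      simp at this
      linarith
    have hlim3 : Tendsto (fun n : ℕ => 3*κ + 3 * (T2 Θ - ∫ V in closedBall (0:E3) ((n:ℝ)+1), (1/2) * ‖V‖^2 ∂Θ))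
        atTop (𝓝 (3*κ + 3 * (T2 Θ - T2 Θ))) := ((hlim.const_sub _).const_mul 3).const_add _
    have := ge_of_tendsto' hlim3 hn
    linarith
  have hs := T2_split hi (RotL a)
  have e : (EuclideanSpace.single 0 1 : E3) = e0 := rfl
  rw [e, RotL_e0 ha] at hs
  have h1 := hM2 (RotL a (EuclideanSpace.single 1 1)) (by simp)
  have h2 := hM2 (RotL a (EuclideanSpace.single 2 1)) (by simp)
  have h3 := hM2 a ha
  linarith

/-! ### Identification of Gaussians -/

lemma ex_taylor (y : ℝ) :
    ‖ex y - 1 + Complex.I * y + ((y^2/2 : ℝ) : ℂ)‖ ≤ 4 * (y^2 * min 1 |y|) := by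
  have hn : ‖-(Complex.I * (y:ℂ))‖ = |y| := by simp
  by_cases hy : |y| ≤ 1
  · have h := Complex.exp_bound (x := -(Complex.I * (y:ℂ))) (by rw [hn]; exact hy) (n := 3)
      (by norm_num)
    rw [hn] at h
    have e : Complex.exp (-(Complex.I * (y:ℂ))) -
        ∑ m ∈ Finset.range 3, (-(Complex.I * (y:ℂ)))^m / (m.factorial : ℂ)
        = ex y - 1 + Complex.I * y + ((y^2/2 : ℝ) : ℂ) := by
      simp only [Finset.sum_range_succ, Finset.sum_range_zero, ex]
      push_cast
      simp [Nat.factorial, mul_pow]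
      ring
    rw [e] at h
    refine h.trans ?_
    rw [min_eq_right hy]
    have h3 : |y|^3 = y^2 * |y| := by rw [show |y|^3 = |y|^2 * |y| by ring, sq_abs]
    rw [h3]
    have : 0 ≤ y^2 * |y| := by positivity
    norm_num [Nat.factorial]
    nlinarith
  · push Not at hy
    rw [min_eq_left hy.le]
    have h1 : 1 ≤ |y|^2 := by nlinarith
    rw [← sq_abs] at *
    calc ‖ex y - 1 + Complex.I * y + (((|y|)^2/2 : ℝ) : ℂ)‖
        ≤ ‖ex y‖ + ‖(1:ℂ)‖ + ‖Complex.I * (y:ℂ)‖ + ‖((|y|^2/2 : ℝ) : ℂ)‖ := by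
          refine (norm_add_le _ _).trans ?_
          gcongr
          refine (norm_add_le _ _).trans ?_
          gcongr
          exact norm_sub_le _ _
      _ = 1 + 1 + |y| + |y|^2/2 := by
          rw [norm_ex, Complex.norm_real, Real.norm_of_nonneg (by positivity)]; simp
      _ ≤ _ := by nlinarith

section
variable (Ψ : Measure E3) [IsProbabilityMeasure Ψ]

lemma sq_int (h : Integrable (fun V : E3 => (1/2) * ‖V‖^2) (Th Ψ)) :
    Integrable (fun v : E3 => ‖v‖^2) Ψ := by
  unfold Th at h
  rw [integrable_map_measure (by fun_prop) (by fun_prop)] at h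
  obtain ⟨v', hv'⟩ := h.prod_left_ae.exists
  simp only [Function.comp_apply] at hv'
  refine Integrable.mono' ((hv'.const_mul 4).add (integrable_const (2 * ‖v'‖^2))) (by fun_prop) ?_
  filter_upwards with v
  rw [Real.norm_of_nonneg (by positivity)]
  have : ‖v‖ ≤ ‖v - v'‖ + ‖v'‖ := by
    simpa using norm_add_le (v - v') v'
  simp only [Pi.add_apply]
  nlinarith [norm_nonneg v, sq_nonneg (‖v - v'‖ - ‖v'‖)]

lemma id_int (h : Integrable (fun v : E3 => ‖v‖^2) Ψ) : Integrable (fun v : E3 => v) Ψ := by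
  refine Integrable.mono' (h.add (integrable_const 1)) (by fun_prop) ?_
  filter_upwards with v
  simp only [Pi.add_apply]
  nlinarith [sq_nonneg (‖v‖ - 1)]

/-- mean -/
def mn : E3 := ∫ v, v ∂Ψ

lemma ctr_int (h : Integrable (fun v : E3 => ‖v‖^2) Ψ) :
    Integrable (fun v : E3 => ‖v - mn Ψ‖^2) Ψ := by
  refine Integrable.mono' ((h.const_mul 2).add (integrable_const (2 * ‖mn Ψ‖^2))) (by fun_prop) ?_
  filter_upwards with v
  rw [Real.norm_of_nonneg (by positivity)]
  have := norm_sub_le v (mn Ψ)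
  simp only [Pi.add_apply]
  nlinarith [norm_nonneg (v - mn Ψ), sq_nonneg (‖v‖ - ‖mn Ψ‖)]

lemma ctr_sq_int (h : Integrable (fun v : E3 => ‖v‖^2) Ψ) (a : E3) :
    Integrable (fun v : E3 => ⟪v - mn Ψ, a⟫^2) Ψ := by
  refine Integrable.mono' ((ctr_int Ψ h).mul_const (‖a‖^2)) (by fun_prop) ?_
  filter_upwards with v
  rw [Real.norm_of_nonneg (by positivity), ← mul_pow, ← sq_abs]
  gcongr
  exact abs_real_inner_le_norm _ _

lemma ctr_lin_int (h : Integrable (fun v : E3 => ‖v‖^2) Ψ) (a : E3) :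
    Integrable (fun v : E3 => ⟪v - mn Ψ, a⟫) Ψ :=
  ((id_int Ψ h).sub (integrable_const _)).inner_const a

lemma ctr_zero (h : Integrable (fun v : E3 => ‖v‖^2) Ψ) (a : E3) :
    ∫ v, ⟪v - mn Ψ, a⟫ ∂Ψ = 0 := by
  have h1 : Integrable (fun v : E3 => v - mn Ψ) Ψ := (id_int Ψ h).sub (integrable_const _)
  have h2 := integral_inner (𝕜 := ℝ) h1 a
  have h3 : ∀ v, ⟪v - mn Ψ, a⟫ = ⟪a, v - mn Ψ⟫ := fun v => real_inner_comm _ _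
  simp_rw [h3]
  rw [h2, integral_sub (id_int Ψ h) (integrable_const _)]
  simp [mn]

lemma ctr_var (h : Integrable (fun v : E3 => ‖v‖^2) Ψ) (a : E3) :
    ∫ v, ⟪v - mn Ψ, a⟫^2 ∂Ψ = M2 (Th Ψ) a := by
  unfold M2 Th
  rw [integral_map (by fun_prop) (by fun_prop)]
  have hX := ctr_lin_int Ψ h a
  have hX2 := ctr_sq_int Ψ h a
  have e : ∀ p : E3 × E3, (1/2) * ⟪p.1 - p.2, a⟫^2 = (1/2) * ⟪p.1 - mn Ψ, a⟫^2 +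
      (1/2) * ⟪p.2 - mn Ψ, a⟫^2 - ⟪p.1 - mn Ψ, a⟫ * ⟪p.2 - mn Ψ, a⟫ := by
    intro p
    have : ⟪p.1 - p.2, a⟫ = ⟪p.1 - mn Ψ, a⟫ - ⟪p.2 - mn Ψ, a⟫ := by
      rw [← inner_sub_left]; congr 1; abel
    rw [this]; ring
  simp_rw [e]
  have i1 : Integrable (fun p : E3 × E3 => (1/2) * ⟪p.1 - mn Ψ, a⟫^2) (Ψ.prod Ψ) :=
    (hX2.comp_fst Ψ).const_mul _
  have i2 : Integrable (fun p : E3 × E3 => (1/2) * ⟪p.2 - mn Ψ, a⟫^2) (Ψ.prod Ψ) :=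
    (hX2.comp_snd Ψ).const_mul _
  have i12 : Integrable (fun p : E3 × E3 => (1/2) * ⟪p.1 - mn Ψ, a⟫^2 +
      (1/2) * ⟪p.2 - mn Ψ, a⟫^2) (Ψ.prod Ψ) := i1.add i2
  rw [integral_sub i12 (hX.mul_prod hX), integral_add i1 i2, integral_const_mul,
    integral_const_mul, integral_prod_mul (fun v => ⟪v - mn Ψ, a⟫) (fun v => ⟪v - mn Ψ, a⟫),
    ctr_zero Ψ h, integral_fun_fst (fun v => ⟪v - mn Ψ, a⟫^2),
    integral_fun_snd (fun v => ⟪v - mn Ψ, a⟫^2)]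
  simp
  ring

/-- centred characteristic function -/
lemma ctr_char (ξ : E3) : charFn Ψ ξ * ex (-⟪mn Ψ, ξ⟫) = ∫ v, ex ⟪v - mn Ψ, ξ⟫ ∂Ψ := by
  rw [charFn_eq, ← integral_mul_const]
  congr 1; ext v
  rw [← ex_add, inner_sub_left, sub_eq_add_neg]

lemma taylor_int (h : Integrable (fun v : E3 => ‖v‖^2) Ψ) (ξ : E3) :
    ‖charFn Ψ ξ * ex (-⟪mn Ψ, ξ⟫) - 1 + ((M2 (Th Ψ) ξ / 2 : ℝ) : ℂ)‖
      ≤ 4 * ‖ξ‖^2 * ∫ v, ‖v - mn Ψ‖^2 * min 1 (‖ξ‖ * ‖v - mn Ψ‖) ∂Ψ := by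
  have hX := ctr_lin_int Ψ h ξ
  have hX2 := ctr_sq_int Ψ h ξ
  have hexi : Integrable (fun v => ex ⟪v - mn Ψ, ξ⟫) Ψ := ex_inner_integrable Ψ (by fun_prop)
  have hexi1 : Integrable (fun v => ex ⟪v - mn Ψ, ξ⟫ - 1) Ψ := hexi.sub (integrable_const _)
  have hXc : Integrable (fun v => Complex.I * ((⟪v - mn Ψ, ξ⟫ : ℝ) : ℂ)) Ψ := hX.ofReal.const_mul _
  have hexi2 : Integrable (fun v => ex ⟪v - mn Ψ, ξ⟫ - 1 + Complex.I * ((⟪v - mn Ψ, ξ⟫ : ℝ) : ℂ)) Ψ :=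
    hexi1.add hXc
  have hX2c : Integrable (fun v => ((⟪v - mn Ψ, ξ⟫^2/2 : ℝ) : ℂ)) Ψ := (hX2.div_const 2).ofReal
  have e : charFn Ψ ξ * ex (-⟪mn Ψ, ξ⟫) - 1 + ((M2 (Th Ψ) ξ / 2 : ℝ) : ℂ)
      = ∫ v, (ex ⟪v - mn Ψ, ξ⟫ - 1 + Complex.I * ((⟪v - mn Ψ, ξ⟫ : ℝ) : ℂ) +
          ((⟪v - mn Ψ, ξ⟫^2/2 : ℝ) : ℂ)) ∂Ψ := by
    rw [integral_add hexi2 hX2c, integral_add hexi1 hXc, integral_sub hexi (integrable_const _),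
      ctr_char, integral_const_mul, integral_complex_ofReal, integral_complex_ofReal, ctr_zero Ψ h,
      integral_div, ctr_var Ψ h]
    simp
  rw [e, ← integral_const_mul]
  apply norm_integral_le_of_norm_le
  · have : Integrable (fun v => ‖v - mn Ψ‖^2 * min 1 (‖ξ‖ * ‖v - mn Ψ‖)) Ψ := by
      refine Integrable.mono' (ctr_int Ψ h) (by fun_prop) ?_
      filter_upwards with v
      rw [Real.norm_of_nonneg (by positivity)]
      exact mul_le_of_le_one_right (by positivity) (min_le_left _ _)
    exact this.const_mul _
  · filter_upwards with v
    refine (ex_taylor _).trans ?_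
    have h1 : |⟪v - mn Ψ, ξ⟫| ≤ ‖ξ‖ * ‖v - mn Ψ‖ := by
      rw [mul_comm]; exact abs_real_inner_le_norm _ _
    have h2 : ⟪v - mn Ψ, ξ⟫^2 ≤ ‖ξ‖^2 * ‖v - mn Ψ‖^2 := by
      rw [← sq_abs, ← mul_pow]; gcongr
    calc _ ≤ 4 * ((‖ξ‖^2 * ‖v - mn Ψ‖^2) * min 1 (‖ξ‖ * ‖v - mn Ψ‖)) := by gcongr
      _ = _ := by ring

lemma taylor_lim (h : Integrable (fun v : E3 => ‖v‖^2) Ψ) :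
    Tendsto (fun r : ℝ => ∫ v, ‖v - mn Ψ‖^2 * min 1 (r * ‖v - mn Ψ‖) ∂Ψ) (𝓝[>] 0) (𝓝 0) := by
  have : Tendsto (fun r : ℝ => ∫ v, ‖v - mn Ψ‖^2 * min 1 (r * ‖v - mn Ψ‖) ∂Ψ) (𝓝[>] 0)
      (𝓝 (∫ v, (0:ℝ) ∂Ψ)) := by
    apply tendsto_integral_filter_of_dominated_convergence (fun v => ‖v - mn Ψ‖^2)
    · filter_upwards with r; fun_prop
    · filter_upwards [self_mem_nhdsWithin] with r hr
      have hr : 0 < r := hr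
      filter_upwards with v
      rw [Real.norm_of_nonneg (by positivity)]
      exact mul_le_of_le_one_right (by positivity) (min_le_left _ _)
    · exact ctr_int Ψ h
    · filter_upwards with v
      have : ContinuousAt (fun r : ℝ => ‖v - mn Ψ‖^2 * min 1 (r * ‖v - mn Ψ‖)) 0 := by fun_prop
      have h2 := this.tendsto
      simp only [zero_mul] at h2
      rw [min_eq_right zero_le_one, mul_zero] at h2
      exact h2.mono_left nhdsWithin_le_nhds
  simpa using this
end

lemma M2_smul (Θ : Measure E3) (c : ℝ) (a : E3) : M2 Θ (c • a) = c^2 * M2 Θ a := by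
  unfold M2
  rw [← integral_const_mul]
  congr 1; ext V
  rw [inner_smul_right]; ring

lemma exp_aux {x : ℝ} (hx : 0 ≤ x) (hx1 : x ≤ 1) : |exp x * (1 - x) - 1| ≤ x^2 := by
  have h1 : 1 - x ≤ exp (-x) := by have := Real.add_one_le_exp (-x); linarith
  have h2 : exp x * exp (-x) = 1 := by rw [← exp_add]; simp
  have h3 := Real.add_one_le_exp x
  rw [abs_le]
  constructor
  · nlinarith
  · nlinarith [exp_pos x, sq_nonneg x]

lemma caseI_ball (Ψ : Measure E3) [IsProbabilityMeasure Ψ] (hCP : CPh (charFn Ψ)) {r0 : ℝ}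
    (hr0 : 0 < r0) (hnz : ∀ ξ, ‖ξ‖ ≤ r0 → charFn Ψ ξ ≠ 0) (ξ : E3) (hξ : ‖ξ‖ ≤ r0) :
    charFn Ψ ξ * ex (-⟪mn Ψ, ξ⟫) * ((exp (M2 (Th Ψ) e0 * ‖ξ‖^2 / 2) : ℝ) : ℂ) = 1 := by
  have hφc := charFn_cont Ψ
  obtain ⟨m0, hm0, hR⟩ : ∃ m0 > 0, ∀ ξ : E3, ‖ξ‖ ≤ r0 → m0 ≤ ‖charFn Ψ ξ‖^2 := by
    obtain ⟨z, hz, hmin⟩ := (isCompact_closedBall (0:E3) r0).exists_isMinOn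
      ⟨0, by simpa using hr0.le⟩ (f := fun ξ => ‖charFn Ψ ξ‖^2) (by fun_prop)
    refine ⟨‖charFn Ψ z‖^2, ?_, fun ξ hξ => hmin (by simpa using hξ)⟩
    have := norm_pos_iff.2 (hnz z (by simpa using hz))
    positivity
  have hfd := log_defect Ψ hm0 hR
  have hfc := log_cont Ψ hm0 hR
  have hqf : ∀ ξ : E3, ‖ξ‖ ≤ r0 → qf (Th Ψ) ξ ≤ - Real.log (‖charFn Ψ ξ‖^2) := by
    intro ξ hξ
    have h1 := Real.log_le_sub_one_of_pos (hm0.trans_le (hR ξ hξ))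
    have h2 := normSq_charFn Ψ ξ
    linarith
  obtain ⟨κ, hκ, hlow, hext⟩ := near_ext hCP hfd hfc hr0
    (fun ξ hξ => (qf_nonneg _ _).trans (hqf ξ hξ)) (by positivity)
  have hRle : ∀ ξ : E3, ‖ξ‖ ≤ r0 → ‖charFn Ψ ξ‖^2 ≤ exp (-(κ * ‖ξ‖^2)) := by
    intro ξ hξ
    have h1 := hlow ξ hξ
    rw [← Real.log_le_iff_le_exp (hm0.trans_le (hR ξ hξ))]
    linarith
  have hlow' : ∀ ξ : E3, ‖ξ‖ ≤ r0 → 1 - exp (-(κ * ‖ξ‖^2)) ≤ qf (Th Ψ) ξ := by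
    intro ξ hξ
    have h1 := hRle ξ hξ
    have h2 := normSq_charFn Ψ ξ
    linarith
  have hE : ExtP (Th Ψ) κ := by
    intro ε hε ρ hρ
    obtain ⟨ξ, h1, h2, h3, L, hL, ω, h4, h5, h6, h7⟩ := hext ε hε (min ρ r0) (by positivity)
    have hξr := h2.trans (min_le_right _ _)
    refine ⟨ξ, h1, h2.trans (min_le_left _ _), (hqf ξ hξr).trans h3, L, hL, ω, h4, h5, h6, ?_⟩
    intro j
    refine (hqf _ ?_).trans (h7 j)
    refine (minus_le hL ?_ ?_).trans hξr
    · rw [LinearIsometryEquiv.norm_map]; exact h4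
    · rw [rotL_zero]; exact h5
  have hM := fun a (ha : ‖a‖ = 1) => second_moment (Th Ψ) hr0 hlow' hE ha
  rw [hM e0 norm_e0]
  have hM2 : ∀ a : E3, M2 (Th Ψ) a = κ * ‖a‖^2 := by
    intro a
    obtain ⟨L, hL⟩ := exists_iso a
    nth_rewrite 1 [← hL]
    rw [M2_smul, hM _ (by rw [L.norm_map, norm_e0])]; ring
  have hsq := sq_int Ψ (second_int (Th Ψ) hE)
  -- the normalised function
  set h : E3 → ℂ := fun ξ => charFn Ψ ξ * ex (-⟪mn Ψ, ξ⟫) * ((exp (κ * ‖ξ‖^2 / 2) : ℝ) : ℂ) with hh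
  have hhc : Continuous h := by
    have := ex_cont
    rw [hh]
    apply Continuous.mul
    · apply hφc.mul; fun_prop
    · fun_prop
  have hh1 : ∀ ξ, ‖ξ‖ ≤ r0 → ‖h ξ‖ ≤ 1 := by
    intro ξ hξ
    simp only [hh]
    rw [norm_mul, norm_mul, norm_ex, mul_one, Complex.norm_real, Real.norm_of_nonneg (exp_pos _).le]
    have h1 := hRle ξ hξ
    have h2 : exp (-(κ * ‖ξ‖^2)) = (exp (-(κ * ‖ξ‖^2 / 2)))^2 := by
      rw [← exp_nat_mul]; congr 1; push_cast; ring
    rw [h2] at h1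
    have h3 := le_of_sq_le_sq h1 (exp_pos _).le
    calc _ ≤ exp (-(κ * ‖ξ‖^2 / 2)) * exp (κ * ‖ξ‖^2/2) := by gcongr
      _ = 1 := by rw [← exp_add]; simp
  have hdef : Defect (charFn Ψ) (fun ξ => - ‖h ξ - 1‖) (exp (κ * r0^2/2)) r0 := by
    intro ξ hξ L hL ω h1 h0
    have hp := hh1 _ ((plus_le hL h1 h0).trans hξ)
    have e : h ((1/2:ℝ) • ξ + (‖ξ‖/2) • L ω) * h ((1/2:ℝ) • ξ - (‖ξ‖/2) • L ω) - h ξ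
        = Gf (charFn Ψ) ξ (L ω) * ex (-⟪mn Ψ, ξ⟫) * ((exp (κ * ‖ξ‖^2 / 2) : ℝ) : ℂ) := by
      have e1 : ex (-⟪mn Ψ, ξ⟫) = ex (-⟪mn Ψ, (1/2:ℝ) • ξ + (‖ξ‖/2) • L ω⟫) *
          ex (-⟪mn Ψ, (1/2:ℝ) • ξ - (‖ξ‖/2) • L ω⟫) := by
        rw [← ex_add]; congr 1
        rw [inner_add_right, inner_sub_right, inner_smul_right]; ring
      have e2 : exp (κ * ‖ξ‖^2 / 2) = exp (κ * ‖(1/2:ℝ) • ξ + (‖ξ‖/2) • L ω‖^2 / 2) *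
          exp (κ * ‖(1/2:ℝ) • ξ - (‖ξ‖/2) • L ω‖^2 / 2) := by
        rw [← exp_add]; congr 1
        rw [plus_norm hL h1, minus_norm hL h1]; ring
      simp only [hh]
      rw [e1, e2]
      unfold Gf
      push_cast
      ring
    have e3 : ‖h ((1/2:ℝ) • ξ + (‖ξ‖/2) • L ω) * h ((1/2:ℝ) • ξ - (‖ξ‖/2) • L ω) - h ξ‖
        ≤ exp (κ * r0^2/2) * ‖Gf (charFn Ψ) ξ (L ω)‖ := by
      rw [e, norm_mul, norm_mul, norm_ex, mul_one, Complex.norm_real,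
        Real.norm_of_nonneg (exp_pos _).le, mul_comm]
      gcongr
    beta_reduce
    set p := h ((1/2:ℝ) • ξ + (‖ξ‖/2) • L ω)
    set q := h ((1/2:ℝ) • ξ - (‖ξ‖/2) • L ω)
    have h3 : ‖h ξ - 1‖ ≤ ‖p * q - h ξ‖ + ‖p * q - 1‖ := by
      have : h ξ - 1 = (p * q - 1) - (p * q - h ξ) := by ring
      rw [this]; refine (norm_sub_le _ _).trans (by linarith)
    have h4 : ‖p * q - 1‖ ≤ ‖p - 1‖ + ‖q - 1‖ := by
      have : p * q - 1 = p * (q - 1) + (p - 1) := by ring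
      rw [this]
      refine (norm_add_le _ _).trans ?_
      rw [norm_mul]
      nlinarith [norm_nonneg (q - 1)]
    linarith
  have hsmall : ∀ ε > 0, ∃ s > 0, ∀ η : E3, ‖η‖ ≤ s → ‖h η - 1‖ ≤ ε * ‖η‖^2 := by
    intro ε hε
    have hl := taylor_lim Ψ hsq
    have hev := (hl.eventually (gt_mem_nhds (show 0 < ε/24 by positivity)))
    obtain ⟨s1, hs1, hs1'⟩ := mem_nhdsGT_iff_exists_Ioc_subset.1 hev
    obtain ⟨s2, hs2, hs2'⟩ : ∃ s2 > 0, κ * s2^2 ≤ 1 ∧ κ^2 * s2^2 ≤ ε := by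
      have hpos : 0 < min (1/(κ+1)) (ε/(κ^2+1)) := by positivity
      refine ⟨√(min (1/(κ+1)) (ε/(κ^2+1))), by positivity, ?_, ?_⟩ <;> rw [Real.sq_sqrt hpos.le]
      · calc κ * _ ≤ κ * (1/(κ+1)) := by gcongr; exact min_le_left _ _
          _ ≤ 1 := by rw [mul_one_div, div_le_one (by positivity)]; linarith
      · calc κ^2 * _ ≤ κ^2 * (ε/(κ^2+1)) := by gcongr; exact min_le_right _ _
          _ ≤ ε := by
            rw [← mul_div_assoc, div_le_iff₀ (by positivity)]; nlinarith
    refine ⟨min s1 s2, lt_min hs1 hs2, fun η hη => ?_⟩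
    rcases (norm_nonneg η).eq_or_lt with h0 | h0
    · have : η = 0 := norm_eq_zero.1 h0.symm
      subst this
      simp [hh, charFn_zero, ex_zero]
    have ht := taylor_int Ψ hsq η
    have hI : ∫ v, ‖v - mn Ψ‖^2 * min 1 (‖η‖ * ‖v - mn Ψ‖) ∂Ψ < ε/24 :=
      hs1' ⟨h0, hη.trans (min_le_left _ _)⟩
    rw [hM2] at ht
    have hη2 : ‖η‖^2 ≤ s2^2 := by gcongr; exact hη.trans (min_le_right _ _)
    set x := κ * ‖η‖^2 / 2 with hx
    have hx0 : 0 ≤ x := by positivity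
    have hx1 : x ≤ 1 := by
      have : κ * ‖η‖^2 ≤ κ * s2^2 := by gcongr
      linarith [hs2'.1]
    have hx2 : x^2 ≤ ε/4 * ‖η‖^2 := by
      have : κ^2 * ‖η‖^2 ≤ κ^2 * s2^2 := by gcongr
      rw [hx]
      nlinarith [hs2'.2, sq_nonneg ‖η‖]
    have he := exp_aux hx0 hx1
    have he3 : exp x ≤ 3 := by
      have := Real.exp_one_lt_d9
      have h2 : exp x ≤ exp 1 := exp_le_exp.2 hx1
      linarith
    set g := charFn Ψ η * ex (-⟪mn Ψ, η⟫) with hg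
    have hdec : h η - 1 = (g - 1 + (x:ℂ)) * ((exp x : ℝ) : ℂ) + ((exp x * (1 - x) - 1 : ℝ) : ℂ) := by
      simp only [hh]
      rw [← hg, ← hx]
      push_cast; ring
    rw [hdec]
    refine (norm_add_le _ _).trans ?_
    rw [norm_mul, Complex.norm_real, Complex.norm_real, Real.norm_of_nonneg (exp_pos _).le,
      Real.norm_eq_abs]
    have h6 : ‖g - 1 + (x:ℂ)‖ ≤ 4 * ‖η‖^2 * (ε/24) := ht.trans (by gcongr)
    have h7 : ‖g - 1 + (x:ℂ)‖ * exp x ≤ (4 * ‖η‖^2 * (ε/24)) * 3 := by gcongr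
    nlinarith [mul_pos hε (pow_pos h0 2)]
  have hfin : ∀ ε > 0, ‖h ξ - 1‖ ≤ ε * ‖ξ‖^2 := by
    intro ε hε
    obtain ⟨s, hs, hs'⟩ := hsmall ε hε
    have := MP2 hCP hdef (by fun_prop) (K := -ε) hs (fun η hη => by
      have := hs' η hη; linarith) ξ hξ
    linarith
  have h0 : ‖h ξ - 1‖ ≤ 0 := by
    have hlim : Tendsto (fun ε : ℝ => ε * ‖ξ‖^2) (𝓝[>] 0) (𝓝 (0 * ‖ξ‖^2)) := by
      apply Tendsto.mono_left _ nhdsWithin_le_nhds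
      exact (continuous_id.mul continuous_const).tendsto 0
    rw [zero_mul] at hlim
    exact ge_of_tendsto hlim (by filter_upwards [self_mem_nhdsWithin] with ε hε using hfin ε hε)
  have := norm_le_zero_iff.1 h0
  exact sub_eq_zero.1 this

lemma caseI_nz (Ψ : Measure E3) [IsProbabilityMeasure Ψ] (hCP : CPh (charFn Ψ)) (ξ : E3) :
    charFn Ψ ξ ≠ 0 := by
  intro hcon
  have hφc := charFn_cont Ψ
  have hcl : IsClosed {ξ | charFn Ψ ξ = 0} := isClosed_eq hφc continuous_const
  obtain ⟨z, hz, hmin⟩ := hcl.exists_infDist_eq_dist ⟨ξ, hcon⟩ 0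
  have hz : charFn Ψ z = 0 := hz
  rw [dist_zero_left] at hmin
  have hz0 : z ≠ 0 := by
    rintro rfl; rw [charFn_zero] at hz; exact one_ne_zero hz
  have hzp := norm_pos_iff.2 hz0
  have key : ∀ t : ℝ, 0 < t → t < 1 →
      charFn Ψ (t • z) * ex (-⟪mn Ψ, t • z⟫) * ((exp (M2 (Th Ψ) e0 * ‖t • z‖^2 / 2) : ℝ) : ℂ) = 1 := by
    intro t ht ht1
    have hn : ‖t • z‖ = t * ‖z‖ := by rw [norm_smul, Real.norm_of_nonneg ht.le]
    refine caseI_ball Ψ hCP (r0 := t * ‖z‖) (by positivity) ?_ (t • z) hn.le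
    intro η hη h0
    have h1 : infDist (0:E3) {ξ | charFn Ψ ξ = 0} ≤ dist 0 η := infDist_le_dist_of_mem h0
    rw [hmin, dist_zero_left] at h1
    nlinarith
  have hc : Continuous (fun t : ℝ => charFn Ψ (t • z) * ex (-⟪mn Ψ, t • z⟫) *
      ((exp (M2 (Th Ψ) e0 * ‖t • z‖^2 / 2) : ℝ) : ℂ)) := by
    have := ex_cont
    apply Continuous.mul
    · apply Continuous.mul
      · fun_prop
      · fun_prop
    · fun_prop
  have hlim := (hc.tendsto 1).mono_left (nhdsWithin_le_nhds (s := Iio 1))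
  have hlim2 := hlim.congr' (by
    filter_upwards [Ioo_mem_nhdsLT (show (0:ℝ) < 1 by norm_num)] with t ht
    exact key t ht.1 ht.2)
  have := tendsto_nhds_unique hlim2 tendsto_const_nhds
  rw [one_smul, hz] at this
  simp at this

/-- In the non-integrable case the collision integrand vanishes identically. -/
lemma caseI_G (Ψ : Measure E3) [IsProbabilityMeasure Ψ] (hCP : CPh (charFn Ψ)) {ξ : E3}
    {L : E3 ≃ₗᵢ[ℝ] E3} (hL : ‖ξ‖ • L e0 = ξ) {ω : E3} (h1 : ‖ω‖ = 1) :
    Gf (charFn Ψ) ξ (L ω) = 0 := by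
  have key : ∀ ξ, charFn Ψ ξ = ex ⟪mn Ψ, ξ⟫ * ((exp (-(M2 (Th Ψ) e0 * ‖ξ‖^2 / 2)) : ℝ) : ℂ) := by
    intro ξ
    have h := caseI_ball Ψ hCP (r0 := ‖ξ‖ + 1) (by positivity) (fun η _ => caseI_nz Ψ hCP η) ξ
      (by linarith)
    have e1 : ex (-⟪mn Ψ, ξ⟫) * ex ⟪mn Ψ, ξ⟫ = 1 := by rw [← ex_add]; simp [ex_zero]
    have e2 : ((exp (M2 (Th Ψ) e0 * ‖ξ‖^2 / 2) : ℝ) : ℂ) *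
        ((exp (-(M2 (Th Ψ) e0 * ‖ξ‖^2 / 2)) : ℝ) : ℂ) = 1 := by
      rw [← Complex.ofReal_mul, ← exp_add]; simp
    calc charFn Ψ ξ = charFn Ψ ξ * (ex (-⟪mn Ψ, ξ⟫) * ex ⟪mn Ψ, ξ⟫) *
          (((exp (M2 (Th Ψ) e0 * ‖ξ‖^2 / 2) : ℝ) : ℂ) *
        ((exp (-(M2 (Th Ψ) e0 * ‖ξ‖^2 / 2)) : ℝ) : ℂ)) := by rw [e1, e2]; ring
      _ = (charFn Ψ ξ * ex (-⟪mn Ψ, ξ⟫) * ((exp (M2 (Th Ψ) e0 * ‖ξ‖^2 / 2) : ℝ) : ℂ)) *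
          (ex ⟪mn Ψ, ξ⟫ * ((exp (-(M2 (Th Ψ) e0 * ‖ξ‖^2 / 2)) : ℝ) : ℂ)) := by ring
      _ = _ := by rw [h, one_mul]
  have e1 : ex ⟪mn Ψ, ξ⟫ = ex ⟪mn Ψ, (1/2:ℝ) • ξ + (‖ξ‖/2) • L ω⟫ *
      ex ⟪mn Ψ, (1/2:ℝ) • ξ - (‖ξ‖/2) • L ω⟫ := by
    rw [← ex_add]; congr 1
    rw [inner_add_right, inner_sub_right, inner_smul_right]; ring
  have e2 : exp (-(M2 (Th Ψ) e0 * ‖ξ‖^2 / 2)) =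
      exp (-(M2 (Th Ψ) e0 * ‖(1/2:ℝ) • ξ + (‖ξ‖/2) • L ω‖^2 / 2)) *
      exp (-(M2 (Th Ψ) e0 * ‖(1/2:ℝ) • ξ - (‖ξ‖/2) • L ω‖^2 / 2)) := by
    rw [← exp_add]; congr 1
    rw [plus_norm hL h1, minus_norm hL h1]; ring
  unfold Gf
  rw [key ξ, e1, e2, key ((1/2:ℝ) • ξ + (‖ξ‖/2) • L ω), key ((1/2:ℝ) • ξ - (‖ξ‖/2) • L ω)]
  push_cast
  ring

/-! ## Case II: integrable angular function. Finiteness of the tail functional -/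

/-- properties of the folded kernel measure -/
structure Ker (m : Measure E3) : Prop where
  ae : ∀ᵐ ω ∂m, ‖ω‖ = 1 ∧ 0 ≤ ω 0
  inv : ∀ L : E3 ≃ₗᵢ[ℝ] E3, L e0 = e0 → MeasurePreserving L m m

lemma Ker.int_comp {m : Measure E3} (hm : Ker m) {F : Type*} [NormedAddCommGroup F]
    {L : E3 ≃ₗᵢ[ℝ] E3} (hL : L e0 = e0)
    {f : E3 → F} : Integrable (fun ω => f (L ω)) m ↔ Integrable f m :=
  (hm.inv L hL).integrable_comp_emb L.toHomeomorph.measurableEmbedding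

lemma Ker.integral_comp {m : Measure E3} (hm : Ker m) {F : Type*} [NormedAddCommGroup F]
    [NormedSpace ℝ F] {L : E3 ≃ₗᵢ[ℝ] E3} (hL : L e0 = e0)
    (f : E3 → F) : ∫ ω, f (L ω) ∂m = ∫ ω, f ω ∂m :=
  (hm.inv L hL).integral_comp L.toHomeomorph.measurableEmbedding f

/-- angular average -/
def abar (z : ℝ) : ℝ := ∫ φ in (0:ℝ)..(2*π), (1 - cos (z * cos φ))

lemma abar_shift (z δ : ℝ) : ∫ φ in (0:ℝ)..(2*π), (1 - cos (z * cos (φ - δ))) = abar z := by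
  have hp : Function.Periodic (fun φ => 1 - cos (z * cos φ)) (2*π) := by
    intro φ; simp [cos_add_two_pi]
  rw [intervalIntegral.integral_comp_sub_right (fun φ => 1 - cos (z * cos φ)) δ]
  have := hp.intervalIntegral_add_eq (0 - δ) 0
  unfold abar
  rw [show 2*π - δ = 0 - δ + 2*π by ring, this, zero_add]

lemma abar_small {z : ℝ} (hz : |z| ≤ 1) : z^2 ≤ abar z := by
  have h1 : ∀ φ, z^2 * (0.4 * cos φ ^2) ≤ 1 - cos (z * cos φ) := by
    intro φ
    have hc : cos φ ^2 ≤ 1 := by nlinarith [sin_sq_add_cos_sq φ, sq_nonneg (sin φ)]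
    have hy : |z * cos φ| ≤ 1 := by
      rw [abs_mul]; exact mul_le_one₀ hz (abs_nonneg _) (abs_cos_le_one φ)
    have h := (abs_le.1 (Real.cos_bound hy)).2
    have h2 : |z * cos φ|^4 ≤ (z * cos φ)^2 := by
      have h3 : |z * cos φ|^4 = (z * cos φ)^2 * |z * cos φ|^2 := by
        rw [show |z * cos φ|^4 = |z * cos φ|^2 * |z * cos φ|^2 by ring, sq_abs]
      rw [h3]
      have : |z * cos φ|^2 ≤ 1 := pow_le_one₀ (abs_nonneg _) hy
      nlinarith [sq_nonneg (z * cos φ)]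
    nlinarith [sq_nonneg (z * cos φ)]
  have h2 : ∫ φ in (0:ℝ)..(2*π), z^2 * (0.4 * cos φ ^2) ≤ abar z := by
    apply intervalIntegral.integral_mono_on (by positivity)
    · exact Continuous.intervalIntegrable (by fun_prop) _ _
    · exact Continuous.intervalIntegrable (by fun_prop) _ _
    · intro φ _; exact h1 φ
  refine le_trans ?_ h2
  rw [intervalIntegral.integral_const_mul, intervalIntegral.integral_const_mul, integral_cos_sq]
  simp
  have := pi_gt_three
  nlinarith [sq_nonneg z]

lemma abar_double {z z' : ℝ} (hz : 0 < z) (h0 : 0 ≤ z') (h : z' ≤ 2 * z) : abar z' ≤ 4 * abar z := by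
  set δ := arccos (z' / (2*z)) with hδ
  have hcos : cos δ = z' / (2*z) := cos_arccos (by
    have : 0 ≤ z' / (2*z) := by positivity
    linarith) (by rw [div_le_one (by positivity)]; exact h)
  have e : ∀ φ, 1 - cos (z' * cos φ) ≤ 2 * (1 - cos (z * cos (φ - δ))) +
      2 * (1 - cos (z * cos (φ - (-δ)))) := by
    intro φ
    have h1 := one_sub_cos_sub_le (z * cos (φ - δ)) (-(z * cos (φ - (-δ))))
    rw [cos_neg] at h1
    have h2 : z * cos (φ - δ) - -(z * cos (φ - (-δ))) = z' * cos φ := by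
      rw [sub_neg_eq_add φ, cos_sub, cos_add]
      have : z' = 2 * z * cos δ := by rw [hcos]; field_simp
      rw [this]; ring
    rwa [h2] at h1
  have h3 : abar z' ≤ ∫ φ in (0:ℝ)..(2*π), (2 * (1 - cos (z * cos (φ - δ))) +
      2 * (1 - cos (z * cos (φ - (-δ))))) := by
    apply intervalIntegral.integral_mono_on (by positivity)
    · exact Continuous.intervalIntegrable (by fun_prop) _ _
    · exact Continuous.intervalIntegrable (by fun_prop) _ _
    · intro φ _; exact e φ
  rw [intervalIntegral.integral_add (Continuous.intervalIntegrable (by fun_prop) _ _)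
    (Continuous.intervalIntegrable (by fun_prop) _ _), intervalIntegral.integral_const_mul,
    intervalIntegral.integral_const_mul, abar_shift, abar_shift] at h3
  linarith

lemma abar_lower {z : ℝ} (hz : 0 ≤ z) : min 1 (z^2) ≤ 4 * abar z := by
  by_cases h1 : z ≤ 1
  · have h2 := abar_small (z := z) (by rw [abs_of_nonneg hz]; exact h1)
    have : min 1 (z^2) ≤ z^2 := min_le_right _ _
    nlinarith [sq_nonneg z]
  · push Not at h1
    have h2 := abar_small (z := 1) (by simp)
    have h3 := abar_double (z := z) (z' := 1) (by linarith) (by norm_num) (by linarith)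
    have : min 1 (z^2) ≤ 1 := min_le_left _ _
    linarith

lemma avg_lower (A B : ℝ) :
    min 1 (A^2 + B^2) ≤ 4 * ∫ φ in (0:ℝ)..(2*π), (1 - cos (A * cos φ + B * sin φ)) := by
  set w : ℂ := ⟨A, B⟩
  have hA : A = ‖w‖ * cos w.arg := (Complex.norm_mul_cos_arg w).symm
  have hB : B = ‖w‖ * sin w.arg := (Complex.norm_mul_sin_arg w).symm
  have hn : ‖w‖^2 = A^2 + B^2 := by
    rw [← Complex.normSq_eq_norm_sq, Complex.normSq_apply]; ring
  have e : ∀ φ, A * cos φ + B * sin φ = ‖w‖ * cos (φ - w.arg) := by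
    intro φ
    rw [cos_sub]
    nth_rewrite 1 [hA]; nth_rewrite 1 [hB]; ring
  simp_rw [e]
  rw [abar_shift, ← hn]
  exact abar_lower (norm_nonneg _)

lemma rotL_cont : Continuous (fun p : ℝ × E3 => rotL p.1 p.2) := by
  have : (fun p : ℝ × E3 => rotL p.1 p.2) = fun p => WithLp.toLp 2
      (fun i : Fin 3 => rotL p.1 p.2 i) := by
    ext p i; rfl
  rw [this]
  apply (PiLp.continuous_toLp 2 _).comp
  apply continuous_pi
  intro i; fin_cases i
  · simp only [Fin.zero_eta, rotL_zero]; fun_prop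
  · simp only [Fin.mk_one, rotL_one]; fun_prop
  · change Continuous fun a : ℝ × E3 => rotL a.1 a.2 2
    simp only [rotL_two]; fun_prop

lemma qf_cont (Ψ : Measure E3) [IsProbabilityMeasure Ψ] : Continuous (qf (Th Ψ)) := by
  have h : qf (Th Ψ) = fun ξ => 1 - ‖charFn Ψ ξ‖^2 := by
    ext ξ; rw [normSq_charFn]; ring
  rw [h]
  have := charFn_cont Ψ
  fun_prop

lemma qf_le_two (Θ : Measure E3) [IsProbabilityMeasure Θ] (ξ : E3) : qf Θ ξ ≤ 2 := by
  have : qf Θ ξ ≤ ∫ V, (2:ℝ) ∂Θ := by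
    apply integral_mono (qf_integrable Θ ξ) (integrable_const _)
    intro V
    have := neg_one_le_cos ⟪V, ξ⟫
    beta_reduce; linarith
  simpa using this

lemma eta_rot_inner {ξ : E3} {L : E3 ≃ₗᵢ[ℝ] E3} (hL : ‖ξ‖ • L e0 = ξ) {ω : E3} (h1 : ‖ω‖ = 1) (V : E3) :
    ∃ A B : ℝ, A^2 + B^2 = 4 * (Sf ω * (1 - Sf ω)) * (‖ξ‖^2 * ‖V‖^2 - ⟪V, ξ⟫^2) ∧
      ∀ φ, ⟪V, (2:ℝ) • etaf ξ L (rotL φ ω)⟫ = A * cos φ + B * sin φ := by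
  have hV : ∀ x : E3, ⟪V, L x⟫ = (L.symm V) 0 * x 0 + (L.symm V) 1 * x 1 + (L.symm V) 2 * x 2 := by
    intro x
    have : ⟪V, L x⟫ = ⟪L.symm V, x⟫ := by
      rw [← L.inner_map_map (L.symm V) x, LinearIsometryEquiv.apply_symm_apply]
    rw [this, PiLp.inner_apply, Fin.sum_univ_three]
    simp only [RCLike.inner_apply, conj_trivial]
    ring
  have hn : ‖V‖^2 = (L.symm V) 0^2 + (L.symm V) 1 ^2 + (L.symm V) 2 ^2 := by
    rw [← norm_sq_coord, LinearIsometryEquiv.norm_map]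
  have hξ : ⟪V, ξ⟫ = ‖ξ‖ * (L.symm V) 0 := by
    nth_rewrite 1 [← hL]
    rw [inner_smul_right, hV, e0_zero, e0_one, e0_two]; ring
  have ho := norm_sq_coord ω
  rw [h1] at ho
  set w := L.symm V
  refine ⟨‖ξ‖ * (w 1 * ω 1 + w 2 * ω 2), ‖ξ‖ * (w 2 * ω 1 - w 1 * ω 2), ?_, ?_⟩
  · rw [hξ, hn]
    unfold Sf
    have : ω 2 ^2 = 1 - ω 0^2 - ω 1^2 := by linarith
    ring_nf
    simp only [this]
    ring
  · intro φ
    unfold etaf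
    rw [smul_smul, inner_smul_right, hV]
    simp only [PiLp.sub_apply, PiLp.smul_apply, smul_eq_mul, e0_zero, e0_one, e0_two, rotL_zero,
      rotL_one, rotL_two]
    ring

lemma local_max (Ψ : Measure E3) [IsProbabilityMeasure Ψ] {ρ : ℝ} (hρ : 0 < ρ) {d : E3}
    (hd : ‖d‖ = 1) : ∃ ξ : E3, ‖ξ - ρ • d‖ ≤ ρ/10 ∧ ∀ η : E3, ‖η‖ ≤ 2*ρ →
      ‖charFn Ψ η‖^2 ≤ ‖charFn Ψ ξ‖^2 + 100/ρ^2 * (‖η - ρ • d‖^2 - ‖ξ - ρ • d‖^2) := by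
  have hφc := charFn_cont Ψ
  have hdn : ‖ρ • d‖ = ρ := by rw [norm_smul, hd, Real.norm_of_nonneg hρ.le, mul_one]
  obtain ⟨z, hz, hmax⟩ := (isCompact_closedBall (0:E3) (2*ρ)).exists_isMaxOn
    ⟨0, by simpa using hρ.le⟩ (f := fun ξ => ‖charFn Ψ ξ‖^2 - 100/ρ^2 * ‖ξ - ρ • d‖^2) (by fun_prop)
  refine ⟨z, ?_, ?_⟩
  · have h := hmax (a := ρ • d) (by simp [hdn]; linarith)
    simp only [mem_ofPred_eq, sub_self, norm_zero] at h
    have h1 : ‖charFn Ψ z‖^2 ≤ 1 := pow_le_one₀ (norm_nonneg _) (charFn_norm_le Ψ z)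
    have h2 : 100/ρ^2 * ‖z - ρ • d‖^2 ≤ 1 := by nlinarith [sq_nonneg ‖charFn Ψ (ρ • d)‖]
    rw [div_mul_eq_mul_div, div_le_one (by positivity)] at h2
    apply le_of_sq_le_sq _ (by positivity)
    nlinarith
  · intro η hη
    have h := hmax (a := η) (by simpa using hη)
    simp only [mem_ofPred_eq] at h
    linarith

lemma Gf_rot_int {m : Measure E3} {φ : E3 → ℂ}
    (hG : ∀ ξ : E3, ξ ≠ 0 → ∀ L : E3 ≃ₗᵢ[ℝ] E3, ‖ξ‖ • L e0 = ξ →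
      Integrable (fun ω => Gf φ ξ (L ω)) m) {ξ : E3} (hξ : ξ ≠ 0) {L : E3 ≃ₗᵢ[ℝ] E3}
    (hL : ‖ξ‖ • L e0 = ξ) (θ : ℝ) : Integrable (fun ω => Gf φ ξ (L (rotL θ ω))) m :=
  hG ξ hξ ((rotL θ).trans L) (by rw [LinearIsometryEquiv.trans_apply, rotL_e0, hL])

set_option maxHeartbeats 1000000 in
lemma q_eta_int (Ψ : Measure E3) [IsProbabilityMeasure Ψ] {m : Measure E3} (hm : Ker m)
    (hS : Integrable Sf m)
    (hG : ∀ ξ : E3, ξ ≠ 0 → ∀ L : E3 ≃ₗᵢ[ℝ] E3, ‖ξ‖ • L e0 = ξ →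
      Integrable (fun ω => Gf (charFn Ψ) ξ (L ω)) m)
    {ρ : ℝ} (hρ : 0 < ρ) (hR : ∀ ξ, ‖ξ‖ ≤ 2*ρ → 1/2 ≤ ‖charFn Ψ ξ‖^2) {d : E3} (hd : ‖d‖ = 1) :
    ∃ ξ : E3, ‖ξ - ρ • d‖ ≤ ρ/10 ∧ ∃ L : E3 ≃ₗᵢ[ℝ] E3, ‖ξ‖ • L e0 = ξ ∧
      Integrable (fun ω => qf (Th Ψ) ((2:ℝ) • etaf ξ L ω)) m := by
  obtain ⟨ξ, hξ1, hξ2⟩ := local_max Ψ hρ hd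
  have hdn : ‖ρ • d‖ = ρ := by rw [norm_smul, hd, Real.norm_of_nonneg hρ.le, mul_one]
  have hξu : ‖ξ‖ ≤ 2*ρ := by
    have := norm_add_le (ξ - ρ • d) (ρ • d)
    rw [sub_add_cancel, hdn] at this
    linarith
  have hξl : 0 < ‖ξ‖ := by
    have := norm_sub_norm_le (ρ • d) ξ
    rw [norm_sub_rev, hdn] at this
    linarith
  have hξ0 := norm_pos_iff.1 hξl
  obtain ⟨L, hL⟩ := exists_iso ξ
  refine ⟨ξ, hξ1, L, hL, ?_⟩
  have hb : Integrable (fun ω => 4 * (2000 * Sf ω + 2 * ‖Gf (charFn Ψ) ξ (L ω)‖ +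
      2 * ‖Gf (charFn Ψ) ξ (L (rotL π ω))‖)) m :=
    (((hS.const_mul 2000).add ((hG ξ hξ0 L hL).norm.const_mul 2)).add
      ((Gf_rot_int hG hξ0 hL π).norm.const_mul 2)).const_mul 4
  have hqc := qf_cont Ψ
  refine hb.mono' ?_ ?_
  · apply Continuous.aestronglyMeasurable
    unfold etaf; fun_prop
  filter_upwards [hm.ae] with ω hω
  obtain ⟨h1, h0⟩ := hω
  rw [Real.norm_of_nonneg (qf_nonneg _ _)]
  obtain ⟨hS0, hS1⟩ := Sf_bounds h1 h0
  set ω' := rotL π ω with hω'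
  have h1' : ‖ω'‖ = 1 := by rw [hω', LinearIsometryEquiv.norm_map]; exact h1
  have h0' : 0 ≤ ω' 0 := by rw [hω', rotL_zero]; exact h0
  have half : ∀ ω : E3, ‖ω‖ = 1 → 0 ≤ ω 0 →
      1/2 * qf (Th Ψ) ((1/2:ℝ) • ξ - (‖ξ‖/2) • L ω) ≤
        ‖charFn Ψ ((1/2:ℝ) • ξ + (‖ξ‖/2) • L ω)‖^2 - ‖charFn Ψ ξ‖^2 + 2 * ‖Gf (charFn Ψ) ξ (L ω)‖ := by
    intro ω h1 h0
    have hp := hR _ ((plus_le hL h1 h0).trans hξu)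
    have hd := (abs_le.1 (R_diff_le (charFn_norm_le Ψ ξ)
      (charFn_norm_le Ψ ((1/2:ℝ) • ξ + (‖ξ‖/2) • L ω))
      (charFn_norm_le Ψ ((1/2:ℝ) • ξ - (‖ξ‖/2) • L ω)))).2
    have hq := normSq_charFn Ψ ((1/2:ℝ) • ξ - (‖ξ‖/2) • L ω)
    have hq0 := qf_nonneg (Th Ψ) ((1/2:ℝ) • ξ - (‖ξ‖/2) • L ω)
    rw [hq] at hd
    unfold Gf
    nlinarith
  have ha := half ω h1 h0
  have hb := half ω' h1' h0'
  have hpa := hξ2 _ ((plus_le hL h1 h0).trans hξu)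
  have hpb := hξ2 _ ((plus_le hL h1' h0').trans hξu)
  have hsub := qf_sub_le (Th Ψ) ((1/2:ℝ) • ξ - (‖ξ‖/2) • L ω') ((1/2:ℝ) • ξ - (‖ξ‖/2) • L ω)
  have e1 : (1/2:ℝ) • ξ - (‖ξ‖/2) • L ω' - ((1/2:ℝ) • ξ - (‖ξ‖/2) • L ω) = (2:ℝ) • etaf ξ L ω := by
    rw [minus_eq hL, minus_eq hL, hω', Sf_rot, eta_rot]; module
  rw [e1] at hsub
  have geo : ‖(1/2:ℝ) • ξ + (‖ξ‖/2) • L ω - ρ • d‖^2 + ‖(1/2:ℝ) • ξ + (‖ξ‖/2) • L ω' - ρ • d‖^2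
      - 2 * ‖ξ - ρ • d‖^2 ≤ 20 * ρ^2 * Sf ω := by
    rw [plus_eq hL, plus_eq hL, hω', Sf_rot, eta_rot]
    have hη := eta_norm_le (ξ := ξ) (L := L) h1 h0
    have e2 : (1 - Sf ω) • ξ + etaf ξ L ω - ρ • d = ((ξ - ρ • d) - Sf ω • ξ) + etaf ξ L ω := by module
    have e3 : (1 - Sf ω) • ξ + -etaf ξ L ω - ρ • d = ((ξ - ρ • d) - Sf ω • ξ) - etaf ξ L ω := by module
    rw [e2, e3, parallelogram_law_with_norm ℝ]
    have e4 := @norm_sub_sq_real _ _ _ (ξ - ρ • d) (Sf ω • ξ)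
    rw [inner_smul_right, norm_smul, Real.norm_of_nonneg hS0] at e4
    have e5 : |⟪ξ - ρ • d, ξ⟫| ≤ ρ/10 * (2*ρ) :=
      (abs_real_inner_le_norm _ _).trans (by gcongr)
    have e6 := (abs_le.1 e5).1
    have e7 : ‖ξ‖^2 ≤ (2*ρ)^2 := by gcongr
    have e8 : Sf ω * ‖ξ‖^2 ≤ Sf ω * (2*ρ)^2 := by gcongr
    have e9 : (Sf ω * ‖ξ‖)^2 ≤ Sf ω * ‖ξ‖^2 := by
      have : (Sf ω)^2 ≤ Sf ω := by nlinarith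
      rw [mul_pow]; gcongr
    have e10 : -(Sf ω * ⟪ξ - ρ • d, ξ⟫) ≤ Sf ω * (ρ/10 * (2*ρ)) := by nlinarith
    linarith [mul_nonneg hS0 (sq_nonneg ρ)]
  have geo2 : 100/ρ^2 * (‖(1/2:ℝ) • ξ + (‖ξ‖/2) • L ω - ρ • d‖^2 - ‖ξ - ρ • d‖^2) +
      100/ρ^2 * (‖(1/2:ℝ) • ξ + (‖ξ‖/2) • L ω' - ρ • d‖^2 - ‖ξ - ρ • d‖^2) ≤ 2000 * Sf ω := by
    rw [← mul_add]
    calc _ ≤ 100/ρ^2 * (20 * ρ^2 * Sf ω) := by gcongr; linarith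
      _ = _ := by field_simp; ring
  linarith

lemma min_cont (a : ℝ) (ξ : E3) : Continuous fun V : E3 => min 1 (a * (‖ξ‖^2 * ‖V‖^2 - ⟪V, ξ⟫^2)) := by
  fun_prop

set_option maxHeartbeats 2000000 in
lemma avg_int (Ψ : Measure E3) [IsProbabilityMeasure Ψ] {m : Measure E3} [SFinite m] (hm : Ker m)
    {ξ : E3} {L : E3 ≃ₗᵢ[ℝ] E3} (hL : ‖ξ‖ • L e0 = ξ)
    (hi : Integrable (fun ω => qf (Th Ψ) ((2:ℝ) • etaf ξ L ω)) m) :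
    Integrable (fun ω => ∫ V, min 1 (2 * Sf ω * (‖ξ‖^2 * ‖V‖^2 - ⟪V, ξ⟫^2)) ∂(Th Ψ)) m := by
  have hqc := qf_cont Ψ
  have hrc := rotL_cont
  have hr0 : Continuous (fun p : ℝ × E3 => (rotL p.1 p.2) 0) := by
    simp only [rotL_zero]; fun_prop
  set Φ : Measure ℝ := volume.restrict (Ioc 0 (2*π)) with hΦ
  have hetac : Continuous (fun p : ℝ × E3 => etaf ξ L (rotL p.1 p.2)) := by
    unfold etaf; fun_prop
  have hp : Integrable (fun p : ℝ × E3 => qf (Th Ψ) ((2:ℝ) • etaf ξ L (rotL p.1 p.2))) (Φ.prod m) := by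
    rw [integrable_prod_iff (by apply Continuous.aestronglyMeasurable; fun_prop)]
    constructor
    · filter_upwards with φ
      exact (hm.int_comp (rotL_e0 φ) (f := fun ω => qf (Th Ψ) ((2:ℝ) • etaf ξ L ω))).2 hi
    · have : ∀ φ, ∫ ω, ‖qf (Th Ψ) ((2:ℝ) • etaf ξ L (rotL φ ω))‖ ∂m
          = ∫ ω, ‖qf (Th Ψ) ((2:ℝ) • etaf ξ L ω)‖ ∂m := fun φ =>
        hm.integral_comp (rotL_e0 φ) (fun ω => ‖qf (Th Ψ) ((2:ℝ) • etaf ξ L ω)‖)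
      simp_rw [this]
      exact integrable_const _
  have hb := (hp.integral_prod_right).const_mul 4
  refine hb.mono' ?_ ?_
  · apply StronglyMeasurable.aestronglyMeasurable
    apply StronglyMeasurable.integral_prod_right
      (f := fun (ω V : E3) => min 1 (2 * Sf ω * (‖ξ‖^2 * ‖V‖^2 - ⟪V, ξ⟫^2)))
    apply Continuous.stronglyMeasurable
    have := Sf_cont
    unfold Function.uncurry
    fun_prop
  filter_upwards [hm.ae] with ω hω
  obtain ⟨h1, h0⟩ := hω
  obtain ⟨hS0, hS1⟩ := Sf_bounds h1 h0
  have hCS : ∀ V : E3, 0 ≤ ‖ξ‖^2 * ‖V‖^2 - ⟪V, ξ⟫^2 := by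
    intro V
    have := abs_real_inner_le_norm V ξ
    have h2 : |⟪V, ξ⟫|^2 ≤ (‖V‖ * ‖ξ‖)^2 := by gcongr
    rw [sq_abs] at h2
    nlinarith
  rw [Real.norm_of_nonneg (integral_nonneg fun V => le_min zero_le_one
    (mul_nonneg (by positivity) (hCS V)))]
  have hint2 : Integrable (Function.uncurry fun (φ : ℝ) (V : E3) =>
      1 - cos ⟪V, (2:ℝ) • etaf ξ L (rotL φ ω)⟫) (Φ.prod (Th Ψ)) := by
    have hc : Continuous (fun p : ℝ × E3 => etaf ξ L (rotL p.1 ω)) :=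
      hetac.comp (continuous_fst.prodMk continuous_const)
    unfold Function.uncurry
    apply (integrable_const 1).sub
    apply cos_integrable
    apply Continuous.measurable
    fun_prop
  have hsw : ∫ φ, qf (Th Ψ) ((2:ℝ) • etaf ξ L (rotL φ ω)) ∂Φ
      = ∫ V, ∫ φ, (1 - cos ⟪V, (2:ℝ) • etaf ξ L (rotL φ ω)⟫) ∂Φ ∂(Th Ψ) :=
    integral_integral_swap hint2
  rw [hsw, ← integral_const_mul]
  apply integral_mono
  · refine Integrable.mono' (integrable_const (1:ℝ)) (Continuous.aestronglyMeasurable (min_cont _ ξ)) ?_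
    filter_upwards with V
    rw [Real.norm_of_nonneg (le_min zero_le_one (mul_nonneg (by positivity) (hCS V)))]
    exact min_le_left _ _
  · exact hint2.integral_prod_right.const_mul 4
  intro V
  beta_reduce
  obtain ⟨A, B, hAB, hφ⟩ := eta_rot_inner hL h1 V
  simp_rw [hφ]
  have h3 := avg_lower A B
  rw [intervalIntegral.integral_of_le (by positivity)] at h3
  refine le_trans ?_ h3
  rw [hAB]
  apply min_le_min_left
  apply mul_le_mul_of_nonneg_right _ (hCS V)
  nlinarith

lemma PP_le_min (Θ : Measure E3) [IsProbabilityMeasure Θ] {S : ℝ} (hS : 0 ≤ S) :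
    PP Θ S ≤ ∫ V, min 1 (S * ‖V‖^2) ∂Θ := by
  apply integral_mono (PP_integrable Θ hS)
  · refine Integrable.mono' (integrable_const (1:ℝ)) (Continuous.aestronglyMeasurable (by fun_prop)) ?_
    filter_upwards with V
    rw [Real.norm_of_nonneg (by positivity)]
    exact min_le_left _ _
  intro V
  beta_reduce
  apply le_min
  · linarith [exp_pos (-(S * ‖V‖^2))]
  · linarith [Real.add_one_le_exp (-(S * ‖V‖^2))]

lemma PP_sm (Θ : Measure E3) [IsProbabilityMeasure Θ] : StronglyMeasurable (fun ω => PP Θ (Sf ω)) := by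
  unfold PP
  apply StronglyMeasurable.integral_prod_right
    (f := fun (ω V : E3) => 1 - exp (-(Sf ω * ‖V‖^2)))
  apply Continuous.stronglyMeasurable
  have := Sf_cont
  unfold Function.uncurry
  fun_prop

lemma min_add_le {a b : ℝ} (ha : 0 ≤ a) (hb : 0 ≤ b) : min 1 (a + b) ≤ min 1 a + min 1 b := by
  rcases le_total 1 a with h1 | h1 <;> rcases le_total 1 b with h2 | h2 <;>
    simp only [min_eq_left, min_eq_right, h1, h2] 
  · exact (min_le_left _ _).trans (by linarith)
  · exact (min_le_left _ _).trans (by linarith)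
  · exact (min_le_left _ _).trans (by linarith)
  · exact min_le_right _ _

lemma min_scale {c y : ℝ} (hc : 0 ≤ c) (hc1 : c ≤ 1) (hy : 0 ≤ y) : c * min 1 y ≤ min 1 (c * y) := by
  apply le_min
  · exact mul_le_one₀ hc1 (by positivity) (min_le_left _ _)
  · gcongr; exact min_le_right _ _

set_option maxHeartbeats 1000000 in
lemma geo_key {ρ : ℝ} (hρ : 0 < ρ) {ξ1 ξ2 : E3} (hξ1 : ‖ξ1 - ρ • (EuclideanSpace.single 1 1 : E3)‖ ≤ ρ/10)
    (hξ2 : ‖ξ2 - ρ • (EuclideanSpace.single 2 1 : E3)‖ ≤ ρ/10) (V : E3) :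
    1/5 * ρ^2 * ‖V‖^2 ≤ (‖ξ1‖^2 * ‖V‖^2 - ⟪V, ξ1⟫^2) + (‖ξ2‖^2 * ‖V‖^2 - ⟪V, ξ2⟫^2) := by
  have low : ∀ (ξ d : E3), ‖d‖ = 1 → ‖ξ - ρ • d‖ ≤ ρ/10 → ∀ x : ℝ, ⟪V, d⟫ = x →
      0.81 * ρ^2 * ‖V‖^2 - (ρ * |x| + ρ/10 * ‖V‖)^2 ≤ ‖ξ‖^2 * ‖V‖^2 - ⟪V, ξ⟫^2 := by
    intro ξ d hd h x hx
    have hdn : ‖ρ • d‖ = ρ := by rw [norm_smul, hd, Real.norm_of_nonneg hρ.le, mul_one]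
    have h1 : 0.9 * ρ ≤ ‖ξ‖ := by
      have := norm_sub_norm_le (ρ • d) ξ
      rw [norm_sub_rev, hdn] at this
      linarith
    have h2 : (0.9 * ρ)^2 ≤ ‖ξ‖^2 := by gcongr
    have h3 : ⟪V, ξ⟫ = ρ * x + ⟪V, ξ - ρ • d⟫ := by
      rw [inner_sub_right, inner_smul_right, hx]; ring
    have h4 : |⟪V, ξ⟫| ≤ ρ * |x| + ρ/10 * ‖V‖ := by
      rw [h3]
      refine (abs_add_le _ _).trans ?_
      rw [abs_mul, abs_of_pos hρ]
      gcongr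
      refine (abs_real_inner_le_norm _ _).trans ?_
      rw [mul_comm]; gcongr
    have h5 : ⟪V, ξ⟫^2 ≤ (ρ * |x| + ρ/10 * ‖V‖)^2 := by rw [← sq_abs]; gcongr
    have h6 : (0.9 * ρ)^2 * ‖V‖^2 ≤ ‖ξ‖^2 * ‖V‖^2 := by gcongr
    nlinarith
  have l1 := low ξ1 (EuclideanSpace.single 1 1) (by simp) hξ1 (V 1) (by simp [EuclideanSpace.inner_single_right])
  have l2 := low ξ2 (EuclideanSpace.single 2 1) (by simp) hξ2 (V 2) (by simp [EuclideanSpace.inner_single_right])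
  have hV := norm_sq_coord V
  have b1 : |V 1| ≤ ‖V‖ := by
    apply abs_le_of_sq_le_sq _ (norm_nonneg _); nlinarith [sq_nonneg (V 0), sq_nonneg (V 2)]
  have b2 : |V 2| ≤ ‖V‖ := by
    apply abs_le_of_sq_le_sq _ (norm_nonneg _); nlinarith [sq_nonneg (V 0), sq_nonneg (V 1)]
  have s1 := sq_abs (V 1)
  have s2 := sq_abs (V 2)
  have k1 : |V 1| * ‖V‖ ≤ ‖V‖^2 := by nlinarith [norm_nonneg V]
  have k2 : |V 2| * ‖V‖ ≤ ‖V‖^2 := by nlinarith [norm_nonneg V]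
  have k3 : |V 1|^2 + |V 2|^2 ≤ ‖V‖^2 := by nlinarith [sq_nonneg (V 0)]
  have k4 : (ρ * |V 1| + ρ/10 * ‖V‖)^2 + (ρ * |V 2| + ρ/10 * ‖V‖)^2
        = ρ^2 * ((|V 1|^2 + |V 2|^2) + (1/5) * (|V 1| * ‖V‖ + |V 2| * ‖V‖) + (1/50) * ‖V‖^2) := by
      ring
  have k5 : ρ^2 * ((|V 1|^2 + |V 2|^2) + (1/5) * (|V 1| * ‖V‖ + |V 2| * ‖V‖) + (1/50) * ‖V‖^2)
        ≤ ρ^2 * (1.42 * ‖V‖^2) := by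
      gcongr
      linarith
  nlinarith

set_option maxHeartbeats 1000000 in
/-- Finiteness of the tail functional at a fixed time. -/
lemma PP_int (Ψ : Measure E3) [IsProbabilityMeasure Ψ] {m : Measure E3} [SFinite m] (hm : Ker m)
    (hS : Integrable Sf m)
    (hG : ∀ ξ : E3, ξ ≠ 0 → ∀ L : E3 ≃ₗᵢ[ℝ] E3, ‖ξ‖ • L e0 = ξ →
      Integrable (fun ω => Gf (charFn Ψ) ξ (L ω)) m) :
    Integrable (fun ω => PP (Th Ψ) (Sf ω)) m := by
  obtain ⟨ρ, hρ, hR⟩ : ∃ ρ > 0, ∀ ξ : E3, ‖ξ‖ ≤ 2*ρ → 1/2 ≤ ‖charFn Ψ ξ‖^2 := by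
    have hc : ContinuousAt (fun ξ => ‖charFn Ψ ξ‖^2) 0 := by
      have := charFn_cont Ψ; fun_prop
    have h1 : (1/2:ℝ) < ‖charFn Ψ 0‖^2 := by rw [charFn_zero]; norm_num
    obtain ⟨ε, hε, h2⟩ := Metric.eventually_nhds_iff.1 (hc.eventually (lt_mem_nhds h1))
    refine ⟨ε/4, by positivity, fun ξ hξ => (h2 ?_).le⟩
    rw [dist_zero_right]; linarith
  set d1 : E3 := EuclideanSpace.single 1 1 with hd1
  set d2 : E3 := EuclideanSpace.single 2 1 with hd2
  obtain ⟨ξ1, hξ1, L1, hL1, hi1⟩ := q_eta_int Ψ hm hS hG hρ hR (d := d1) (by simp [hd1])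
  obtain ⟨ξ2, hξ2, L2, hL2, hi2⟩ := q_eta_int Ψ hm hS hG hρ hR (d := d2) (by simp [hd2])
  have ha1 := avg_int Ψ hm hL1 hi1
  have ha2 := avg_int Ψ hm hL2 hi2
  set c : ℝ := min 1 (2*ρ^2/5) with hc
  have hc0 : 0 < c := by positivity
  have hc1 : c ≤ 1 := min_le_left _ _
  have hCS : ∀ ξ V : E3, 0 ≤ ‖ξ‖^2 * ‖V‖^2 - ⟪V, ξ⟫^2 := by
    intro ξ V
    have := abs_real_inner_le_norm V ξ
    have h2 : |⟪V, ξ⟫|^2 ≤ (‖V‖ * ‖ξ‖)^2 := by gcongr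
    rw [sq_abs] at h2
    nlinarith
  refine Integrable.mono' ((ha1.add ha2).const_mul c⁻¹) (PP_sm _).aestronglyMeasurable ?_
  filter_upwards [hm.ae] with ω hω
  obtain ⟨hS0, hS1⟩ := Sf_bounds hω.1 hω.2
  rw [Real.norm_of_nonneg (PP_nonneg _ hS0), Pi.add_apply, inv_mul_eq_div, le_div_iff₀ hc0]
  have hmi : ∀ ξ, Integrable (fun V : E3 => min 1 (2 * Sf ω * (‖ξ‖^2 * ‖V‖^2 - ⟪V, ξ⟫^2))) (Th Ψ) := by
    intro ξ
    refine Integrable.mono' (integrable_const (1:ℝ)) (Continuous.aestronglyMeasurable (by fun_prop)) ?_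
    filter_upwards with V
    rw [Real.norm_of_nonneg (le_min zero_le_one (mul_nonneg (by positivity) (hCS ξ V)))]
    exact min_le_left _ _
  rw [← integral_add (hmi ξ1) (hmi ξ2)]
  have hmS : Integrable (fun V : E3 => min 1 (Sf ω * ‖V‖^2)) (Th Ψ) := by
    refine Integrable.mono' (integrable_const (1:ℝ)) (Continuous.aestronglyMeasurable (by fun_prop)) ?_
    filter_upwards with V
    rw [Real.norm_of_nonneg (by positivity)]
    exact min_le_left _ _
  calc PP (Th Ψ) (Sf ω) * c ≤ (∫ V, min 1 (Sf ω * ‖V‖^2) ∂(Th Ψ)) * c := by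
        gcongr; exact PP_le_min _ hS0
    _ = ∫ V, c * min 1 (Sf ω * ‖V‖^2) ∂(Th Ψ) := by rw [integral_const_mul, mul_comm]
    _ ≤ _ := by
      apply integral_mono (hmS.const_mul c) ((hmi ξ1).add (hmi ξ2))
      intro V
      beta_reduce
      refine le_trans ?_ (min_add_le (mul_nonneg (by positivity) (hCS ξ1 V))
        (mul_nonneg (by positivity) (hCS ξ2 V)))
      refine (min_scale hc0.le hc1 (by positivity)).trans ?_
      apply min_le_min_left
      have key := geo_key hρ hξ1 hξ2 V
      calc c * (Sf ω * ‖V‖^2) ≤ (2*ρ^2/5) * (Sf ω * ‖V‖^2) := by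
            gcongr; exact min_le_right _ _
        _ = 2 * Sf ω * (1/5 * ρ^2 * ‖V‖^2) := by ring
        _ ≤ 2 * Sf ω * ((‖ξ1‖^2 * ‖V‖^2 - ⟪V, ξ1⟫^2) + (‖ξ2‖^2 * ‖V‖^2 - ⟪V, ξ2⟫^2)) := by gcongr
        _ = _ := by ring

/-! ## Gaussian averages -/

/-- centred isotropic Gaussian -/
def gam (S : ℝ) : Measure E3 := (ProbabilityTheory.stdGaussian E3).map (fun x => √(2*S) • x)

instance (S : ℝ) : IsProbabilityMeasure (gam S) :=
  Measure.isProbabilityMeasure_map (by fun_prop)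

lemma gam_iso (S : ℝ) (L : E3 ≃ₗᵢ[ℝ] E3) : MeasurePreserving L (gam S) (gam S) := by
  refine ⟨L.continuous.measurable, ?_⟩
  unfold gam
  rw [Measure.map_map L.continuous.measurable (by fun_prop)]
  have : (⇑L ∘ fun x => √(2*S) • x) = (fun x => √(2*S) • x) ∘ ⇑L := by
    ext1 x; simp
  rw [this, ← Measure.map_map (by fun_prop) L.continuous.measurable,
    ProbabilityTheory.stdGaussian_map L]

lemma gam_integral {S : ℝ} (L : E3 ≃ₗᵢ[ℝ] E3) (f : E3 → ℝ) :
    ∫ x, f (L x) ∂(gam S) = ∫ x, f x ∂(gam S) :=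
  (gam_iso S L).integral_comp L.toHomeomorph.measurableEmbedding f

lemma gam_cos {S : ℝ} (hS : 0 ≤ S) (V : E3) : ∫ ξ, cos ⟪V, ξ⟫ ∂(gam S) = exp (-(S * ‖V‖^2)) := by
  unfold gam
  rw [integral_map (by fun_prop) (Continuous.aestronglyMeasurable (by fun_prop))]
  have h := ProbabilityTheory.charFun_stdGaussian (E := E3) (√(2*S) • V)
  rw [charFun_apply] at h
  have h2 := congrArg Complex.re h
  rw [← RCLike.re_eq_complex_re, ← integral_re] at h2
  · have e1 : ∀ x : E3, RCLike.re (Complex.exp (⟪x, √(2*S) • V⟫ * Complex.I)) = cos ⟪V, √(2*S) • x⟫ := by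
      intro x
      rw [RCLike.re_eq_complex_re, Complex.exp_ofReal_mul_I_re, inner_smul_right, inner_smul_right,
        real_inner_comm]
    simp_rw [e1] at h2
    rw [h2, RCLike.re_eq_complex_re]
    have e2 : -((‖√(2*S) • V‖:ℝ):ℂ)^2/2 = ((-(S * ‖V‖^2):ℝ):ℂ) := by
      rw [norm_smul, Real.norm_of_nonneg (sqrt_nonneg _)]
      have : ((√(2*S) * ‖V‖ : ℝ):ℂ)^2 = ((2*S*‖V‖^2:ℝ):ℂ) := by
        rw [← Complex.ofReal_pow, mul_pow, Real.sq_sqrt (by positivity)]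
      rw [this]; push_cast; ring
    rw [e2, ← Complex.ofReal_exp, Complex.ofReal_re]
  · refine Integrable.mono' (integrable_const (1:ℝ)) (Continuous.aestronglyMeasurable (by fun_prop)) ?_
    filter_upwards with x
    rw [Complex.norm_exp_ofReal_mul_I]

lemma gam_cos_scale {S : ℝ} (hS : 0 ≤ S) (V : E3) (c : ℝ) :
    ∫ ξ, cos ⟪V, c • ξ⟫ ∂(gam S) = exp (-(c^2 * S * ‖V‖^2)) := by
  have : ∀ ξ, ⟪V, c • ξ⟫ = ⟪c • V, ξ⟫ := fun ξ => by rw [inner_smul_right, real_inner_smul_left]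
  simp_rw [this]
  rw [gam_cos hS, norm_smul, mul_pow, Real.norm_eq_abs, sq_abs]
  ring_nf

lemma gam_sq (S : ℝ) : Integrable (fun ξ : E3 => ‖ξ‖^2) (gam S) := by
  unfold gam
  rw [integrable_map_measure (Continuous.aestronglyMeasurable (by fun_prop)) (by fun_prop)]
  have h : MemLp id 2 (ProbabilityTheory.stdGaussian E3) :=
    ProbabilityTheory.IsGaussian.memLp_id _ 2 (by simp)
  have h2 := h.integrable_norm_pow (by norm_num)
  have h3 := h2.const_mul ((√(2*S))^2)
  refine h3.congr ?_
  filter_upwards with x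
  simp [norm_smul, mul_pow]

lemma qf_gam (Θ : Measure E3) [IsProbabilityMeasure Θ] {S : ℝ} (hS : 0 ≤ S) :
    ∫ ξ, qf Θ ξ ∂(gam S) = PP Θ S := by
  unfold qf
  have hi : Integrable (Function.uncurry fun (ξ V : E3) => 1 - cos ⟪V, ξ⟫) ((gam S).prod Θ) := by
    unfold Function.uncurry
    exact (integrable_const 1).sub (cos_integrable _ (by apply Continuous.measurable; fun_prop))
  rw [integral_integral_swap hi]
  unfold PP
  congr 1; ext V
  rw [integral_sub (integrable_const _) (cos_integrable _ (by fun_prop)), gam_cos hS]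
  simp

/-- chosen isometry -/
def Lx (ξ : E3) : E3 ≃ₗᵢ[ℝ] E3 := RotL (‖ξ‖⁻¹ • ξ)

lemma Lx_spec (ξ : E3) : ‖ξ‖ • Lx ξ e0 = ξ := by
  by_cases h : ξ = 0
  · simp [h]
  have h' : ‖ξ‖ ≠ 0 := by simpa using h
  rw [Lx, RotL_e0 (by rw [norm_smul]; simp [h']), smul_smul, mul_inv_cancel₀ h', one_smul]

lemma Lx_meas : Measurable (fun p : E3 × E3 => Lx p.1 p.2) := by
  unfold Lx
  simp only [RotL_apply]
  unfold Rot
  fun_prop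

/-- post-collisional frequency -/
def yp (ξ ω : E3) : E3 := (1/2:ℝ) • ξ + (‖ξ‖/2) • Lx ξ ω

lemma yp_meas : Measurable (fun p : E3 × E3 => yp p.1 p.2) := by
  have := Lx_meas
  unfold yp
  fun_prop

lemma nu_ne : nu univ ≠ 0 := by
  rw [nu, Measure.map_apply measurable_subtype_coe MeasurableSet.univ, preimage_univ, sphμ]
  exact Measure.measure_univ_ne_zero.2 (Measure.toSphere_ne_zero _)

lemma nu_integral (L : E3 ≃ₗᵢ[ℝ] E3) (f : E3 → ℝ) :
    ∫ x, f (L x) ∂nu = ∫ x, f x ∂nu :=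
  (nu_iso L).integral_comp L.toHomeomorph.measurableEmbedding f

lemma iso_between {x y : E3} (h : ‖x‖ = ‖y‖) : ∃ R : E3 ≃ₗᵢ[ℝ] E3, R x = y := by
  refine ⟨(Lx x).symm.trans (Lx y), ?_⟩
  have hx := Lx_spec x
  have hy := Lx_spec y
  rw [LinearIsometryEquiv.trans_apply]
  nth_rewrite 2 [← hx]
  rw [map_smul, LinearIsometryEquiv.symm_apply_apply, map_smul, h, hy]

lemma nu_cos {x y : E3} (h : ‖x‖ = ‖y‖) (a : ℝ) :
    ∫ u, cos ⟪a • u, x⟫ ∂nu = ∫ u, cos ⟪a • u, y⟫ ∂nu := by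
  obtain ⟨R, rfl⟩ := iso_between h
  rw [← nu_integral R (fun u => cos ⟪a • u, R x⟫)]
  congr 1; ext u
  rw [← map_smul, R.inner_map_map]

lemma J_indep {m : Measure E3} (hm : Ker m) {ξ : E3} {L L' : E3 ≃ₗᵢ[ℝ] E3} (hL : ‖ξ‖ • L e0 = ξ)
    (hL' : ‖ξ‖ • L' e0 = ξ) {F : Type*} [NormedAddCommGroup F] [NormedSpace ℝ F] (f : E3 → F) :
    ∫ ω, f ((1/2:ℝ) • ξ + (‖ξ‖/2) • L ω) ∂m = ∫ ω, f ((1/2:ℝ) • ξ + (‖ξ‖/2) • L' ω) ∂m := by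
  by_cases h : ξ = 0
  · simp [h]
  have h' : ‖ξ‖ ≠ 0 := by simpa using h
  have hfix : (L'.trans L.symm) e0 = e0 := by
    rw [LinearIsometryEquiv.trans_apply]
    have : L' e0 = L e0 := smul_right_injective _ h' (hL'.trans hL.symm)
    rw [this, LinearIsometryEquiv.symm_apply_apply]
  rw [← hm.integral_comp hfix (fun ω => f ((1/2:ℝ) • ξ + (‖ξ‖/2) • L ω))]
  simp

lemma W_iso {m : Measure E3} (hm : Ker m) {S : ℝ} (R : E3 ≃ₗᵢ[ℝ] E3) (V : E3) :
    ∫ ξ, ∫ ω, cos ⟪R V, yp ξ ω⟫ ∂m ∂(gam S) = ∫ ξ, ∫ ω, cos ⟪V, yp ξ ω⟫ ∂m ∂(gam S) := by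
  rw [← gam_integral R]
  congr 1; ext ξ
  unfold yp
  have h := J_indep hm (ξ := R ξ) (L := Lx (R ξ)) (L' := (Lx ξ).trans R) (Lx_spec _)
    (by rw [R.norm_map, LinearIsometryEquiv.trans_apply, ← map_smul, Lx_spec]) (fun y => cos ⟪R V, y⟫)
  rw [h]
  congr 1; ext ω
  rw [R.norm_map, LinearIsometryEquiv.trans_apply, ← map_smul, ← map_smul, ← map_add,
    R.inner_map_map]

lemma W_eq {m : Measure E3} [IsFiniteMeasure m] (hm : Ker m) {S : ℝ} (hS : 0 ≤ S) (V : E3) :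
    ∫ ξ, ∫ ω, cos ⟪V, yp ξ ω⟫ ∂m ∂(gam S) = ∫ ω, exp (-((1 - Sf ω) * S * ‖V‖^2)) ∂m := by
  have hyp := yp_meas
  have hSf := Sf_cont.measurable
  have hn : nu.real univ ≠ 0 := by
    rw [measureReal_def, ENNReal.toReal_ne_zero]
    exact ⟨nu_ne, measure_ne_top _ _⟩
  have h1 : ∫ u, (∫ ξ, ∫ ω, cos ⟪‖V‖ • u, yp ξ ω⟫ ∂m ∂(gam S)) ∂nu =
      nu.real univ * ∫ ξ, ∫ ω, cos ⟪V, yp ξ ω⟫ ∂m ∂(gam S) := by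
    have : ∀ᵐ u ∂nu, (∫ ξ, ∫ ω, cos ⟪‖V‖ • u, yp ξ ω⟫ ∂m ∂(gam S)) =
        ∫ ξ, ∫ ω, cos ⟪V, yp ξ ω⟫ ∂m ∂(gam S) := by
      filter_upwards [nu_norm] with u hu
      obtain ⟨R, hR⟩ := iso_between (x := V) (y := ‖V‖ • u) (by rw [norm_smul, hu]; simp)
      rw [← hR]; exact W_iso hm R V
    rw [integral_congr_ae this, integral_const, smul_eq_mul]
  have hf : ∀ f : (E3 × E3) × E3 → E3, Measurable f →
      ∫ u, (∫ ξ, ∫ ω, cos ⟪‖V‖ • u, f ((ξ, ω), u)⟫ ∂m ∂(gam S)) ∂nu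
        = ∫ p : E3 × E3, ∫ u, cos ⟪‖V‖ • u, f (p, u)⟫ ∂nu ∂((gam S).prod m) := by
    intro f hf
    have hi : Integrable (Function.uncurry fun (u : E3) (p : E3 × E3) => cos ⟪‖V‖ • u, f (p, u)⟫)
        (nu.prod ((gam S).prod m)) := by
      unfold Function.uncurry
      exact cos_integrable _ (by fun_prop)
    rw [← integral_integral_swap hi]
    congr 1; ext u
    rw [integral_prod]
    exact cos_integrable _ (by fun_prop)
  have hA := hf (fun p => yp p.1.1 p.1.2) (by fun_prop)
  have hB := hf (fun p => √(1 - Sf p.1.2) • p.1.1) (by fun_prop)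
  have hAB : ∫ p : E3 × E3, ∫ u, cos ⟪‖V‖ • u, yp p.1 p.2⟫ ∂nu ∂((gam S).prod m)
      = ∫ p : E3 × E3, ∫ u, cos ⟪‖V‖ • u, √(1 - Sf p.2) • p.1⟫ ∂nu ∂((gam S).prod m) := by
    apply integral_congr_ae
    have := (Measure.quasiMeasurePreserving_snd (μ := gam S) (ν := m)).ae hm.ae
    filter_upwards [this] with p hp
    obtain ⟨hS0, hS1⟩ := Sf_bounds hp.1 hp.2
    apply nu_cos
    rw [norm_smul, Real.norm_of_nonneg (sqrt_nonneg _)]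
    apply (sq_eq_sq₀ (by positivity) (by positivity)).1
    unfold yp
    rw [plus_norm (Lx_spec _) hp.1, mul_pow, Real.sq_sqrt (by linarith)]
  beta_reduce at hA hB
  rw [h1, hAB, ← hB] at hA
  apply mul_left_cancel₀ hn
  rw [hA]
  have : ∀ᵐ u ∂nu, (∫ ξ, ∫ ω, cos ⟪‖V‖ • u, √(1 - Sf ω) • ξ⟫ ∂m ∂(gam S)) =
      ∫ ω, exp (-((1 - Sf ω) * S * ‖V‖^2)) ∂m := by
    filter_upwards [nu_norm] with u hu
    rw [integral_integral_swap (by unfold Function.uncurry; exact cos_integrable _ (by fun_prop))]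
    apply integral_congr_ae
    filter_upwards [hm.ae] with ω hω
    obtain ⟨hS0, hS1⟩ := Sf_bounds hω.1 hω.2
    rw [gam_cos_scale hS, Real.sq_sqrt (by linarith), norm_smul, hu]
    simp
  rw [integral_congr_ae this, integral_const, smul_eq_mul]

lemma qyp_int (Θ : Measure E3) [IsProbabilityMeasure Θ] {m : Measure E3} [IsFiniteMeasure m] (hm : Ker m)
    {S : ℝ} (hS : 0 ≤ S) :
    ∫ ξ, ∫ ω, qf Θ (yp ξ ω) ∂m ∂(gam S) = ∫ ω, PP Θ ((1 - Sf ω) * S) ∂m := by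
  have hyp := yp_meas
  have hSf := Sf_cont.measurable
  have hi1 : Integrable (fun p : (E3 × E3) × E3 => 1 - cos ⟪p.2, yp p.1.1 p.1.2⟫)
      (((gam S).prod m).prod Θ) := (integrable_const 1).sub (cos_integrable _ (by fun_prop))
  have hq : Integrable (fun p : E3 × E3 => qf Θ (yp p.1 p.2)) ((gam S).prod m) :=
    hi1.integral_prod_left
  have e1 : ∫ ξ, ∫ ω, qf Θ (yp ξ ω) ∂m ∂(gam S) = ∫ p : E3 × E3, qf Θ (yp p.1 p.2) ∂((gam S).prod m) :=
    (integral_prod _ hq).symm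
  have e2 : ∫ p : E3 × E3, qf Θ (yp p.1 p.2) ∂((gam S).prod m) =
      ∫ V, ∫ p : E3 × E3, (1 - cos ⟪V, yp p.1 p.2⟫) ∂((gam S).prod m) ∂Θ :=
    integral_integral_swap hi1
  have e3 : ∀ V, ∫ p : E3 × E3, (1 - cos ⟪V, yp p.1 p.2⟫) ∂((gam S).prod m) =
      ∫ ω, (1 - exp (-((1 - Sf ω) * S * ‖V‖^2))) ∂m := by
    intro V
    have hc : Integrable (fun p : E3 × E3 => cos ⟪V, yp p.1 p.2⟫) ((gam S).prod m) :=
      cos_integrable _ (by fun_prop)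
    rw [integral_sub (integrable_const _) hc, integral_prod _ hc, W_eq hm hS, integral_sub (integrable_const _)]
    · have : ((gam S).prod m).real univ = m.real univ := by
        rw [measureReal_def, measureReal_def, ← univ_prod_univ, Measure.prod_prod, measure_univ, one_mul]
      simp [this]
    · refine Integrable.mono' (integrable_const (1:ℝ)) (by fun_prop) ?_
      filter_upwards [hm.ae] with ω hω
      obtain ⟨hS0, hS1⟩ := Sf_bounds hω.1 hω.2
      rw [Real.norm_of_nonneg (exp_pos _).le, exp_le_one_iff, neg_nonpos]
      have : 0 ≤ 1 - Sf ω := by linarith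
      positivity
  rw [e1, e2]
  simp_rw [e3]
  rw [integral_integral_swap]
  · rfl
  · unfold Function.uncurry
    refine Integrable.mono' (integrable_const (1:ℝ)) (by fun_prop) ?_
    have := (Measure.quasiMeasurePreserving_snd (μ := Θ) (ν := m)).ae hm.ae
    filter_upwards [this] with p hp
    obtain ⟨hS0, hS1⟩ := Sf_bounds hp.1 hp.2
    have : 0 ≤ 1 - Sf p.2 := by linarith
    have h2 : exp (-((1 - Sf p.2) * S * ‖p.1‖^2)) ≤ 1 := by
      rw [exp_le_one_iff, neg_nonpos]; positivity
    rw [Real.norm_of_nonneg (by linarith)]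
    linarith [exp_pos (-((1 - Sf p.2) * S * ‖p.1‖^2))]

/-! ## Lower bound on the averaged collision term -/

lemma PP_contr (Θ : Measure E3) [IsProbabilityMeasure Θ] {S s : ℝ} (hS : 0 ≤ S) (h0 : 0 ≤ s) (h1 : s ≤ 1/2) :
    -(s * PP Θ S) ≤ PP Θ ((1 - s) * S) - PP Θ S := by
  have hS' : 0 ≤ (1 - s) * S := mul_nonneg (by linarith) hS
  have : PP Θ S - PP Θ ((1 - s) * S) ≤ s * PP Θ S := by
    unfold PP
    rw [← integral_sub (PP_integrable Θ hS) (PP_integrable Θ hS'), ← integral_const_mul]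
    apply integral_mono ((PP_integrable Θ hS).sub (PP_integrable Θ hS')) ((PP_integrable Θ hS).const_mul s)
    intro V
    simp only [Pi.sub_apply]
    have h := convexOn_exp.2 (mem_univ (-(S * ‖V‖^2))) (mem_univ 0)
      (show (0:ℝ) ≤ 1 - s by linarith) h0 (by ring)
    simp only [smul_eq_mul, mul_zero, add_zero, exp_zero, mul_one] at h
    rw [show (1 - s) * -(S * ‖V‖^2) = -((1 - s) * S * ‖V‖^2) by ring] at h
    nlinarith
  linarith

/-- symmetrized difference -/
def Hs (Ψ : Measure E3) (ξ ω : E3) : ℝ :=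
  (qf (Th Ψ) (yp ξ ω) + qf (Th Ψ) (yp ξ (rotL π ω))) / 2 - qf (Th Ψ) ξ

lemma Hs_meas (Ψ : Measure E3) [IsProbabilityMeasure Ψ] : Measurable (fun p : E3 × E3 => Hs Ψ p.1 p.2) := by
  have h1 := yp_meas
  have h2 := (qf_cont Ψ).measurable
  have h3 : Measurable (fun p : E3 × E3 => yp p.1 (rotL π p.2)) :=
    h1.comp (measurable_fst.prodMk ((rotL π).continuous.measurable.comp measurable_snd))
  unfold Hs
  exact (((h2.comp h1).add (h2.comp h3)).div_const 2).sub (h2.comp measurable_fst)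

lemma Hs_bound (Ψ : Measure E3) [IsProbabilityMeasure Ψ] (ξ : E3) {ω : E3} (h1 : ‖ω‖ = 1) (h0 : 0 ≤ ω 0) :
    |Hs Ψ ξ ω| ≤ 8 * (1 + ‖ξ‖^2) * (Sf ω + PP (Th Ψ) (Sf ω)) := by
  have h := sym_bound_q (Th Ψ) ξ (etaf ξ (Lx ξ) ω) (Sf_bounds h1 h0).1 (eta_norm_le h1 h0)
  have e1 : yp ξ ω = (1 - Sf ω) • ξ + etaf ξ (Lx ξ) ω := plus_eq (Lx_spec ξ) ω
  have e2 : yp ξ (rotL π ω) = (1 - Sf ω) • ξ - etaf ξ (Lx ξ) ω := by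
    unfold yp
    rw [plus_eq (Lx_spec ξ), Sf_rot, eta_rot, ← sub_eq_add_neg]
  rw [← e1, ← e2] at h
  have e3 : Hs Ψ ξ ω = (qf (Th Ψ) (yp ξ ω) + qf (Th Ψ) (yp ξ (rotL π ω)) - 2 * qf (Th Ψ) ξ) / 2 := by
    unfold Hs; ring
  rw [e3, abs_div, abs_two]
  linarith

/-- truncation sets -/
def An (n : ℕ) : Set E3 := {ω | 1/((n:ℝ)+1) < Sf ω}

lemma An_meas (n : ℕ) : MeasurableSet (An n) := measurableSet_lt measurable_const Sf_cont.measurable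

lemma An_mono : Monotone An := by
  intro i j hij ω hω
  have hω' : 1/((i:ℝ)+1) < Sf ω := hω
  refine lt_of_le_of_lt (b := 1/((i:ℝ)+1)) ?_ hω'
  apply one_div_le_one_div_of_le (by positivity)
  have : (i:ℝ) ≤ j := by exact_mod_cast hij
  linarith

lemma An_union : ⋃ n, An n = {ω | 0 < Sf ω} := by
  ext ω
  simp only [mem_iUnion, An, mem_ofPred_eq]
  constructor
  · rintro ⟨n, hn⟩
    exact lt_trans (by positivity) hn
  · intro h
    exact exists_nat_one_div_lt h

lemma An_finite {m : Measure E3} (hS : Integrable Sf m) (n : ℕ) : IsFiniteMeasure (m.restrict (An n)) := by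
  constructor
  rw [Measure.restrict_apply_univ]
  exact hS.measure_gt_lt_top (by positivity)

lemma An_ker {m : Measure E3} (hm : Ker m) (n : ℕ) : Ker (m.restrict (An n)) := by
  refine ⟨ae_restrict_of_ae hm.ae, fun L hL => ?_⟩
  have h := (hm.inv L hL).restrict_preimage (An_meas n)
  have e : L ⁻¹' (An n) = An n := by
    ext ω
    have : Sf (L ω) = Sf ω := by
      unfold Sf
      rw [← inner_e0 (L ω), ← inner_e0 ω]
      nth_rewrite 1 [← hL]
      rw [L.inner_map_map]
    simp only [An, mem_preimage, mem_ofPred_eq, this]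
  rwa [e] at h

lemma Hs_finite (Ψ : Measure E3) [IsProbabilityMeasure Ψ] {m : Measure E3} [IsFiniteMeasure m] (hm : Ker m)
    (hS : Integrable Sf m) {S : ℝ} (hS0 : 0 ≤ S) :
    -((∫ ω, Sf ω ∂m) * PP (Th Ψ) S) ≤ ∫ ξ, ∫ ω, Hs Ψ ξ ω ∂m ∂(gam S) := by
  have hyp := yp_meas
  have hqc := qf_cont Ψ
  have hqm := hqc.measurable
  have hqi : ∀ ξ, Integrable (fun ω => qf (Th Ψ) (yp ξ ω)) m := by
    intro ξ
    refine Integrable.mono' (integrable_const (2:ℝ))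
      (hqm.comp (hyp.comp measurable_prodMk_left)).aestronglyMeasurable ?_
    filter_upwards with ω
    rw [Real.norm_of_nonneg (qf_nonneg _ _)]
    exact qf_le_two _ _
  have hqp : Integrable (fun p : E3 × E3 => qf (Th Ψ) (yp p.1 p.2)) ((gam S).prod m) := by
    refine Integrable.mono' (integrable_const (2:ℝ)) (hqm.comp hyp).aestronglyMeasurable ?_
    filter_upwards with ω
    rw [Real.norm_of_nonneg (qf_nonneg _ _)]
    exact qf_le_two _ _
  have hqg : Integrable (fun ξ => qf (Th Ψ) ξ) (gam S) := by
    refine Integrable.mono' (integrable_const (2:ℝ)) hqm.aestronglyMeasurable ?_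
    filter_upwards with ω
    rw [Real.norm_of_nonneg (qf_nonneg _ _)]
    exact qf_le_two _ _
  have e1 : ∀ ξ, ∫ ω, Hs Ψ ξ ω ∂m = ∫ ω, qf (Th Ψ) (yp ξ ω) ∂m - m.real univ * qf (Th Ψ) ξ := by
    intro ξ
    have hr : Integrable (fun ω => qf (Th Ψ) (yp ξ (rotL π ω))) m :=
      (hm.int_comp (rotL_e0 π) (f := fun ω => qf (Th Ψ) (yp ξ ω))).2 (hqi ξ)
    have hs : Integrable (fun ω => (qf (Th Ψ) (yp ξ ω) + qf (Th Ψ) (yp ξ (rotL π ω))) / 2) m :=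
      ((hqi ξ).add hr).div_const 2
    unfold Hs
    rw [integral_sub hs (integrable_const _), integral_div,
      integral_add (hqi ξ) hr,
      hm.integral_comp (rotL_e0 π) (fun ω => qf (Th Ψ) (yp ξ ω)), integral_const, smul_eq_mul]
    ring
  simp_rw [e1]
  rw [integral_sub hqp.integral_prod_left (hqg.const_mul _), qyp_int (Th Ψ) hm hS0, integral_const_mul,
    qf_gam _ hS0]
  have hPi : Integrable (fun ω => PP (Th Ψ) ((1 - Sf ω) * S)) m := by
    refine Integrable.mono' (integrable_const (1:ℝ)) ?_ ?_
    · apply StronglyMeasurable.aestronglyMeasurable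
      unfold PP
      apply StronglyMeasurable.integral_prod_right
        (f := fun (ω V : E3) => 1 - exp (-((1 - Sf ω) * S * ‖V‖^2)))
      apply Continuous.stronglyMeasurable
      have := Sf_cont
      unfold Function.uncurry
      fun_prop
    · filter_upwards [hm.ae] with ω hω
      obtain ⟨h2, h3⟩ := Sf_bounds hω.1 hω.2
      have h4 : 0 ≤ (1 - Sf ω) * S := mul_nonneg (by linarith) hS0
      rw [Real.norm_of_nonneg (PP_nonneg _ h4)]
      exact PP_le_one _ h4
  have e2 : m.real univ * PP (Th Ψ) S = ∫ ω, PP (Th Ψ) S ∂m := by rw [integral_const, smul_eq_mul]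
  rw [e2, ← integral_sub hPi (integrable_const _), ← integral_mul_const, ← integral_neg]
  apply integral_mono_ae (hS.mul_const _).neg (hPi.sub (integrable_const _))
  filter_upwards [hm.ae] with ω hω
  obtain ⟨h2, h3⟩ := Sf_bounds hω.1 hω.2
  exact PP_contr _ hS0 h2 h3

lemma Hs_integrable (Ψ : Measure E3) [IsProbabilityMeasure Ψ] {m : Measure E3} [SFinite m] (hm : Ker m)
    (hS : Integrable Sf m) (hP : Integrable (fun ω => PP (Th Ψ) (Sf ω)) m) (S : ℝ) :
    Integrable (fun p : E3 × E3 => Hs Ψ p.1 p.2) ((gam S).prod m) := by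
  have hb : Integrable (fun p : E3 × E3 => (8 * (1 + ‖p.1‖^2)) * (Sf p.2 + PP (Th Ψ) (Sf p.2)))
      ((gam S).prod m) :=
    Integrable.mul_prod (((integrable_const 1).add (gam_sq S)).const_mul 8) (hS.add hP)
  refine hb.mono' (Hs_meas Ψ).aestronglyMeasurable ?_
  have := (Measure.quasiMeasurePreserving_snd (μ := gam S) (ν := m)).ae hm.ae
  filter_upwards [this] with p hp
  exact Hs_bound Ψ p.1 hp.1 hp.2

lemma Hs_lower (Ψ : Measure E3) [IsProbabilityMeasure Ψ] {m : Measure E3} [SFinite m] (hm : Ker m)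
    (hS : Integrable Sf m) (hP : Integrable (fun ω => PP (Th Ψ) (Sf ω)) m) {S : ℝ} (hS0 : 0 ≤ S) :
    -((∫ ω, Sf ω ∂m) * PP (Th Ψ) S) ≤ ∫ ξ, ∫ ω, Hs Ψ ξ ω ∂m ∂(gam S) := by
  have hi := Hs_integrable Ψ hm hS hP S
  have hg := hi.integral_prod_right
  have hsw : ∫ ξ, ∫ ω, Hs Ψ ξ ω ∂m ∂(gam S) = ∫ ω, ∫ ξ, Hs Ψ ξ ω ∂(gam S) ∂m :=
    integral_integral_swap hi
  have hlim := tendsto_setIntegral_of_monotone (μ := m) (f := fun ω => ∫ ξ, Hs Ψ ξ ω ∂(gam S))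
    An_meas An_mono hg.integrableOn
  have hfull : ∫ ω in ⋃ n, An n, ∫ ξ, Hs Ψ ξ ω ∂(gam S) ∂m = ∫ ω, ∫ ξ, Hs Ψ ξ ω ∂(gam S) ∂m := by
    apply setIntegral_eq_integral_of_ae_compl_eq_zero
    filter_upwards [hm.ae] with ω hω hn
    rw [An_union, mem_ofPred_eq, not_lt] at hn
    have hz : Sf ω = 0 := le_antisymm hn (Sf_bounds hω.1 hω.2).1
    have : ∀ ξ, Hs Ψ ξ ω = 0 := by
      intro ξ
      have h := Hs_bound Ψ ξ hω.1 hω.2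
      rw [hz] at h
      simpa [PP] using h
    simp [this]
  rw [hfull] at hlim
  rw [hsw]
  refine ge_of_tendsto' hlim fun n => ?_
  have := An_finite hS n
  have h := Hs_finite Ψ (An_ker hm n) hS.integrableOn hS0
  have hi' : Integrable (fun p : E3 × E3 => Hs Ψ p.1 p.2) ((gam S).prod (m.restrict (An n))) :=
    Hs_integrable Ψ (An_ker hm n) hS.integrableOn hP.integrableOn S
  have hsw' : ∫ ξ, ∫ ω, Hs Ψ ξ ω ∂(m.restrict (An n)) ∂(gam S)
      = ∫ ω in An n, ∫ ξ, Hs Ψ ξ ω ∂(gam S) ∂m := integral_integral_swap hi'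
  rw [hsw'] at h
  refine le_trans (neg_le_neg ?_) h
  apply mul_le_mul_of_nonneg_right _ (PP_nonneg _ hS0)
  apply setIntegral_le_integral hS
  filter_upwards [hm.ae] with ω hω using (Sf_bounds hω.1 hω.2).1

set_option linter.unusedSectionVars false
/-! ## Time evolution -/

/-- abstract solution -/
structure Sol (m : Measure E3) (Ψ : ℝ → Measure E3) : Prop where
  prob : ∀ t, IsProbabilityMeasure (Ψ t)
  cont : Continuous (fun p : ℝ × E3 => charFn (Ψ p.1) p.2)
  int : ∀ t, ∀ ξ : E3, ξ ≠ 0 → ∀ L : E3 ≃ₗᵢ[ℝ] E3, ‖ξ‖ • L e0 = ξ →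
      Integrable (fun ω => Gf (charFn (Ψ t)) ξ (L ω)) m
  der : ∀ t, 0 < t → ∀ ξ : E3, ξ ≠ 0 → ∀ L : E3 ≃ₗᵢ[ℝ] E3, ‖ξ‖ • L e0 = ξ →
      HasDerivAt (fun τ => charFn (Ψ τ) ξ) (∫ ω, Gf (charFn (Ψ t)) ξ (L ω) ∂m) t

lemma Gf_zero (Ψ : Measure E3) [IsProbabilityMeasure Ψ] (σ : E3) : Gf (charFn Ψ) 0 σ = 0 := by
  unfold Gf
  simp [charFn_zero]

/-- collision operator -/
def Dq (m : Measure E3) (Ψ : ℝ → Measure E3) (t : ℝ) (ξ : E3) : ℂ :=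
  ∫ ω, Gf (charFn (Ψ t)) ξ (Lx ξ ω) ∂m

/-- derivative of the deficit -/
def dq (m : Measure E3) (Ψ : ℝ → Measure E3) (t : ℝ) (ξ : E3) : ℝ :=
  -(2 * ((starRingEnd ℂ) (charFn (Ψ t) ξ) * Dq m Ψ t ξ).re)

/-- tail functional -/
def Nf (m : Measure E3) (Ψ : ℝ → Measure E3) (t : ℝ) : ℝ :=
  ∫ ω, (Sf ω + PP (Th (Ψ t)) (Sf ω)) ∂m

section
variable {m : Measure E3} [SFinite m] {Ψ : ℝ → Measure E3}

lemma Sol.int' (h : Sol m Ψ) (t : ℝ) {ξ : E3} {L : E3 ≃ₗᵢ[ℝ] E3} (hL : ‖ξ‖ • L e0 = ξ) :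
    Integrable (fun ω => Gf (charFn (Ψ t)) ξ (L ω)) m := by
  have := h.prob t
  by_cases hξ : ξ = 0
  · subst hξ; simp [Gf_zero]
  · exact h.int t ξ hξ L hL

lemma Sol.sc (h : Sol m Ψ) (ξ : E3) : Continuous (fun t => charFn (Ψ t) ξ) :=
  h.cont.comp (continuous_id.prodMk continuous_const)

lemma Sol.der' (h : Sol m Ψ) {t : ℝ} (ht : 0 < t) (ξ : E3) :
    HasDerivAt (fun τ => charFn (Ψ τ) ξ) (Dq m Ψ t ξ) t := by
  by_cases hξ : ξ = 0
  · subst hξ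
    have e : (fun τ => charFn (Ψ τ) (0:E3)) = fun _ => 1 := by
      ext1 τ; have := h.prob τ; exact charFn_zero _
    have := h.prob t
    rw [e]
    have e2 : Dq m Ψ t 0 = 0 := by unfold Dq; simp [Gf_zero]
    rw [e2]; exact hasDerivAt_const _ _
  · exact h.der t ht ξ hξ (Lx ξ) (Lx_spec ξ)

lemma Sol.rot_int (h : Sol m Ψ) (t : ℝ) {ξ : E3} {L : E3 ≃ₗᵢ[ℝ] E3} (hL : ‖ξ‖ • L e0 = ξ) :
    Integrable (fun ω => Gf (charFn (Ψ t)) ξ (L (rotL π ω))) m :=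
  h.int' t (L := (rotL π).trans L) (by rw [LinearIsometryEquiv.trans_apply, rotL_e0, hL])

lemma Sol.sym (h : Sol m Ψ) (hm : Ker m) (t : ℝ) {ξ : E3} {L : E3 ≃ₗᵢ[ℝ] E3} (hL : ‖ξ‖ • L e0 = ξ) :
    2 * ∫ ω, Gf (charFn (Ψ t)) ξ (L ω) ∂m =
      ∫ ω, (Gf (charFn (Ψ t)) ξ (L ω) + Gf (charFn (Ψ t)) ξ (L (rotL π ω))) ∂m := by
  rw [integral_add (h.int' t hL) (h.rot_int t hL),
    hm.integral_comp (rotL_e0 π) (fun ω => Gf (charFn (Ψ t)) ξ (L ω))]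
  ring

lemma Sol.PPi (h : Sol m Ψ) (hm : Ker m) (hS : Integrable Sf m) (t : ℝ) :
    Integrable (fun ω => PP (Th (Ψ t)) (Sf ω)) m := by
  have := h.prob t
  exact PP_int (Ψ t) hm hS (h.int t)

lemma Sol.D_bound (h : Sol m Ψ) (hm : Ker m) (hS : Integrable Sf m) (t : ℝ) (ξ : E3) :
    ‖Dq m Ψ t ξ‖ ≤ 8 * (1 + ‖ξ‖^2) * Nf m Ψ t := by
  have := h.prob t
  have h1 := h.sym hm t (Lx_spec ξ)
  have h2 : ‖∫ ω, (Gf (charFn (Ψ t)) ξ (Lx ξ ω) + Gf (charFn (Ψ t)) ξ (Lx ξ (rotL π ω))) ∂m‖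
      ≤ ∫ ω, 16 * (1 + ‖ξ‖^2) * (Sf ω + PP (Th (Ψ t)) (Sf ω)) ∂m := by
    apply norm_integral_le_of_norm_le ((hS.add (h.PPi hm hS t)).const_mul _)
    filter_upwards [hm.ae] with ω hω
    exact Gsym_bound (Lx_spec ξ) (Ψ t) hω.1 hω.2
  rw [← h1, integral_const_mul, norm_mul] at h2
  unfold Dq Nf
  simp only [Complex.norm_ofNat] at h2
  linarith

lemma Sol.Nf_nonneg (hm : Ker m) (t : ℝ) : 0 ≤ Nf m Ψ t := by
  apply integral_nonneg_of_ae
  filter_upwards [hm.ae] with ω hω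
  have := (Sf_bounds hω.1 hω.2).1
  have h2 := PP_nonneg (Th (Ψ t)) this
  simp only [Pi.zero_apply]; linarith

lemma Sol.dq_bound (h : Sol m Ψ) (hm : Ker m) (hS : Integrable Sf m) (t : ℝ) (ξ : E3) :
    ‖dq m Ψ t ξ‖ ≤ 16 * (1 + ‖ξ‖^2) * Nf m Ψ t := by
  have := h.prob t
  have h1 := h.D_bound hm hS t ξ
  have h2 := charFn_norm_le (Ψ t) ξ
  unfold dq
  rw [norm_neg, norm_mul, Real.norm_eq_abs, Real.norm_eq_abs, abs_two]
  have h3 := Complex.abs_re_le_norm ((starRingEnd ℂ) (charFn (Ψ t) ξ) * Dq m Ψ t ξ)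
  rw [norm_mul, RCLike.norm_conj] at h3
  have h4 : ‖charFn (Ψ t) ξ‖ * ‖Dq m Ψ t ξ‖ ≤ 1 * ‖Dq m Ψ t ξ‖ := by gcongr
  linarith

lemma Sol.q_der (h : Sol m Ψ) {t : ℝ} (ht : 0 < t) (ξ : E3) :
    HasDerivAt (fun τ => qf (Th (Ψ τ)) ξ) (dq m Ψ t ξ) t := by
  have e : (fun τ => qf (Th (Ψ τ)) ξ) = fun τ => 1 - ‖charFn (Ψ τ) ξ‖^2 := by
    ext1 τ; have := h.prob τ; rw [normSq_charFn]; ring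
  rw [e]
  have h1 := (h.der' ht ξ).norm_sq
  have h2 := h1.const_sub 1
  have e2 : dq m Ψ t ξ = -(2 * ⟪charFn (Ψ t) ξ, Dq m Ψ t ξ⟫) := by
    unfold dq; rw [Complex.inner, mul_comm (Dq m Ψ t ξ)]
  rw [e2]
  exact h2

lemma z_ineq {z p q : ℂ} (hq : ‖q‖ ≤ 1) : ‖z‖^2 - ‖p‖^2 ≤ -(2 * ((starRingEnd ℂ) z * (p * q - z)).re) := by
  have h1 : ((starRingEnd ℂ) z * (p * q - z)).re = ((starRingEnd ℂ) z * (p * q)).re - ‖z‖^2 := by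
    rw [mul_sub, Complex.sub_re, ← Complex.normSq_eq_conj_mul_self, Complex.ofReal_re,
      Complex.normSq_eq_norm_sq]
  have h2 := Complex.re_le_norm ((starRingEnd ℂ) z * (p * q))
  rw [norm_mul, norm_mul, RCLike.norm_conj] at h2
  have h3 : ‖z‖ * (‖p‖ * ‖q‖) ≤ ‖z‖ * (‖p‖ * 1) := by gcongr
  rw [h1]
  nlinarith [sq_nonneg (‖z‖ - ‖p‖)]

lemma Sol.Hs_int (h : Sol m Ψ) (hm : Ker m) (hS : Integrable Sf m) (t : ℝ) (ξ : E3) :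
    Integrable (Hs (Ψ t) ξ) m := by
  have := h.prob t
  refine Integrable.mono' ((hS.add (h.PPi hm hS t)).const_mul (8 * (1 + ‖ξ‖^2)))
    ((Hs_meas (Ψ t)).comp measurable_prodMk_left).aestronglyMeasurable ?_
  filter_upwards [hm.ae] with ω hω
  exact Hs_bound (Ψ t) ξ hω.1 hω.2

lemma Sol.dq_lower (h : Sol m Ψ) (hm : Ker m) (hS : Integrable Sf m) (t : ℝ) (ξ : E3) :
    ∫ ω, Hs (Ψ t) ξ ω ∂m ≤ dq m Ψ t ξ := by
  have := h.prob t
  have h1 := h.sym hm t (Lx_spec ξ)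
  set z := charFn (Ψ t) ξ with hz
  have hi : Integrable (fun ω => (starRingEnd ℂ) z * (Gf (charFn (Ψ t)) ξ (Lx ξ ω) +
      Gf (charFn (Ψ t)) ξ (Lx ξ (rotL π ω)))) m :=
    ((h.int' t (Lx_spec ξ)).add (h.rot_int t (Lx_spec ξ))).const_mul _
  have e : dq m Ψ t ξ = ∫ ω, -(((starRingEnd ℂ) z * (Gf (charFn (Ψ t)) ξ (Lx ξ ω) +
      Gf (charFn (Ψ t)) ξ (Lx ξ (rotL π ω)))).re) ∂m := by
    have e1 : ∫ ω, ((starRingEnd ℂ) z * (Gf (charFn (Ψ t)) ξ (Lx ξ ω) +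
      Gf (charFn (Ψ t)) ξ (Lx ξ (rotL π ω)))).re ∂m = (∫ ω, (starRingEnd ℂ) z * (Gf (charFn (Ψ t)) ξ (Lx ξ ω) +
      Gf (charFn (Ψ t)) ξ (Lx ξ (rotL π ω))) ∂m).re := integral_re hi
    rw [integral_neg, e1, integral_const_mul, ← h1]
    unfold dq Dq
    rw [← hz, show ∀ x : ℂ, (starRingEnd ℂ) z * (2 * x) = 2 * ((starRingEnd ℂ) z * x) from fun x => by ring]
    simp
  rw [e]
  apply integral_mono (h.Hs_int hm hS t ξ) hi.re.neg
  intro ω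
  have hp : ∀ ω, ‖z‖^2 - ‖charFn (Ψ t) (yp ξ ω)‖^2 ≤
      -(2 * ((starRingEnd ℂ) z * Gf (charFn (Ψ t)) ξ (Lx ξ ω)).re) := fun ω =>
    z_ineq (charFn_norm_le (Ψ t) _)
  have ha := hp ω
  have hb := hp (rotL π ω)
  simp only [hz, normSq_charFn] at ha hb
  have e3 : ((starRingEnd ℂ) z * (Gf (charFn (Ψ t)) ξ (Lx ξ ω) +
      Gf (charFn (Ψ t)) ξ (Lx ξ (rotL π ω)))).re = ((starRingEnd ℂ) z * Gf (charFn (Ψ t)) ξ (Lx ξ ω)).re +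
      ((starRingEnd ℂ) z * Gf (charFn (Ψ t)) ξ (Lx ξ (rotL π ω))).re := by
    rw [mul_add, Complex.add_re]
  change Hs (Ψ t) ξ ω ≤ -(((starRingEnd ℂ) z * (Gf (charFn (Ψ t)) ξ (Lx ξ ω) +
      Gf (charFn (Ψ t)) ξ (Lx ξ (rotL π ω)))).re)
  rw [e3]
  unfold Hs
  linarith

lemma Sol.dq_sm (h : Sol m Ψ) (t : ℝ) : StronglyMeasurable (dq m Ψ t) := by
  have := h.prob t
  have hφ := (charFn_cont (Ψ t))
  have hφm := hφ.measurable
  have hL := Lx_meas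
  have hD : StronglyMeasurable (Dq m Ψ t) := by
    unfold Dq
    apply StronglyMeasurable.integral_prod_right (f := fun (ξ ω : E3) => Gf (charFn (Ψ t)) ξ (Lx ξ ω))
    apply Measurable.stronglyMeasurable
    unfold Function.uncurry Gf
    exact ((hφm.comp (by fun_prop)).mul (hφm.comp (by fun_prop))).sub (hφm.comp measurable_fst)
  unfold dq
  have hDm := hD.measurable
  apply Measurable.stronglyMeasurable
  have : Measurable fun ξ => (starRingEnd ℂ) (charFn (Ψ t) ξ) := Complex.continuous_conj.measurable.comp hφm
  exact ((Complex.measurable_re.comp (this.mul hDm)).const_mul 2).neg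

/-- local boundedness from the right half line -/
def LB (N : ℝ → ℝ) (t : ℝ) : Prop := ∃ ε > 0, ∃ K, ∀ s, 0 ≤ s → |s - t| < ε → N s ≤ K

lemma Sol.PP_der (h : Sol m Ψ) (hm : Ker m) (hS : Integrable Sf m) {S : ℝ} (hS0 : 0 ≤ S) {t : ℝ}
    (ht : 0 < t) (hb : LB (Nf m Ψ) t) :
    ∃ d, HasDerivAt (fun τ => PP (Th (Ψ τ)) S) d t ∧ -((∫ ω, Sf ω ∂m) * PP (Th (Ψ t)) S) ≤ d := by
  have hpt := h.prob t
  obtain ⟨ε, hε, K, hK⟩ := hb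
  have e : (fun τ => PP (Th (Ψ τ)) S) = fun τ => ∫ ξ, qf (Th (Ψ τ)) ξ ∂(gam S) := by
    ext1 τ; have := h.prob τ; exact (qf_gam _ hS0).symm
  have hbi : Integrable (fun ξ : E3 => 16 * (1 + ‖ξ‖^2) * K) (gam S) :=
    (((integrable_const 1).add (gam_sq S)).const_mul 16).mul_const K
  have hmain := hasDerivAt_integral_of_dominated_loc_of_deriv_le (μ := gam S)
    (F := fun τ ξ => qf (Th (Ψ τ)) ξ) (F' := fun τ ξ => dq m Ψ τ ξ) (x₀ := t)
    (s := ball t (min ε t)) (bound := fun ξ => 16 * (1 + ‖ξ‖^2) * K)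
    (ball_mem_nhds t (by positivity))
    (by
      filter_upwards with τ
      have := h.prob τ
      exact (qf_cont (Ψ τ)).aestronglyMeasurable)
    (by
      refine Integrable.mono' (integrable_const (2:ℝ)) (qf_cont (Ψ t)).aestronglyMeasurable ?_
      filter_upwards with ω
      rw [Real.norm_of_nonneg (qf_nonneg _ _)]
      exact qf_le_two _ _)
    (h.dq_sm t).aestronglyMeasurable
    (by
      filter_upwards with ξ τ hτ
      rw [mem_ball, Real.dist_eq] at hτ
      have hτ0 : 0 ≤ τ := by
        have := (abs_lt.1 (hτ.trans_le (min_le_right _ _))).1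
        linarith
      refine (h.dq_bound hm hS τ ξ).trans ?_
      have := hK τ hτ0 (hτ.trans_le (min_le_left _ _))
      gcongr)
    hbi
    (by
      filter_upwards with ξ τ hτ
      rw [mem_ball, Real.dist_eq] at hτ
      have hτ0 : 0 < τ := by
        have := (abs_lt.1 (hτ.trans_le (min_le_right _ _))).1
        linarith
      exact h.q_der hτ0 ξ)
  refine ⟨_, by rw [e]; exact hmain.2, ?_⟩
  refine (Hs_lower (Ψ t) hm hS (h.PPi hm hS t) hS0).trans ?_
  exact integral_mono (Hs_integrable (Ψ t) hm hS (h.PPi hm hS t) S).integral_prod_left hmain.1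
    (fun ξ => h.dq_lower hm hS t ξ)

lemma Sol.PP_cont (h : Sol m Ψ) {S : ℝ} (hS0 : 0 ≤ S) : Continuous (fun τ => PP (Th (Ψ τ)) S) := by
  have e : (fun τ => PP (Th (Ψ τ)) S) = fun τ => ∫ ξ, qf (Th (Ψ τ)) ξ ∂(gam S) := by
    ext1 τ; have := h.prob τ; exact (qf_gam _ hS0).symm
  rw [e]
  apply continuous_of_dominated (bound := fun _ => 2)
  · intro τ; have := h.prob τ; exact (qf_cont (Ψ τ)).aestronglyMeasurable
  · intro τ; have := h.prob τ
    filter_upwards with ω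
    rw [Real.norm_of_nonneg (qf_nonneg _ _)]
    exact qf_le_two _ _
  · exact integrable_const _
  · filter_upwards with ξ
    have e : (fun τ => qf (Th (Ψ τ)) ξ) = fun τ => 1 - ‖charFn (Ψ τ) ξ‖^2 := by
      ext1 τ; have := h.prob τ; rw [normSq_charFn]; ring
    rw [e]
    have := h.sc ξ
    fun_prop

lemma Sol.PP_mono (h : Sol m Ψ) (hm : Ker m) (hS : Integrable Sf m) {S : ℝ} (hS0 : 0 ≤ S) {a c : ℝ}
    (ha : 0 ≤ a) (hac : a ≤ c) (hb : ∀ t ∈ Ioo a c, LB (Nf m Ψ) t) :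
    PP (Th (Ψ a)) S ≤ exp ((∫ ω, Sf ω ∂m) * (c - a)) * PP (Th (Ψ c)) S := by
  set β := ∫ ω, Sf ω ∂m with hβ
  have hc := h.PP_cont hS0
  have hd : ∀ t ∈ Ioo a c, ∃ d, HasDerivAt (fun t => exp (β * t) * PP (Th (Ψ t)) S) d t ∧ 0 ≤ d := by
    intro t ht
    obtain ⟨d, h1, h2⟩ := h.PP_der hm hS hS0 (ha.trans_lt ht.1) (hb t ht)
    have h3 : HasDerivAt (fun t => exp (β * t)) (exp (β * t) * (β * 1)) t :=
      ((hasDerivAt_id t).const_mul β).exp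
    refine ⟨_, h3.mul h1, ?_⟩
    have := exp_pos (β * t)
    have e : exp (β * t) * (β * 1) * PP (Th (Ψ t)) S + exp (β * t) * d =
      exp (β * t) * (β * PP (Th (Ψ t)) S + d) := by ring
    rw [e]
    apply mul_nonneg this.le
    linarith
  have hmono : MonotoneOn (fun t => exp (β * t) * PP (Th (Ψ t)) S) (Icc a c) := by
    apply monotoneOn_of_deriv_nonneg (convex_Icc a c)
    · exact Continuous.continuousOn (by fun_prop)
    · rw [interior_Icc]
      intro t ht
      obtain ⟨d, h1, _⟩ := hd t ht
      exact h1.differentiableAt.differentiableWithinAt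
    · rw [interior_Icc]
      intro t ht
      obtain ⟨d, h1, h2⟩ := hd t ht
      rwa [h1.deriv]
  have h1 := hmono (left_mem_Icc.2 hac) (right_mem_Icc.2 hac) hac
  beta_reduce at h1
  rw [mul_sub, exp_sub, div_mul_eq_mul_div, le_div_iff₀ (exp_pos _)]
  linarith
end

/-! ## Local boundedness by Baire -/

lemma baire_LB (N : ℝ → ℝ) (B : ℝ) (hB : 0 ≤ B) (hN : ∀ t, 0 ≤ N t)
    (hcl : ∀ k : ℕ, IsClosed {t | N t ≤ k})
    (hmono : ∀ a c, 0 ≤ a → a ≤ c → (∀ t ∈ Ioo a c, LB N t) → N a ≤ exp (B * (c - a)) * N c) :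
    ∀ t, 0 ≤ t → LB N t := by
  by_contra hcon
  push Not at hcon
  obtain ⟨t1, ht1, hn1⟩ := hcon
  set F : Set ℝ := {t | 0 ≤ t ∧ ¬ LB N t} with hF
  have hopen : IsOpen {t | LB N t} := by
    rw [Metric.isOpen_iff]
    rintro t ⟨ε, hε, K, hK⟩
    refine ⟨ε/2, by positivity, fun s hs => ⟨ε/2, by positivity, K, fun r hr hrs => hK r hr ?_⟩⟩
    rw [mem_ball, Real.dist_eq] at hs
    have : r - t = (r - s) + (s - t) := by ring
    rw [this]
    exact (abs_add_le _ _).trans_lt (by linarith)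
  have hFc : IsClosed F := by
    have : F = Ici 0 ∩ {t | LB N t}ᶜ := rfl
    rw [this]
    exact isClosed_Ici.inter hopen.isClosed_compl
  have : CompleteSpace F := hFc.completeSpace_coe
  have : Nonempty F := ⟨⟨t1, ht1, hn1⟩⟩
  obtain ⟨k, ⟨t0, ht0F⟩, ht0⟩ := nonempty_interior_of_iUnion_of_closed (X := F)
    (f := fun k : ℕ => ((↑) : F → ℝ) ⁻¹' {t | N t ≤ k}) (fun k => (hcl k).preimage continuous_subtype_val)
    (by
      ext x
      simp only [mem_iUnion, mem_univ, iff_true]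
      exact exists_nat_ge (N x))
  rw [mem_interior_iff_mem_nhds, Metric.mem_nhds_iff] at ht0
  obtain ⟨ε, hε, hball⟩ := ht0
  have hk : ∀ s ∈ F, |s - t0| < ε → N s ≤ k := by
    intro s hs hd
    have := @hball ⟨s, hs⟩ (by rw [mem_ball, Subtype.dist_eq, Real.dist_eq]; exact hd)
    exact this
  have h0 : 0 ≤ t0 := ht0F.1
  apply ht0F.2
  set β := t0 + ε/2 with hβ
  refine ⟨ε/2, by positivity, max k (max (exp (B * β) * N β) (exp (B * β) * k)), ?_⟩
  intro t ht htd
  rw [abs_lt] at htd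
  by_cases htF : t ∈ F
  · exact (hk t htF (abs_lt.2 ⟨by linarith, by linarith⟩)).trans (le_max_left _ _)
  have key : ∀ c, t ≤ c → c ≤ β → (∀ s ∈ Ioo t c, s ∉ F) → N t ≤ exp (B * β) * N c := by
    intro c htc hcβ hs
    refine (hmono t c ht htc fun s hss => ?_).trans ?_
    · by_contra hnl
      exact hs s hss ⟨ht.trans hss.1.le, hnl⟩
    · apply mul_le_mul_of_nonneg_right _ (hN c)
      apply exp_le_exp.2
      apply mul_le_mul_of_nonneg_left _ hB
      linarith
  refine le_trans ?_ (le_max_right _ _)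
  by_cases hE : (F ∩ Icc t β).Nonempty
  · have hcomp : IsCompact (F ∩ Icc t β) := isCompact_Icc.inter_left hFc
    have hc := hcomp.sInf_mem hE
    set c := sInf (F ∩ Icc t β)
    refine le_trans (key c hc.2.1 hc.2.2 ?_) (le_trans ?_ (le_max_right _ _))
    · intro s hs hsF
      have : c ≤ s := csInf_le hcomp.bddBelow ⟨hsF, hs.1.le, hs.2.le.trans hc.2.2⟩
      linarith [hs.2]
    · apply mul_le_mul_of_nonneg_left _ (exp_pos _).le
      apply hk c hc.1
      have := hc.2.1
      have := hc.2.2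
      exact abs_lt.2 ⟨by linarith, by linarith⟩
  · refine le_trans (key β (by linarith) le_rfl ?_) (le_max_left _ _)
    intro s hs hsF
    exact hE ⟨s, hsF, hs.1.le, hs.2.le⟩

section
variable {m : Measure E3} [SFinite m] {Ψ : ℝ → Measure E3}

lemma Sol.Nint (h : Sol m Ψ) (hm : Ker m) (hS : Integrable Sf m) (t : ℝ) :
    Integrable (fun ω => Sf ω + PP (Th (Ψ t)) (Sf ω)) m := hS.add (h.PPi hm hS t)

lemma Sol.Nf_closed (h : Sol m Ψ) (hm : Ker m) (hS : Integrable Sf m) (k : ℝ) :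
    IsClosed {t | Nf m Ψ t ≤ k} := by
  have hpos : ∀ t, 0 ≤ᵐ[m] fun ω => Sf ω + PP (Th (Ψ t)) (Sf ω) := by
    intro t
    filter_upwards [hm.ae] with ω hω
    have h1 := (Sf_bounds hω.1 hω.2).1
    have := PP_nonneg (Th (Ψ t)) h1
    simp only [Pi.zero_apply]; linarith
  have hNj : ∀ j : ℕ, Continuous (fun t => ∫ ω in An j, (Sf ω + PP (Th (Ψ t)) (Sf ω)) ∂m) := by
    intro j
    have := An_finite hS j
    refine continuous_of_dominated (bound := fun ω => Sf ω + 1) ?_ ?_ ?_ ?_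
    · intro t
      exact (h.Nint hm hS t).integrableOn.aestronglyMeasurable
    · intro t
      filter_upwards [ae_restrict_of_ae hm.ae] with ω hω
      have := h.prob t
      have h1 := (Sf_bounds hω.1 hω.2).1
      have h2 := PP_nonneg (Th (Ψ t)) h1
      have h3 := PP_le_one (Th (Ψ t)) h1
      rw [Real.norm_eq_abs, abs_of_nonneg (by linarith)]
      linarith
    · exact hS.integrableOn.add (integrable_const _)
    · filter_upwards [ae_restrict_of_ae hm.ae] with ω hω
      exact continuous_const.add (h.PP_cont (Sf_bounds hω.1 hω.2).1)
  have e : {t | Nf m Ψ t ≤ k} = ⋂ j : ℕ, {t | ∫ ω in An j, (Sf ω + PP (Th (Ψ t)) (Sf ω)) ∂m ≤ k} := by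
    ext t
    simp only [mem_iInter, mem_ofPred_eq]
    constructor
    · intro ht j
      exact (setIntegral_le_integral (h.Nint hm hS t) (hpos t)).trans ht
    · intro ht
      have hlim := tendsto_setIntegral_of_monotone (μ := m) (f := fun ω => Sf ω + PP (Th (Ψ t)) (Sf ω))
        An_meas An_mono (h.Nint hm hS t).integrableOn
      have hfull : ∫ ω in ⋃ n, An n, (Sf ω + PP (Th (Ψ t)) (Sf ω)) ∂m = Nf m Ψ t := by
        apply setIntegral_eq_integral_of_ae_compl_eq_zero
        filter_upwards [hm.ae] with ω hω hn
        rw [An_union, mem_ofPred_eq, not_lt] at hn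
        have hz : Sf ω = 0 := le_antisymm hn (Sf_bounds hω.1 hω.2).1
        rw [hz]; simp [PP]
      rw [hfull] at hlim
      exact le_of_tendsto' hlim ht
  rw [e]
  exact isClosed_iInter fun j => isClosed_le (hNj j) continuous_const

lemma Sf_int_nonneg (hm : Ker m) : 0 ≤ ∫ ω, Sf ω ∂m := by
  apply integral_nonneg_of_ae
  filter_upwards [hm.ae] with ω hω using (Sf_bounds hω.1 hω.2).1

lemma Sol.LBall (h : Sol m Ψ) (hm : Ker m) (hS : Integrable Sf m) :
    ∀ t, 0 ≤ t → LB (Nf m Ψ) t := by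
  refine baire_LB (Nf m Ψ) (∫ ω, Sf ω ∂m) (Sf_int_nonneg hm) (fun t => Sol.Nf_nonneg hm t)
    (fun k => h.Nf_closed hm hS k) ?_
  intro a c ha hac hb
  unfold Nf
  rw [← integral_const_mul]
  apply integral_mono_ae (h.Nint hm hS a) ((h.Nint hm hS c).const_mul _)
  filter_upwards [hm.ae] with ω hω
  have h1 := (Sf_bounds hω.1 hω.2).1
  have h2 := h.PP_mono hm hS h1 ha hac hb
  have h3 : 1 ≤ exp ((∫ ω, Sf ω ∂m) * (c - a)) :=
    one_le_exp (mul_nonneg (Sf_int_nonneg hm) (by linarith))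
  rw [mul_add]
  have := le_mul_of_one_le_left h1 h3
  linarith

lemma Sol.PP_dom (h : Sol m Ψ) (hm : Ker m) (hS : Integrable Sf m) {S : ℝ} (hS0 : 0 ≤ S) {s T : ℝ}
    (hs : 0 ≤ s) (hsT : s ≤ T) :
    PP (Th (Ψ s)) S ≤ exp ((∫ ω, Sf ω ∂m) * T) * PP (Th (Ψ T)) S := by
  refine (h.PP_mono hm hS hS0 hs hsT fun t ht => h.LBall hm hS t (hs.trans ht.1.le)).trans ?_
  apply mul_le_mul_of_nonneg_right _ (PP_nonneg _ hS0)
  apply exp_le_exp.2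
  apply mul_le_mul_of_nonneg_left _ (Sf_int_nonneg hm)
  linarith

end

/-! ## Continuity of the collision operator -/

section
variable {m : Measure E3} [SFinite m] {Ψ : ℝ → Measure E3}

lemma Sol.Dq_eq (h : Sol m Ψ) (hm : Ker m) (t : ℝ) {ξ : E3} {L : E3 ≃ₗᵢ[ℝ] E3} (hL : ‖ξ‖ • L e0 = ξ) :
    Dq m Ψ t ξ = ∫ ω, Gf (charFn (Ψ t)) ξ (L ω) ∂m := by
  have := h.prob t
  unfold Dq
  by_cases hξ : ξ = 0
  · subst hξ; simp [Gf_zero]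
  have hR : (L.trans (Lx ξ).symm) e0 = e0 := by
    have hn : ‖ξ‖ ≠ 0 := by simpa using hξ
    have h1 : L e0 = Lx ξ e0 := smul_right_injective _ hn (hL.trans (Lx_spec ξ).symm)
    simp [h1]
  have := hm.integral_comp hR (fun ω => Gf (charFn (Ψ t)) ξ (Lx ξ ω))
  simpa using this.symm

lemma exists_family (ξ0 : E3) : ∃ Lc : E3 → (E3 ≃ₗᵢ[ℝ] E3), (∀ ξ, ‖ξ‖ • Lc ξ e0 = ξ) ∧
    ∀ ω, ContinuousAt (fun ξ => ‖ξ‖ • Lc ξ ω) ξ0 := by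
  by_cases h0 : ξ0 = 0
  · subst h0
    refine ⟨Lx, Lx_spec, fun ω => ?_⟩
    unfold ContinuousAt
    simp only [norm_zero, zero_smul]
    apply squeeze_zero_norm (a := fun ξ : E3 => ‖ξ‖ * ‖ω‖)
    · intro ξ; rw [norm_smul, norm_norm, LinearIsometryEquiv.norm_map]
    · have : Continuous (fun ξ : E3 => ‖ξ‖ * ‖ω‖) := by fun_prop
      simpa using this.tendsto 0
  · obtain ⟨L0, hL0⟩ := exists_iso ξ0
    have hn0 : ‖ξ0‖ ≠ 0 := by simpa using h0
    have hs0 : L0.symm (‖ξ0‖⁻¹ • ξ0) = e0 := by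
      conv_lhs => rw [← hL0]
      rw [norm_smul, norm_norm, LinearIsometryEquiv.norm_map, norm_e0, mul_one, smul_smul,
        inv_mul_cancel₀ hn0, one_smul, LinearIsometryEquiv.symm_apply_apply]
    refine ⟨fun ξ => (RotL (L0.symm (‖ξ‖⁻¹ • ξ))).trans L0, fun ξ => ?_, fun ω => ?_⟩
    · by_cases hξ : ξ = 0
      · simp [hξ]
      have hn : ‖ξ‖ ≠ 0 := by simpa using hξ
      rw [LinearIsometryEquiv.trans_apply, RotL_e0, LinearIsometryEquiv.apply_symm_apply, smul_smul,
        mul_inv_cancel₀ hn, one_smul]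
      rw [LinearIsometryEquiv.norm_map, norm_smul, norm_inv, norm_norm, inv_mul_cancel₀ hn]
    · have hrot : ContinuousAt (fun e : E3 => Rot e ω) e0 := by
        unfold Rot
        have hne : ‖e0 + e0‖ ^ 2 ≠ 0 := by
          have : e0 + e0 = (2:ℝ) • e0 := (two_smul ℝ e0).symm
          rw [this, norm_smul, norm_e0]; norm_num
        have hc : Continuous (fun e : E3 => 2 * ⟪e0 + e, ω⟫) := by fun_prop
        have hc2 : Continuous (fun e : E3 => ‖e0 + e‖^2) := by fun_prop
        have hc3 : Continuous (fun e : E3 => e0 + e) := by fun_prop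
        exact ((hc.continuousAt.div hc2.continuousAt hne).smul hc3.continuousAt).sub continuousAt_const
      have hdir : ContinuousAt (fun ξ : E3 => L0.symm (‖ξ‖⁻¹ • ξ)) ξ0 := by
        apply L0.symm.continuous.continuousAt.comp
        exact (continuous_norm.continuousAt.inv₀ hn0).smul continuousAt_id
      have h1 : ContinuousAt (fun ξ : E3 => Rot (L0.symm (‖ξ‖⁻¹ • ξ)) ω) ξ0 := by
        refine ContinuousAt.comp (g := fun e : E3 => Rot e ω) ?_ hdir
        rw [hs0]; exact hrot
      have h2 : ContinuousAt (fun ξ : E3 => L0 (Rot (L0.symm (‖ξ‖⁻¹ • ξ)) ω)) ξ0 :=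
        L0.continuous.continuousAt.comp h1
      exact continuous_norm.continuousAt.smul h2

lemma Sol.Gf_contAt (h : Sol m Ψ) {Lc : E3 → (E3 ≃ₗᵢ[ℝ] E3)} {ξ0 : E3} {ω : E3}
    (hc : ContinuousAt (fun ξ => ‖ξ‖ • Lc ξ ω) ξ0) (t0 : ℝ) :
    ContinuousAt (fun p : ℝ × E3 => Gf (charFn (Ψ p.1)) p.2 (Lc p.2 ω)) (t0, ξ0) := by
  have hc' : ContinuousAt (fun p : ℝ × E3 => ‖p.2‖ • Lc p.2 ω) (t0, ξ0) :=
    ContinuousAt.comp (g := fun ξ => ‖ξ‖ • Lc ξ ω) (f := fun p : ℝ × E3 => p.2) hc continuousAt_snd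
  have e : ∀ ξ : E3, (‖ξ‖/2) • Lc ξ ω = (1/2:ℝ) • (‖ξ‖ • Lc ξ ω) := by
    intro ξ; rw [smul_smul]; congr 1; ring
  unfold Gf
  simp only [e]
  have hf : ContinuousAt (fun p : ℝ × E3 => p.1) (t0, ξ0) := continuousAt_fst
  have hs : ContinuousAt (fun p : ℝ × E3 => p.2) (t0, ξ0) := continuousAt_snd
  have hh : ContinuousAt (fun p : ℝ × E3 => (1/2:ℝ) • p.2) (t0, ξ0) := by fun_prop
  have hk : ContinuousAt (fun p : ℝ × E3 => (1/2:ℝ) • (‖p.2‖ • Lc p.2 ω)) (t0, ξ0) :=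
    ContinuousAt.comp (g := fun x : E3 => (1/2:ℝ) • x) (by fun_prop) hc'
  have key : ∀ {g : ℝ × E3 → E3}, ContinuousAt g (t0, ξ0) →
      ContinuousAt (fun p : ℝ × E3 => charFn (Ψ p.1) (g p)) (t0, ξ0) := by
    intro g hg
    exact ContinuousAt.comp (g := fun p : ℝ × E3 => charFn (Ψ p.1) p.2) h.cont.continuousAt
      (hf.prodMk hg)
  exact ((key (hh.add hk)).mul (key (hh.sub hk))).sub (key hs)

lemma Sol.Dq_cont (h : Sol m Ψ) (hm : Ker m) (hS : Integrable Sf m) :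
    ContinuousOn (fun p : ℝ × E3 => Dq m Ψ p.1 p.2) (Ici 0 ×ˢ univ) := by
  rintro ⟨t0, ξ0⟩ ⟨ht0, -⟩
  obtain ⟨Lc, hLc, hcont⟩ := exists_family ξ0
  have e : (fun p : ℝ × E3 => Dq m Ψ p.1 p.2) = fun p => (1/2:ℂ) *
      ∫ ω, (Gf (charFn (Ψ p.1)) p.2 (Lc p.2 ω) + Gf (charFn (Ψ p.1)) p.2 (Lc p.2 (rotL π ω))) ∂m := by
    ext1 p
    rw [h.Dq_eq hm p.1 (hLc p.2), ← h.sym hm p.1 (hLc p.2)]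
    ring
  rw [e]
  apply ContinuousWithinAt.mul continuousWithinAt_const
  set T := t0 + 1 with hT
  set C := exp ((∫ ω, Sf ω ∂m) * T) with hC
  set r := ‖ξ0‖ + 1 with hr
  have hnear : ∀ᶠ p in 𝓝[Ici 0 ×ˢ univ] ((t0, ξ0) : ℝ × E3), 0 ≤ p.1 ∧ p.1 ≤ T ∧ ‖p.2‖ ≤ r := by
    have h1 : ∀ᶠ p in 𝓝[Ici 0 ×ˢ univ] ((t0, ξ0) : ℝ × E3), p ∈ (Ici (0:ℝ) ×ˢ (univ : Set E3)) :=
      self_mem_nhdsWithin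
    have h2 : ∀ᶠ p in 𝓝 ((t0, ξ0) : ℝ × E3), p.1 < T :=
      continuousAt_fst.eventually_lt continuousAt_const (by simp [hT])
    have h3 : ∀ᶠ p in 𝓝 ((t0, ξ0) : ℝ × E3), ‖p.2‖ < r :=
      (continuous_snd.norm.continuousAt).eventually_lt continuousAt_const (by simp [hr])
    filter_upwards [h1, nhdsWithin_le_nhds h2, nhdsWithin_le_nhds h3] with p a b c
    exact ⟨a.1, b.le, c.le⟩
  refine continuousWithinAt_of_dominated
    (bound := fun ω => 16 * (1 + r^2) * (Sf ω + C * PP (Th (Ψ T)) (Sf ω))) ?_ ?_ ?_ ?_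
  · refine Eventually.of_forall fun p => ?_
    exact ((h.int' p.1 (hLc p.2)).add (h.rot_int p.1 (hLc p.2))).aestronglyMeasurable
  · filter_upwards [hnear] with p hp
    filter_upwards [hm.ae] with ω hω
    have := h.prob p.1
    have h0 := (Sf_bounds hω.1 hω.2).1
    refine (Gsym_bound (hLc p.2) (Ψ p.1) hω.1 hω.2).trans ?_
    have h1 := h.PP_dom hm hS h0 hp.1 hp.2.1
    have h2 := PP_nonneg (Th (Ψ p.1)) h0
    have h3 : ‖p.2‖^2 ≤ r^2 := pow_le_pow_left₀ (norm_nonneg _) hp.2.2 2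
    apply mul_le_mul
    · linarith
    · linarith
    · linarith
    · positivity
  · exact (hS.add ((h.PPi hm hS T).const_mul C)).const_mul _
  · refine Eventually.of_forall fun ω => ?_
    exact ((h.Gf_contAt (hcont ω) t0).add (h.Gf_contAt (hcont (rotL π ω)) t0)).continuousWithinAt

end

/-- extended family of measures -/
lemma exists_meas {b : ℝ → ℝ} {ψ : ℝ → E3 → ℂ} {ψ₀ : E3 → ℂ} (hψ : IsBobylevSolution b ψ ψ₀) :
    ∃ Ψ : ℝ → Measure E3, (∀ t, IsProbabilityMeasure (Ψ t)) ∧ ∀ t, ψ (max t 0) = charFn (Ψ t) := by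
  have h : ∀ t : ℝ, ∃ Ψ : Measure E3, IsProbabilityMeasure Ψ ∧ ψ (max t 0) = charFn Ψ :=
    fun t => hψ.isCharFn _ (le_max_right _ _)
  choose Ψ h1 h2 using h
  exact ⟨Ψ, h1, h2⟩

lemma bob_eq (b : ℝ → ℝ) (ψ : ℝ → E3 → ℂ) (t : ℝ) (ξ : E3) :
    bobylevIntegrand b ψ t ξ = fun σ : sphere (0 : E3) 1 =>
      ((b (⟪ξ, (σ : E3)⟫ / ‖ξ‖) : ℝ) : ℂ) * Gf (ψ t) ξ (σ : E3) := rfl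

theorem tdc_core
    (b : ℝ → ℝ) (hb_meas : Measurable b) (hb_nonneg : ∀ x, 0 ≤ b x) (ψ₀ : E3 → ℂ)
    (ψ : ℝ → E3 → ℂ) (hψ : IsBobylevSolution b ψ ψ₀) :
    ContinuousOn (fun p : ℝ × E3 => ∫ σ, bobylevIntegrand b ψ p.1 p.2 σ ∂sphμ)
      (Set.Ici 0 ×ˢ Set.univ) := by
  obtain ⟨Ψ, hP, hΨ⟩ := exists_meas hψ
  have hΨ' : ∀ t, 0 ≤ t → ψ t = charFn (Ψ t) := by
    intro t ht; rw [← hΨ t, max_eq_left ht]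
  have hm : Ker (mker b) := ⟨mk_ae b, mk_iso hb_meas⟩
  have hint : ∀ t, ∀ ξ : E3, ξ ≠ 0 → ∀ L : E3 ≃ₗᵢ[ℝ] E3, ‖ξ‖ • L e0 = ξ →
      Integrable (fun ω => Gf (charFn (Ψ t)) ξ (L ω)) (mker b) := by
    intro t ξ hξ L hL
    have := hP t
    have h1 := hψ.integrable (max t 0) (le_max_right _ _) ξ
    rw [bob_eq, hΨ t] at h1
    exact bob_integrable hb_meas hb_nonneg (charFn_cont (Ψ t)) hξ L hL h1
  have hD : ∀ t, 0 ≤ t → ∀ ξ : E3, ∀ L : E3 ≃ₗᵢ[ℝ] E3, ‖ξ‖ • L e0 = ξ →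
      ∫ σ, bobylevIntegrand b ψ t ξ σ ∂sphμ = ∫ ω, Gf (charFn (Ψ t)) ξ (L ω) ∂(mker b) := by
    intro t ht ξ L hL
    have := hP t
    rw [bob_eq, hΨ' t ht]
    by_cases hξ : ξ = 0
    · subst hξ; simp [Gf_zero]
    exact bob_integral hb_meas hb_nonneg (charFn_cont (Ψ t)) hξ L hL
  by_cases hS : Integrable Sf (mker b)
  · have hsol : Sol (mker b) Ψ := by
      refine ⟨hP, ?_, hint, ?_⟩
      · have e : (fun p : ℝ × E3 => charFn (Ψ p.1) p.2) = fun p => ψ (max p.1 0) p.2 := by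
          ext1 p; rw [hΨ]
        rw [e]
        exact hψ.cont.comp_continuous (f := fun p : ℝ × E3 => (max p.1 0, p.2)) (by fun_prop)
          (fun p => ⟨mem_Ici.2 (le_max_right _ _), mem_univ _⟩)
      · intro t ht ξ hξ L hL
        have h1 := (hψ.eq t ht.le ξ).hasDerivAt (Ici_mem_nhds ht)
        rw [hD t ht.le ξ L hL] at h1
        refine h1.congr_of_eventuallyEq ?_
        filter_upwards [Ici_mem_nhds ht] with s hs
        rw [hΨ' s hs]
    refine (hsol.Dq_cont hm hS).congr ?_
    rintro ⟨t, ξ⟩ ⟨ht, -⟩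
    exact hD t ht ξ (Lx ξ) (Lx_spec ξ)
  · refine (continuousOn_const (c := (0:ℂ))).congr ?_
    rintro ⟨t, ξ⟩ ⟨ht, -⟩
    have := hP t
    show ∫ σ, bobylevIntegrand b ψ t ξ σ ∂sphμ = 0
    rw [hD t ht ξ (Lx ξ) (Lx_spec ξ)]
    have hCP := CP_of (charFn (Ψ t)) hm.ae hS (hint t)
    apply integral_eq_zero_of_ae
    filter_upwards [hm.ae] with ω hω
    exact caseI_G (Ψ t) hCP (Lx_spec ξ) hω.1

/-- continuity of the time derivative of the solution, i.e. of
the collision integral `(t,ξ) ↦ ∂_t ψ(t,ξ)`. -/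
theorem time_derivative_continuous
    (b : ℝ → ℝ) (hb_meas : Measurable b) (hb_nonneg : ∀ x, 0 ≤ b x)
    (α₀ : ℝ) (hα₀0 : 0 < α₀) (hα₀2 : α₀ ≤ 2)
    (hint : (∫⁻ θ : ℝ in Set.Ioc 0 (π/2),
        ENNReal.ofReal (Real.sin (θ/2) ^ α₀ * b (Real.cos θ) * Real.sin θ)) < ⊤)
    (α : ℝ) (hα : α₀ ≤ α) (hα2 : α ≤ 2)
    (ψ₀ : E3 → ℂ) (hψ₀ : memK α ψ₀)
    (ψ : ℝ → E3 → ℂ) (hψ : IsBobylevSolution b ψ ψ₀)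
    (hψK : ∀ t ≥ 0, memK α (ψ t)) (hψc : KContinuous α ψ) :
    ContinuousOn (fun p : ℝ × E3 => ∫ σ, bobylevIntegrand b ψ p.1 p.2 σ ∂sphμ)
      (Set.Ici 0 ×ˢ Set.univ) := by
  exact tdc_core b hb_meas hb_nonneg ψ₀ ψ hψ
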